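/- For every prime p and all positive integers d, δ, n, m there exists a constant γ'_p(d,δ,n,m) with the following property: for every degree-d algebraic extension 𝓛 of ℚ_p, regarded as a subfield of ℂ_p, and every k×n m-sparse polynomial system G over 𝓛, the number of isolated roots of G in ℂ_p^n that are of degree at most δ over 𝓛 is at most γ'_p(d,δ,n,m). -/

import Mathlib

/-!
Everything takes place over one locally compact field. By a Krasner-type argument a single finite
extension `M` of `ℚ_p` contains all elements of degree at most `d * δ` (`exists_bounded_field`): if
an automorphism over a field containing the roots of a finite net of monic integral polynomials
moves `y`, then `σ y - y` sums to zero along its `σ`-orbit, so an integral multiple of it is moved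
by a definite amount (`exists_moved`); but it is close to a root from the net (`close_root`), which
is fixed. The coefficients
of the system and the coordinates of the roots in question therefore lie in `M`, and a root
isolated over `ℂ_p` is isolated over `M`. It remains to bound the number of isolated roots in `M^n`
in terms of `M`, `n` and `m` only (`affine_bound`). Passing to a spanning subfamily of equations and
splitting according to the vanishing coordinates reduces this to roots with nonzero coordinates
(`torus_bound`).

The torus bound is a compactness argument over a locally compact `K`. Each nonzero coordinate is
`ϖ ^ k * τ * exp (p² y)` with `τ` in a finite set, which turns the system into exponential
equations `∑ j, B i j * P (∑ l, a j l * k l) * exp (∑ l, p * a j l * y l) = 0`, where `P k` is the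
`k`-th power of a uniformizer. In an ultrapower of `K` the germs of functions factoring through
the system form a subfield `E` closed under evaluation of power series, and every isolated root has
its coordinates in `E`. Hence along any ultrafilter a choice of isolated roots is almost
everywhere a function of the system (`ultra_contradiction`); if the number of isolated roots were
unbounded, one could choose roots violating this.

The heart is `isolated_mem_section`: for a valued field with evaluation of power series (`AnStr`)
and a subfield `E` closed under it (`Closed`), an isolated solution of such exponential equations
over `E` has its exponents `k` in the given ring `R` and its coordinates `y` in `E`. There are two
steps.

* If `E` has the full value group (`Full`), then an element outside `E` generates a larger closed
  subfield whose elements have a normal form in terms of one parameter `t` (`nf_ind`). A solution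
  in that field is a power series in `t` over `E`, and moving `t` deforms it; so an isolated
  solution lies in `E` (`isolated_step`, `isolated_mem`).
* In general, `E` is enlarged by homogeneous elements realizing the remaining values. Relations
  among them split into homogeneous components (`graded_generators`, `ev_dichotomy`,
  `ev_scale_eq_zero`), finitely many components sufficing because power series rings over a
  Noetherian ring are Noetherian; so solutions can be deformed along the characters `exp (ψ t)` of the value group
  (`deform_identity`). Isolation forces these deformations to be trivial, and as the characters
  separate the elements outside `R`, the exponents are in `R` and the coordinates in `E`.
-/

open MvPolynomial Filter Topology

/-- The zero set in `F^n` of a `k`-tuple of `n`-variate polynomials. -/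
def zeroSet {F : Type*} [CommSemiring F] {k n : ℕ}
    (G : Fin k → MvPolynomial (Fin n) F) : Set (Fin n → F) :=
  {x | ∀ i, MvPolynomial.eval x (G i) = 0}

/-- `ζ` is an isolated root of the system `G`: it is a root, and an isolated point of the
zero set of `G` in the metric topology. -/
def IsIsolatedRoot {F : Type*} [NormedField F] {k n : ℕ}
    (G : Fin k → MvPolynomial (Fin n) F) (ζ : Fin n → F) : Prop :=
  ζ ∈ zeroSet G ∧ 𝓝[zeroSet G \ {ζ}] ζ = ⊥

/-- A `k × n` `m`-sparse polynomial system: all the `gᵢ` are nonzero and the union of their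
supports has exactly `m` elements. -/
def IsSparseSystem {F : Type*} [CommSemiring F] {k n : ℕ}
    (G : Fin k → MvPolynomial (Fin n) F) (m : ℕ) : Prop :=
  (∀ i, G i ≠ 0) ∧ (Finset.univ.biUnion fun i => (G i).support).card = m

/-- `x` is algebraic of degree at most `δ` over (the image of) `L`, i.e. it is annihilated by
some nonzero polynomial over `L` of degree at most `δ`. -/
def HasDegreeAtMost {L F : Type*} [Field L] [Field F] (ι : L →+* F) (δ : ℕ) (x : F) : Prop :=
  ∃ q : Polynomial L, q ≠ 0 ∧ q.natDegree ≤ δ ∧ Polynomial.eval₂ ι x q = 0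

namespace PadicFew

set_option linter.unusedSectionVars false

/-! ### Orders of formal power series -/

section Formal

variable {σ τ A : Type*} [CommRing A]

theorem le_order_sub {f g : MvPowerSeries σ A} {n : ℕ∞} (hf : n ≤ f.order) (hg : n ≤ g.order) :
    n ≤ (f - g).order := by
  refine MvPowerSeries.le_order fun d hd => ?_
  rw [map_sub, MvPowerSeries.coeff_of_lt_order (hd.trans_le hf),
    MvPowerSeries.coeff_of_lt_order (hd.trans_le hg), sub_zero]

theorem order_sub_truncTotal [Finite σ] (f : MvPowerSeries σ A) (n : ℕ) :
    (n : ℕ∞) ≤ (f - (MvPowerSeries.truncTotal n f : MvPolynomial σ A)).order := by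
  refine MvPowerSeries.le_order fun d hd => ?_
  rw [map_sub, MvPolynomial.coeff_coe, MvPowerSeries.coeff_truncTotal _ (by exact_mod_cast hd),
    sub_self]

theorem addHom_coe_eq_zero {B : Type*} [AddCommGroup B] (Φ : MvPowerSeries σ A →+ B)
    (hm : ∀ β r, Φ (MvPowerSeries.monomial β r) = 0) (q : MvPolynomial σ A) :
    Φ (q : MvPowerSeries σ A) = 0 := by
  induction q using MvPolynomial.induction_on' with
  | monomial β r => rw [MvPolynomial.coe_monomial]; exact hm β r
  | add f g hf hg => rw [MvPolynomial.coe_add, map_add, hf, hg, add_zero]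

/-- An additive map of power series rings that does not lower the order is determined by its
values on monomials. -/
theorem addHom_eq_zero [Finite σ] (Φ : MvPowerSeries σ A →+ MvPowerSeries τ A)
    (hΦ : ∀ f, f.order ≤ (Φ f).order)
    (hm : ∀ β r, Φ (MvPowerSeries.monomial β r) = 0) (f : MvPowerSeries σ A) : Φ f = 0 := by
  ext d
  have h := order_sub_truncTotal f (Finsupp.degree d + 1)
  have h2 := hΦ (f - (MvPowerSeries.truncTotal (Finsupp.degree d + 1) f : MvPolynomial σ A))
  rw [map_sub, addHom_coe_eq_zero Φ hm, sub_zero] at h2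
  rw [map_zero]
  refine MvPowerSeries.coeff_of_lt_order (lt_of_lt_of_le ?_ (h.trans h2))
  exact_mod_cast Nat.lt_succ_self _

theorem order_le_order_subst [Finite σ] {a : σ → MvPowerSeries τ A}
    (ha : ∀ i, (a i).constantCoeff = 0) (f : MvPowerSeries σ A) :
    f.order ≤ (MvPowerSeries.subst a f).order := by
  refine le_trans ?_ (MvPowerSeries.le_order_subst
    (MvPowerSeries.hasSubst_of_constantCoeff_zero ha) f)
  refine le_mul_of_one_le_left bot_le (le_iInf fun i => ?_)
  exact MvPowerSeries.one_le_order_iff_constCoeff_eq_zero.2 (ha i)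

/-! ### Homogeneous components and finite generation over a Noetherian ring -/

open Classical in
theorem exists_generators [IsNoetherianRing A] {κ : Type*} (c : κ → A) :
    ∃ (s : Finset κ) (g : κ → κ → A), (∀ l, c l = ∑ k ∈ s, g l k * c k) ∧
      ∀ l ∈ s, ∀ k ∈ s, g l k = if l = k then 1 else 0 := by
  classical
  obtain ⟨t, ht, hs⟩ := (Submodule.fg_span_iff_fg_span_finset_subset (R := A) (Set.range c)).1
    (IsNoetherian.noetherian _)
  choose q hq using ht
  let s : Finset κ := t.attach.image fun x => q x.2
  have hmem : ∀ l, c l ∈ Submodule.span A (c '' (s : Set κ)) := by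
    intro l
    have h1 : c l ∈ Submodule.span A (Set.range c) := Submodule.subset_span ⟨l, rfl⟩
    rw [hs] at h1
    refine Submodule.span_mono ?_ h1
    intro x hx
    exact ⟨q hx, by simp only [s, Finset.coe_image]; exact ⟨⟨x, hx⟩, by simp, rfl⟩, hq hx⟩
  have hex : ∀ l, ∃ g : κ → A, c l = ∑ k ∈ s, g k * c k := by
    intro l
    have := hmem l
    rw [Submodule.mem_span_image_finset_iff_exists_fun] at this
    obtain ⟨g, hg⟩ := this
    refine ⟨fun k => if h : k ∈ s then g ⟨k, h⟩ else 0, ?_⟩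
    rw [← hg, ← Finset.sum_coe_sort s]
    simp [smul_eq_mul]
  choose g hg using hex
  refine ⟨s, fun l k => if l ∈ s then (if l = k then 1 else 0) else g l k, fun l => ?_, ?_⟩
  · by_cases hl : l ∈ s
    · simp [hl]
    · simpa [hl] using hg l
  · intro l hl k hk
    simp [hl]

theorem powerSeries_generators [IsNoetherianRing A] (f : PowerSeries A) :
    ∃ (D : ℕ) (g : ℕ → PowerSeries A),
      f = ∑ k ∈ Finset.range D, PowerSeries.C (PowerSeries.coeff k f) * g k ∧
      ∀ k < D, ∀ l < D, PowerSeries.coeff l (g k) = if l = k then 1 else 0 := by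
  classical
  obtain ⟨s, g, hg, -⟩ := exists_generators (fun l => PowerSeries.coeff l f)
  obtain ⟨D, hD⟩ : ∃ D, s ⊆ Finset.range D := Finset.exists_nat_subset_range s
  refine ⟨D, fun k => PowerSeries.mk fun l =>
    if l < D then (if l = k then 1 else 0) else if k ∈ s then g l k else 0, ?_, ?_⟩
  · ext l
    simp only [map_sum, PowerSeries.coeff_C_mul, PowerSeries.coeff_mk]
    by_cases hl : l < D
    · simp [hl]
    · simp only [hl, if_false]
      rw [hg l, ← Finset.sum_subset hD]
      · refine Finset.sum_congr rfl fun k hk => ?_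
        simp [hk, mul_comm]
      · intro k _ hk; simp [hk]
  · intro k hk l hl
    simp [hl]

open Classical in
/-- The component of weight `ω` of a power series. -/
noncomputable def comp {G : Type*} [AddCommGroup G] (wt : (σ →₀ ℕ) →+ G) (ω : G) :
    MvPowerSeries σ A →+ MvPowerSeries σ A where
  toFun := fun f β => if wt β = ω then MvPowerSeries.coeff β f else 0
  map_zero' := by funext β; simp; rfl
  map_add' := fun f g => by
      funext β
      simp only [map_add]
      change _ = (if wt β = ω then MvPowerSeries.coeff β f else 0) +
        (if wt β = ω then MvPowerSeries.coeff β g else 0)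
      split_ifs <;> simp

section graded

variable {G : Type*} [AddCommGroup G] (wt : (σ →₀ ℕ) →+ G)

open Classical in
theorem coeff_comp (ω : G) (f : MvPowerSeries σ A) (β : σ →₀ ℕ) :
    MvPowerSeries.coeff β (comp wt ω f) = if wt β = ω then MvPowerSeries.coeff β f else 0 := rfl

theorem comp_mul_comp (ω ω' : G) (a b : MvPowerSeries σ A) :
    comp wt ω' (a * comp wt ω b) = comp wt (ω' - ω) a * comp wt ω b := by
  classical
  ext β
  rw [coeff_comp, MvPowerSeries.coeff_mul, MvPowerSeries.coeff_mul]
  split_ifs with h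
  · refine Finset.sum_congr rfl fun x hx => ?_
    rw [Finset.HasAntidiagonal.mem_antidiagonal] at hx
    simp only [coeff_comp]
    by_cases h2 : wt x.2 = ω
    · have : wt x.1 = ω' - ω := by rw [← h, ← hx, map_add, h2]; abel
      simp [this]
    · simp [h2]
  · symm
    refine Finset.sum_eq_zero fun x hx => ?_
    rw [Finset.HasAntidiagonal.mem_antidiagonal] at hx
    simp only [coeff_comp]
    by_cases h2 : wt x.2 = ω
    · have : wt x.1 ≠ ω' - ω := by
        intro h3; apply h; rw [← hx, map_add, h2, h3]; abel
      simp [this]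
    · simp [h2]

open Classical in
theorem comp_comp (ω ω' : G) (f : MvPowerSeries σ A) :
    comp wt ω (comp wt ω' f) = if ω = ω' then comp wt ω f else 0 := by
  classical
  ext β
  split_ifs with h
  · subst h; simp only [coeff_comp]; split_ifs <;> rfl
  · simp only [coeff_comp]
    split_ifs with h1 h2 <;> simp_all

theorem ext_comp {f g : MvPowerSeries σ A} (h : ∀ ω, comp wt ω f = comp wt ω g) : f = g := by
  ext β
  have := congrArg (MvPowerSeries.coeff β) (h (wt β))
  simpa [coeff_comp] using this

/-- Graded version of finite generation: the components of `f` are generated by finitely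
many of them, compatibly with the weights. -/
theorem graded_generators [Finite σ] [IsNoetherianRing A] (f : MvPowerSeries σ A) :
    ∃ (s : Finset G) (u : G → MvPowerSeries σ A),
      f = ∑ ω ∈ s, u ω * comp wt ω f ∧ (∀ ω ∈ s, (u ω).constantCoeff = 1) ∧
      ∀ ω', ∃ w : G → MvPowerSeries σ A, comp wt ω' f = ∑ ω ∈ s, w ω * comp wt ω f := by
  classical
  obtain ⟨s, g, hg, hg1⟩ := exists_generators (fun ω => comp wt ω f)
  refine ⟨s, fun ω => (show MvPowerSeries σ A from
    fun β => MvPowerSeries.coeff β (g (ω + wt β) ω)), ?_, ?_, fun ω' => ⟨_, hg ω'⟩⟩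
  · refine ext_comp wt fun ω' => ?_
    rw [map_sum]
    conv_lhs => rw [show comp wt ω' f = comp wt ω' (comp wt ω' f) by simp [comp_comp], hg ω',
      map_sum]
    refine Finset.sum_congr rfl fun ω _ => ?_
    rw [comp_mul_comp, comp_mul_comp]
    congr 1
    ext β
    rw [coeff_comp, coeff_comp]
    split_ifs with h
    · change _ = MvPowerSeries.coeff β (g (ω + wt β) ω)
      rw [h, add_sub_cancel]
    · rfl
  · intro ω hω
    change MvPowerSeries.coeff 0 (g (ω + wt 0) ω) = 1
    simp [hg1 ω hω ω hω]

end graded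

end Formal

/-! ### Formal implicit functions -/

section Formal2

variable {σ τ A : Type*} [CommRing A]

/-- An additive functional which kills series of large order and monomials is zero. -/
theorem functional_eq_zero [Finite σ] {B : Type*} [AddCommGroup B] (Φ : MvPowerSeries σ A → B)
    (hadd : ∀ f g, Φ (f + g) = Φ f + Φ g) (n : ℕ)
    (hΦ : ∀ f : MvPowerSeries σ A, (n : ℕ∞) ≤ f.order → Φ f = 0)
    (hm : ∀ β r, Φ (MvPowerSeries.monomial β r) = 0) (f : MvPowerSeries σ A) : Φ f = 0 := by
  let Ψ : MvPowerSeries σ A →+ B := AddMonoidHom.mk' Φ hadd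
  have h1 := hΦ _ (order_sub_truncTotal f n)
  have h2 : Ψ (f - (MvPowerSeries.truncTotal n f : MvPolynomial σ A)) = Ψ f := by
    rw [map_sub, addHom_coe_eq_zero Ψ hm, sub_zero]
  exact h2.symm.trans h1

theorem cc_one_le {a : MvPowerSeries τ A} (ha : a.constantCoeff = 0) : 1 ≤ a.order :=
  MvPowerSeries.one_le_order_iff_constCoeff_eq_zero.2 ha

theorem cc_of_one_le {a : MvPowerSeries τ A} (ha : 1 ≤ a.order) : a.constantCoeff = 0 :=
  MvPowerSeries.one_le_order_iff_constCoeff_eq_zero.1 ha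

theorem hs [Finite σ] {a : σ → MvPowerSeries τ A} (ha : ∀ i, (a i).constantCoeff = 0) :
    MvPowerSeries.HasSubst a := MvPowerSeries.hasSubst_of_constantCoeff_zero ha

theorem cc_elim {a : MvPowerSeries τ A} {x : σ → MvPowerSeries τ A} (ha : a.constantCoeff = 0)
    (hx : ∀ i, (x i).constantCoeff = 0) (o : Option σ) :
    ((o.elim a x : MvPowerSeries τ A)).constantCoeff = 0 := by
  cases o
  · exact ha
  · exact hx _

theorem cc_subst [Finite σ] {a : σ → MvPowerSeries τ A} (ha : ∀ i, (a i).constantCoeff = 0)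
    {f : MvPowerSeries σ A} (hf : f.constantCoeff = 0) :
    (MvPowerSeries.subst a f).constantCoeff = 0 :=
  MvPowerSeries.constantCoeff_subst_eq_zero (hs ha) ha hf

theorem order_subst_sub_subst [Finite σ] (Q : MvPowerSeries (Option σ) A)
    (hQ1 : MvPowerSeries.coeff (Finsupp.single none 1) Q = 0)
    {a b : MvPowerSeries σ A} (ha : a.constantCoeff = 0) (hb : b.constantCoeff = 0) {n : ℕ}
    (hab : (n : ℕ∞) ≤ (a - b).order) :
    ((n + 1 : ℕ) : ℕ∞) ≤ (MvPowerSeries.subst (fun o : Option σ => o.elim a MvPowerSeries.X) Q -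
      MvPowerSeries.subst (fun o : Option σ => o.elim b MvPowerSeries.X) Q).order := by
  have hsa := hs (cc_elim (σ := σ) ha MvPowerSeries.constantCoeff_X)
  have hsb := hs (cc_elim (σ := σ) hb MvPowerSeries.constantCoeff_X)
  refine MvPowerSeries.le_order fun e he => ?_
  have key := functional_eq_zero (fun Q : MvPowerSeries (Option σ) A =>
    MvPowerSeries.coeff e (MvPowerSeries.subst (fun o : Option σ => o.elim a MvPowerSeries.X) Q -
      MvPowerSeries.subst (fun o : Option σ => o.elim b MvPowerSeries.X) Q) -
    MvPowerSeries.coeff (Finsupp.single none 1) Q * MvPowerSeries.coeff e (a - b)) ?_ (n + 2) ?_ ?_ Q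
  · simpa [hQ1] using key
  · intro f g
    simp only [MvPowerSeries.subst_add hsa, MvPowerSeries.subst_add hsb, map_add, map_sub]
    ring
  · intro f hf
    have h1 : MvPowerSeries.coeff (Finsupp.single none 1) f = 0 := by
      refine MvPowerSeries.coeff_of_lt_order (lt_of_lt_of_le ?_ hf)
      rw [Finsupp.degree_single]
      exact_mod_cast by omega
    simp only [h1, zero_mul, sub_zero]
    refine MvPowerSeries.coeff_of_lt_order (lt_of_lt_of_le ?_ (le_order_sub
      (order_le_order_subst (cc_elim (σ := σ) ha MvPowerSeries.constantCoeff_X) f)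
      (order_le_order_subst (cc_elim (σ := σ) hb MvPowerSeries.constantCoeff_X) f)))
    refine lt_of_lt_of_le he (le_trans ?_ hf)
    exact_mod_cast by omega
  · intro β r
    rw [MvPowerSeries.subst_monomial hsa, MvPowerSeries.subst_monomial hsb,
      Finsupp.prod_option_index _ _ (by simp) (fun _ _ _ => pow_add _ _ _),
      Finsupp.prod_option_index _ _ (by simp) (fun _ _ _ => pow_add _ _ _)]
    simp only [Option.elim]
    set P := β.some.prod fun i k => (MvPowerSeries.X i : MvPowerSeries σ A) ^ k with hP
    rw [← mul_sub, ← sub_mul, ← MvPowerSeries.c_eq_algebraMap, MvPowerSeries.coeff_C_mul]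
    by_cases h0 : β = Finsupp.single none 1
    · have hP1 : P = 1 := by
        rw [hP, h0, Finsupp.some_single_none, Finsupp.prod_zero_index]
      rw [hP1, h0]
      simp
    · rw [MvPowerSeries.coeff_monomial_ne (Ne.symm h0), zero_mul, sub_zero]
      have hord : ((n + 1 : ℕ) : ℕ∞) ≤ ((a ^ β none - b ^ β none) * P).order := by
        rcases Nat.lt_trichotomy (β none) 1 with h | h | h
        · have : β none = 0 := by omega
          simp [this]
        · have hb0 : β.some ≠ 0 := by
            intro h2
            apply h0
            ext o
            cases o with
            | none => simp [h]
            | some j => simpa using DFunLike.congr_fun h2 j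
          have hP1 : P.constantCoeff = 0 := by
            obtain ⟨j, hj⟩ := Finsupp.ne_iff.1 hb0
            rw [hP, Finsupp.prod, map_prod]
            refine Finset.prod_eq_zero (i := j) (by simpa using hj) ?_
            rw [map_pow, MvPowerSeries.constantCoeff_X, zero_pow (by simpa using hj)]
          rw [h, pow_one, pow_one]
          refine le_trans ?_ MvPowerSeries.le_order_mul
          push_cast
          exact add_le_add hab (cc_one_le hP1)
        · rw [← (Commute.all a b).mul_geom_sum₂]
          refine le_trans ?_ MvPowerSeries.le_order_mul
          refine le_trans ?_ (le_self_add)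
          refine le_trans ?_ MvPowerSeries.le_order_mul
          push_cast
          refine add_le_add hab (cc_one_le ?_)
          rw [map_sum]
          refine Finset.sum_eq_zero fun i hi => ?_
          rw [map_mul, map_pow, map_pow, ha, hb]
          rcases Nat.eq_zero_or_pos i with hi0 | hi0
          · rw [zero_pow (by omega : β none - 1 - i ≠ 0), mul_zero]
          · rw [zero_pow (by omega), zero_mul]
      rw [MvPowerSeries.coeff_of_lt_order (lt_of_lt_of_le he hord), mul_zero]

/-- Formal implicit function theorem, in fixed point form. -/
theorem exists_fixedPoint [Finite σ] (Q : MvPowerSeries (Option σ) A)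
    (hQ0 : Q.constantCoeff = 0) (hQ1 : MvPowerSeries.coeff (Finsupp.single none 1) Q = 0) :
    ∃ S : MvPowerSeries σ A, S.constantCoeff = 0 ∧
      MvPowerSeries.subst (fun o : Option σ => o.elim S MvPowerSeries.X) Q = S := by
  let F : MvPowerSeries σ A → MvPowerSeries σ A := fun S =>
    MvPowerSeries.subst (fun o : Option σ => o.elim S MvPowerSeries.X) Q
  let S : ℕ → MvPowerSeries σ A := fun n => F^[n] 0
  have hSs : ∀ n, S (n + 1) = F (S n) := fun n => Function.iterate_succ_apply' F n 0
  have hS0 : ∀ n, (S n).constantCoeff = 0 := by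
    intro n
    cases n with
    | zero => simp [S]
    | succ n =>
      rw [hSs]
      refine cc_of_one_le (le_trans (cc_one_le hQ0) (order_le_order_subst ?_ Q))
      have : ∀ n, (S n).constantCoeff = 0 := by
        intro n
        induction n with
        | zero => simp [S]
        | succ n ih =>
          rw [hSs]
          exact cc_subst (cc_elim ih MvPowerSeries.constantCoeff_X) hQ0
      exact cc_elim (this n) MvPowerSeries.constantCoeff_X
  have hstep : ∀ n : ℕ, (n : ℕ∞) ≤ (S (n + 1) - S n).order := by
    intro n
    induction n with
    | zero => simp
    | succ n ih =>
      rw [hSs (n + 1), hSs n]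
      have := order_subst_sub_subst Q hQ1 (hS0 (n + 1)) (hS0 n) ih
      rw [hSs n] at this
      exact this
  have hdiff : ∀ k n : ℕ, (n : ℕ∞) ≤ (S (n + k) - S n).order := by
    intro k n
    induction k with
    | zero => simp
    | succ k ih =>
      have h1 : S (n + (k + 1)) - S n = (S (n + k + 1) - S (n + k)) - (S n - S (n + k)) := by
        rw [add_assoc]; ring
      rw [h1]
      refine le_order_sub (le_trans ?_ (hstep (n + k))) ?_
      · exact_mod_cast Nat.le_add_right n k
      · rw [← neg_sub, MvPowerSeries.order_neg]; exact ih
  let L : MvPowerSeries σ A := fun e => MvPowerSeries.coeff e (S (Finsupp.degree e + 1))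
  have hL : ∀ n : ℕ, (n : ℕ∞) ≤ (L - S n).order := by
    intro n
    refine MvPowerSeries.le_order fun e he => ?_
    have he' : Finsupp.degree e < n := by exact_mod_cast he
    obtain ⟨k, rfl⟩ := Nat.exists_eq_add_of_le (Nat.succ_le_of_lt he')
    have h := MvPowerSeries.coeff_of_lt_order (d := e) (f := S (Finsupp.degree e + 1 + k) -
      S (Finsupp.degree e + 1)) (lt_of_lt_of_le (by exact_mod_cast Nat.lt_succ_self _) (hdiff k _))
    rw [map_sub, sub_eq_zero] at h
    rw [map_sub, sub_eq_zero]
    exact h.symm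
  have hL0 : L.constantCoeff = 0 := by
    have h1 := cc_of_one_le (hL 1)
    rwa [map_sub, hS0 1, sub_zero] at h1
  refine ⟨L, hL0, ?_⟩
  change F L = L
  rw [← sub_eq_zero, ← MvPowerSeries.order_eq_top_iff, ENat.eq_top_iff_forall_ge]
  intro n
  have h1 : F L - L = (F L - F (S n)) - (L - S (n + 1)) := by rw [hSs n]; ring
  rw [h1]
  refine le_order_sub (le_trans ?_ (order_subst_sub_subst Q hQ1 hL0 (hS0 n) (hL n)))
    (le_trans ?_ (hL (n + 1)))
  · exact_mod_cast Nat.le_succ n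
  · exact_mod_cast Nat.le_succ n

end Formal2

/-! ### Divided derivatives and formal Taylor expansion -/

section Taylor

variable {σ τ A : Type*} [CommRing A]

/-- The divided derivative `f ↦ f^{(j)} / j!` of a univariate power series. -/
noncomputable def delta {B : Type*} [CommRing B] (j : ℕ) (f : PowerSeries B) : PowerSeries B :=
  PowerSeries.mk fun l => ((l + j).choose j : B) * PowerSeries.coeff (l + j) f

theorem coeff_delta {B : Type*} [CommRing B] (j l : ℕ) (f : PowerSeries B) :
    PowerSeries.coeff l (delta j f) = ((l + j).choose j : B) * PowerSeries.coeff (l + j) f :=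
  PowerSeries.coeff_mk _ _

theorem delta_add {B : Type*} [CommRing B] (j : ℕ) (f g : PowerSeries B) :
    delta j (f + g) = delta j f + delta j g := by
  ext l; simp [coeff_delta, mul_add]

/-- The substitution `T ↦ M + Z T`. In `Option (Option (Option σ))` the index `none` is the
variable `T`, `some none` is `Z`, `some (some none)` is `M`. -/
noncomputable def taySub (σ A : Type*) [CommRing A] :
    Option σ → MvPowerSeries (Option (Option (Option σ))) A := fun o =>
  o.elim (MvPowerSeries.X (some (some none)) + MvPowerSeries.X (some none) * MvPowerSeries.X none)
    fun j => MvPowerSeries.X (some (some (some j)))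

theorem cc_taySub (o : Option σ) : (taySub σ A o).constantCoeff = 0 := by
  refine cc_elim ?_ ?_ o <;> simp

/-- Taylor expansion: `f (M + Z T)` as a power series in `T`. -/
noncomputable def tay (f : PowerSeries (MvPowerSeries σ A)) :
    PowerSeries (MvPowerSeries (Option (Option σ)) A) :=
  MvPowerSeries.optionEquivLeft _ A
    (MvPowerSeries.subst (taySub σ A) ((MvPowerSeries.optionEquivLeft σ A).symm f))

theorem coeff_add_mul_X_pow {B : Type*} [CommRing B] (u v : B) (l j : ℕ) :
    PowerSeries.coeff j ((PowerSeries.C u + PowerSeries.C v * PowerSeries.X) ^ l) =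
      (l.choose j : B) * u ^ (l - j) * v ^ j := by
  have hterm : ∀ m, (PowerSeries.C v * PowerSeries.X) ^ m * PowerSeries.C u ^ (l - m) *
      ((l.choose m : ℕ) : PowerSeries B) =
      PowerSeries.C ((l.choose m : B) * u ^ (l - m) * v ^ m) * PowerSeries.X ^ m := by
    intro m
    simp only [map_mul, map_pow, map_natCast]
    ring
  rw [add_comm, add_pow, map_sum]
  simp only [hterm, PowerSeries.coeff_C_mul, PowerSeries.coeff_X_pow]
  rcases lt_or_ge l j with h | h
  · rw [Nat.choose_eq_zero_of_lt h]
    refine (Finset.sum_eq_zero fun m hm => ?_).trans (by simp)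
    have := Finset.mem_range.1 hm
    rw [if_neg (by omega), mul_zero]
  · rw [Finset.sum_eq_single j]
    · simp
    · intro m _ hm; rw [if_neg (Ne.symm hm), mul_zero]
    · intro hj; exact absurd (Finset.mem_range.2 (by omega)) hj

theorem degree_optionElim (n : ℕ) (x : σ →₀ ℕ) :
    Finsupp.degree (Finsupp.optionElim n x) = n + Finsupp.degree x := by
  have h := Finsupp.sum_option_index (Finsupp.optionElim n x) (fun _ k => k) (by simp) (by simp)
  simpa [Finsupp.degree_apply, Finsupp.sum] using h

theorem optionElim_some' (d : Option σ →₀ ℕ) : Finsupp.optionElim (d none) d.some = d := by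
  ext o; cases o <;> simp

theorem coeff_oe_symm (h : PowerSeries (MvPowerSeries σ A)) (d : Option σ →₀ ℕ) :
    MvPowerSeries.coeff d ((MvPowerSeries.optionEquivLeft σ A).symm h) =
      MvPowerSeries.coeff d.some (PowerSeries.coeff (d none) h) := by
  conv_rhs => rw [← (MvPowerSeries.optionEquivLeft σ A).apply_symm_apply h]
  rw [MvPowerSeries.coeff_coeff_optionEquivLeft, optionElim_some']

theorem cc_X_some (o : σ) : (MvPowerSeries.X (some o) : MvPowerSeries (Option σ) A).constantCoeff = 0 :=
  MvPowerSeries.constantCoeff_X _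

theorem coeff_tay [Finite σ] (f : PowerSeries (MvPowerSeries σ A)) (j : ℕ) :
    PowerSeries.coeff j (tay f) = MvPowerSeries.X none ^ j *
      MvPowerSeries.subst (fun o : Option σ => (MvPowerSeries.X (some o) :
        MvPowerSeries (Option (Option σ)) A))
        ((MvPowerSeries.optionEquivLeft σ A).symm (delta j f)) := by
  have hst := hs (cc_taySub (σ := σ) (A := A))
  have hsi := hs (cc_X_some (σ := Option σ) (A := A))
  obtain ⟨g, rfl⟩ := (MvPowerSeries.optionEquivLeft σ A).surjective f
  ext e
  rw [← sub_eq_zero]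
  refine functional_eq_zero (fun g : MvPowerSeries (Option σ) A =>
    MvPowerSeries.coeff e (PowerSeries.coeff j (tay (MvPowerSeries.optionEquivLeft σ A g))) -
    MvPowerSeries.coeff e (MvPowerSeries.X none ^ j *
      MvPowerSeries.subst (fun o : Option σ => (MvPowerSeries.X (some o) :
        MvPowerSeries (Option (Option σ)) A))
        ((MvPowerSeries.optionEquivLeft σ A).symm
          (delta j (MvPowerSeries.optionEquivLeft σ A g))))) ?_ (Finsupp.degree e + 1 + j) ?_ ?_ g
  · intro g h
    simp only [map_add, tay, AlgEquiv.symm_apply_apply, MvPowerSeries.subst_add hst,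
      MvPowerSeries.subst_add hsi, delta_add, mul_add]
    ring
  · intro g hg
    have h1 : ((Finsupp.degree e + 1 : ℕ) : ℕ∞) ≤ ((MvPowerSeries.optionEquivLeft σ A).symm
          (delta j (MvPowerSeries.optionEquivLeft σ A g))).order := by
      refine MvPowerSeries.le_order fun d hd => ?_
      rw [coeff_oe_symm, coeff_delta, ← nsmul_eq_mul, map_nsmul,
        MvPowerSeries.coeff_coeff_optionEquivLeft, MvPowerSeries.coeff_of_lt_order, smul_zero]
      refine lt_of_lt_of_le ?_ hg
      rw [degree_optionElim]
      have h2 : Finsupp.degree d < Finsupp.degree e + 1 := by exact_mod_cast hd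
      have h3 := degree_optionElim (d none) d.some
      rw [optionElim_some'] at h3
      exact_mod_cast by omega
    rw [MvPowerSeries.coeff_of_lt_order (f := _ * _), sub_zero]
    · simp only [tay, AlgEquiv.symm_apply_apply]
      rw [MvPowerSeries.coeff_coeff_optionEquivLeft, MvPowerSeries.coeff_of_lt_order]
      refine lt_of_lt_of_le ?_ (hg.trans (order_le_order_subst cc_taySub g))
      rw [degree_optionElim]
      exact_mod_cast by omega
    · refine lt_of_lt_of_le ?_ (le_trans le_add_self MvPowerSeries.le_order_mul)
      refine lt_of_lt_of_le ?_ (h1.trans (order_le_order_subst cc_X_some _))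
      exact_mod_cast by omega
  · intro β r
    rw [sub_eq_zero]
    congr 1
    simp only [tay, AlgEquiv.symm_apply_apply]
    have hdel : (MvPowerSeries.optionEquivLeft σ A).symm (delta j
        (MvPowerSeries.optionEquivLeft σ A (MvPowerSeries.monomial β r))) =
        if j ≤ β none then MvPowerSeries.monomial (Finsupp.optionElim (β none - j) β.some)
          (((β none).choose j : A) * r) else 0 := by
      rw [AlgEquiv.symm_apply_eq, MvPowerSeries.optionEquivLeft_monomial]
      classical
      ext l : 1
      rw [coeff_delta, PowerSeries.coeff_monomial]
      split_ifs with h1 h2 h2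
      · rw [MvPowerSeries.optionEquivLeft_monomial, PowerSeries.coeff_monomial,
          if_pos (by simp; omega), ← nsmul_eq_mul, ← map_nsmul, nsmul_eq_mul, h1]
        simp
      · omega
      · rw [MvPowerSeries.optionEquivLeft_monomial, PowerSeries.coeff_monomial,
          if_neg (by simp; omega), mul_zero]
      · simp
    rw [hdel, MvPowerSeries.subst_monomial hst,
      Finsupp.prod_option_index _ _ (by simp) (fun _ _ _ => pow_add _ _ _),
      map_mul (MvPowerSeries.optionEquivLeft _ A), map_mul (MvPowerSeries.optionEquivLeft _ A),
      map_pow (MvPowerSeries.optionEquivLeft _ A), ← MvPowerSeries.c_eq_algebraMap, MvPowerSeries.optionEquivLeft_C]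
    have hP : MvPowerSeries.optionEquivLeft _ A (β.some.prod fun a n => taySub σ A (some a) ^ n) =
        PowerSeries.C (β.some.prod fun a n =>
          (MvPowerSeries.X (some (some a)) : MvPowerSeries (Option (Option σ)) A) ^ n) := by
      simp only [Finsupp.prod, map_prod, map_pow, taySub, Option.elim,
        MvPowerSeries.optionEquivLeft_X_some]
    have hN : MvPowerSeries.optionEquivLeft _ A (taySub σ A none) =
        PowerSeries.C (MvPowerSeries.X (some none)) +
          PowerSeries.C (MvPowerSeries.X none) * PowerSeries.X := by
      simp only [taySub, Option.elim, map_add, map_mul, MvPowerSeries.optionEquivLeft_X_some,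
        MvPowerSeries.optionEquivLeft_X_none]
    rw [hP, hN, PowerSeries.coeff_C_mul, PowerSeries.coeff_mul_C, coeff_add_mul_X_pow]
    split_ifs with h
    · rw [MvPowerSeries.subst_monomial hsi,
        Finsupp.prod_option_index _ _ (by simp) (fun _ _ _ => pow_add _ _ _),
        ← MvPowerSeries.c_eq_algebraMap]
      simp only [Finsupp.optionElim_apply_none, Finsupp.some_optionElim, map_mul, map_natCast]
      ring
    · rw [Nat.choose_eq_zero_of_lt (by omega)]
      rw [← MvPowerSeries.coe_substAlgHom hsi, map_zero]
      simp

end Taylor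

/-! ### Homogeneous components of power series for a weight -/

section Homog

variable {σ A : Type*} [CommRing A] {G : Type*} [AddCommGroup G]

theorem exists_homog_generators [Finite σ] (wt : (σ →₀ ℕ) →+ G) (ω : G) :
    ∃ B Γ : Finset (σ →₀ ℕ), (∀ β ∈ B, wt β = ω) ∧ (∀ γ ∈ Γ, wt γ = 0 ∧ γ ≠ 0) ∧
      ∀ e, wt e = ω → ∃ β ∈ B, ∃ d : Γ →₀ ℕ, e = β + d.sum fun γ k => k • γ.1 := by
  classical
  let S : Set (σ →₀ ℕ) := {e | wt e = ω}
  have hBf : {e | Minimal (· ∈ S) e}.Finite :=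
    WellQuasiOrderedLE.finite_of_isAntichain (setOfPred_minimal_antichain _)
  obtain ⟨Γ, hΓ⟩ := AddSubmonoid.fg_of_subtractive (P := AddMonoidHom.mker wt) (by
    intro x hx y hxy
    rw [AddMonoidHom.mem_mker] at *
    rwa [map_add, hx, zero_add] at hxy)
  refine ⟨hBf.toFinset, Γ.erase 0, ?_, ?_, ?_⟩
  · intro β hβ
    exact ((Set.Finite.mem_toFinset _).1 hβ).1
  · intro γ hγ
    rw [Finset.mem_erase] at hγ
    refine ⟨?_, hγ.1⟩
    have : γ ∈ AddSubmonoid.closure (Γ : Set (σ →₀ ℕ)) := AddSubmonoid.subset_closure hγ.2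
    rwa [hΓ, AddMonoidHom.mem_mker] at this
  · intro e he
    obtain ⟨β, hβe, hβ⟩ := exists_minimal_le_of_wellFoundedLT (· ∈ S) e he
    refine ⟨β, (Set.Finite.mem_toFinset _).2 hβ, ?_⟩
    have h1 : e - β ∈ AddSubmonoid.closure (((Γ.erase 0 : Finset _)) : Set (σ →₀ ℕ)) := by
      have h2 : e - β ∈ AddMonoidHom.mker wt := by
        rw [AddMonoidHom.mem_mker]
        have h3 : wt e = wt β + wt (e - β) := by rw [← map_add, add_tsub_cancel_of_le hβe]
        have h4 : wt β = ω := hβ.1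
        rw [he, h4] at h3
        simpa using h3
      rw [← hΓ] at h2
      rw [Finset.coe_erase, AddSubmonoid.closure_sdiff_singleton_zero]
      exact h2
    rw [← Subtype.range_coe (s := ((Γ.erase 0 : Finset _) : Set (σ →₀ ℕ))),
      AddSubmonoid.mem_closure_range_iff] at h1
    obtain ⟨d, hd⟩ := h1
    exact ⟨d, by rw [← add_tsub_cancel_of_le hβe, hd]; rfl⟩

theorem homog_decomp [Finite σ] (wt : (σ →₀ ℕ) →+ G) (ω : G) (f : MvPowerSeries σ A) :
    ∃ B Γ : Finset (σ →₀ ℕ), (∀ β ∈ B, wt β = ω) ∧ (∀ γ ∈ Γ, wt γ = 0 ∧ γ ≠ 0) ∧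
      ∃ h : (σ →₀ ℕ) → MvPowerSeries Γ A,
        comp wt ω f = ∑ β ∈ B, MvPowerSeries.monomial β (1 : A) *
          MvPowerSeries.subst (fun γ : Γ => (MvPowerSeries.monomial γ.1 (1 : A) :
            MvPowerSeries σ A)) (h β) := by
  classical
  obtain ⟨B, Γ, hB, hΓ, hex⟩ := exists_homog_generators wt ω
  refine ⟨B, Γ, hB, hΓ, ?_⟩
  choose! b hb n hn using hex
  let s : (Γ →₀ ℕ) → (σ →₀ ℕ) := fun d => d.sum fun γ k => k • γ.1
  have hn' : ∀ e, wt e = ω → e = b e + s (n e) := hn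
  have hws : ∀ d, wt (s d) = 0 := by
    intro d
    simp only [s, Finsupp.sum, map_sum, map_nsmul]
    exact Finset.sum_eq_zero fun γ _ => by rw [(hΓ γ.1 γ.2).1, smul_zero]
  have hsub : MvPowerSeries.HasSubst (fun γ : Γ => (MvPowerSeries.monomial γ.1 (1 : A) :
            MvPowerSeries σ A)) := by
    refine hs fun γ => ?_
    rw [← MvPowerSeries.coeff_zero_eq_constantCoeff_apply, MvPowerSeries.coeff_monomial_ne]
    exact (hΓ γ.1 γ.2).2.symm
  refine ⟨fun β => (show MvPowerSeries Γ A from fun d =>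
    if b (β + s d) = β ∧ n (β + s d) = d then MvPowerSeries.coeff (β + s d) f else 0), ?_⟩
  ext e
  have hprod : ∀ d : Γ →₀ ℕ, (d.prod fun γ k => (MvPowerSeries.monomial γ.1 (1 : A) :
      MvPowerSeries σ A) ^ k) = MvPowerSeries.monomial (s d) 1 := by
    intro d
    simp only [s, Finsupp.prod, Finsupp.sum, MvPowerSeries.monomial_pow, one_pow]
    rw [MvPowerSeries.prod_monomial, Finset.prod_const_one]
  rw [coeff_comp, map_sum]
  have hterm : ∀ β ∈ B, MvPowerSeries.coeff e (MvPowerSeries.monomial β (1 : A) *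
      MvPowerSeries.subst (fun γ : Γ => (MvPowerSeries.monomial γ.1 (1 : A) :
            MvPowerSeries σ A)) (show MvPowerSeries Γ A from fun d =>
    if b (β + s d) = β ∧ n (β + s d) = d then MvPowerSeries.coeff (β + s d) f else 0)) =
      if wt e = ω ∧ b e = β then MvPowerSeries.coeff e f else 0 := by
    intro β hβ
    rw [MvPowerSeries.coeff_monomial_mul, MvPowerSeries.coeff_subst hsub]
    split_ifs with h1 h2 h2
    · rw [finsum_eq_single _ (n e)]
      · have he := hn' e h2.1
        rw [h2.2] at he
        have h3 : e - β = s (n e) := by rw [he, ← he]; exact tsub_eq_of_eq_add_rev he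
        rw [hprod, h3, MvPowerSeries.coeff_monomial_same, smul_eq_mul, mul_one, one_mul]
        change (if b (β + s (n e)) = β ∧ n (β + s (n e)) = n e then
          MvPowerSeries.coeff (β + s (n e)) f else 0) = _
        rw [← he, if_pos ⟨h2.2, rfl⟩]
      · intro d hd
        rw [hprod, MvPowerSeries.coeff_monomial]
        split_ifs with h4
        · have he : e = β + s d := by rw [← h4, add_tsub_cancel_of_le h1]
          change (if b (β + s d) = β ∧ n (β + s d) = d then
            MvPowerSeries.coeff (β + s d) f else 0) • (1 : A) = _
          rw [← he, if_neg (fun h => hd h.2.symm), zero_smul]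
        · simp
    · rw [finsum_eq_zero_of_forall_eq_zero, mul_zero]
      intro d
      rw [hprod, MvPowerSeries.coeff_monomial]
      split_ifs with h4
      · have he : e = β + s d := by rw [← h4, add_tsub_cancel_of_le h1]
        change (if b (β + s d) = β ∧ n (β + s d) = d then
            MvPowerSeries.coeff (β + s d) f else 0) • (1 : A) = _
        rw [← he, if_neg, zero_smul]
        intro h5
        exact h2 ⟨by rw [he, map_add, hws, hB β hβ, add_zero], h5.1⟩
      · simp
    · exfalso
      apply h1
      rw [hn' e h2.1, h2.2]
      exact le_self_add
    · rfl
  rw [Finset.sum_congr rfl hterm]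
  split_ifs with h
  · rw [Finset.sum_eq_single (b e)]
    · simp [h]
    · intro β _ hβ; simp [hβ.symm]
    · intro h2; exact absurd (hb e h) h2
  · exact (Finset.sum_eq_zero fun β _ => by simp [h]).symm

/-- The weight of a monomial, given the weights of the variables. -/
noncomputable def wtOf (k : σ → G) : (σ →₀ ℕ) →+ G :=
  Finsupp.liftAddHom fun j => multiplesHom G (k j)

theorem wtOf_apply (k : σ → G) (β : σ →₀ ℕ) : wtOf k β = β.sum fun j n => n • k j := by
  rw [wtOf, Finsupp.liftAddHom_apply]; rfl

theorem wtOf_single (k : σ → G) (j : σ) : wtOf k (Finsupp.single j 1) = k j := by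
  simp [wtOf_apply]

section

variable (wt : (σ →₀ ℕ) →+ G)

theorem comp_homog_mul {a b : MvPowerSeries σ A} {κ κ' : G} (ha : comp wt κ a = a)
    (hb : comp wt κ' b = b) : comp wt (κ + κ') (a * b) = a * b := by
  conv_lhs => rw [← hb]
  rw [comp_mul_comp, add_sub_cancel_right, ha, hb]

theorem comp_homog_monomial (β : σ →₀ ℕ) (r : A) :
    comp wt (wt β) (MvPowerSeries.monomial β r) = MvPowerSeries.monomial β r := by
  classical
  ext e
  rw [coeff_comp, MvPowerSeries.coeff_monomial]
  by_cases h : e = β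
  · simp [h]
  · simp [h]

theorem comp_homog_one : comp wt 0 (1 : MvPowerSeries σ A) = 1 := by
  have := comp_homog_monomial wt 0 (1 : A)
  simpa using this

theorem comp_homog_pow {a : MvPowerSeries σ A} {κ : G} (ha : comp wt κ a = a) (n : ℕ) :
    comp wt (n • κ) (a ^ n) = a ^ n := by
  induction n with
  | zero => simpa using comp_homog_one wt
  | succ n ih => rw [pow_succ, succ_nsmul]; exact comp_homog_mul wt ih ha

theorem comp_homog_prod {ι : Type*} (s : Finset ι) (a : ι → MvPowerSeries σ A) (κ : ι → G)
    (ha : ∀ i ∈ s, comp wt (κ i) (a i) = a i) :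
    comp wt (∑ i ∈ s, κ i) (∏ i ∈ s, a i) = ∏ i ∈ s, a i := by
  classical
  induction s using Finset.induction_on with
  | empty => simpa using comp_homog_one wt
  | insert i s hi ih =>
    rw [Finset.sum_insert hi, Finset.prod_insert hi]
    exact comp_homog_mul wt (ha i (by simp)) (ih fun j hj => ha j (by simp [hj]))

open Classical in
theorem comp_of_homog {a : MvPowerSeries σ A} {κ : G} (ha : comp wt κ a = a) (ω : G) :
    comp wt ω a = if ω = κ then a else 0 := by
  conv_lhs => rw [← ha]
  rw [comp_comp]
  split_ifs with h
  · rw [h, ha]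
  · rfl

theorem order_le_order_comp (ω : G) (f : MvPowerSeries σ A) : f.order ≤ (comp wt ω f).order := by
  classical
  refine MvPowerSeries.le_order fun e he => ?_
  rw [coeff_comp, MvPowerSeries.coeff_of_lt_order he, ite_self]

end

/-- Substituting homogeneous series commutes with taking weight components. -/
theorem comp_subst [Finite σ] {τ : Type*} (wt : (τ →₀ ℕ) →+ G) (k : σ → G)
    {a : σ → MvPowerSeries τ A} (ha0 : ∀ j, (a j).constantCoeff = 0)
    (ha : ∀ j, comp wt (k j) (a j) = a j) (ω : G) (f : MvPowerSeries σ A) :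
    comp wt ω (MvPowerSeries.subst a f) = MvPowerSeries.subst a (comp (wtOf k) ω f) := by
  classical
  have hsa := hs ha0
  let S : MvPowerSeries σ A →+ MvPowerSeries τ A :=
    ((MvPowerSeries.substAlgHom hsa : MvPowerSeries σ A →ₐ[A] MvPowerSeries τ A) :
      MvPowerSeries σ A →+* MvPowerSeries τ A).toAddMonoidHom
  have hS : ∀ f, S f = MvPowerSeries.subst a f := fun f => by
    rw [← MvPowerSeries.coe_substAlgHom hsa]; rfl
  have key := addHom_eq_zero ((comp wt ω).comp S - S.comp (comp (wtOf k) ω)) ?_ ?_ f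
  · rw [AddMonoidHom.sub_apply, sub_eq_zero] at key
    simpa [hS] using key
  · intro g
    rw [AddMonoidHom.sub_apply, AddMonoidHom.comp_apply, AddMonoidHom.comp_apply, hS, hS]
    exact le_order_sub ((order_le_order_subst ha0 g).trans (order_le_order_comp _ _ _))
      ((order_le_order_comp _ _ _).trans (order_le_order_subst ha0 _))
  · intro β r
    rw [AddMonoidHom.sub_apply, AddMonoidHom.comp_apply, AddMonoidHom.comp_apply, sub_eq_zero,
      comp_of_homog _ (comp_homog_monomial (wtOf k) β r)]
    have h1 : comp wt (wtOf k β) (S (MvPowerSeries.monomial β r)) =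
        S (MvPowerSeries.monomial β r) := by
      rw [hS, MvPowerSeries.subst_monomial hsa, wtOf_apply, ← zero_add (Finsupp.sum _ _)]
      refine comp_homog_mul wt ?_ (comp_homog_prod wt _ _ _ fun j _ =>
        comp_homog_pow wt (ha j) (β j))
      have := comp_homog_monomial wt 0 r
      rw [map_zero, MvPowerSeries.monomial_zero_eq_C_apply] at this
      rw [← MvPowerSeries.c_eq_algebraMap]
      exact this
    rw [comp_of_homog wt h1]
    split_ifs
    · rfl
    · rw [map_zero]

end Homog

/-! ### Valued fields with evaluation of power series -/

theorem oe_symm_C {A : Type} [CommRing A] {σ : Type} [Finite σ] (c : MvPowerSeries σ A) :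
    (MvPowerSeries.optionEquivLeft σ A).symm (PowerSeries.C c) =
      MvPowerSeries.subst (fun j : σ => (MvPowerSeries.X (some j) : MvPowerSeries (Option σ) A))
        c := by
  classical
  have hsx := hs (cc_X_some (σ := σ) (A := A))
  let Φ : MvPowerSeries σ A →+ MvPowerSeries (Option σ) A :=
    AddMonoidHom.mk' (fun c => (MvPowerSeries.optionEquivLeft σ A).symm (PowerSeries.C c) -
      MvPowerSeries.subst (fun j : σ => (MvPowerSeries.X (some j) :
        MvPowerSeries (Option σ) A)) c) fun a b => by
      rw [map_add, map_add, MvPowerSeries.subst_add hsx]; ring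
  have h := addHom_eq_zero Φ (fun f => ?_) (fun β r => ?_) c
  · exact sub_eq_zero.1 h
  · refine le_order_sub (MvPowerSeries.le_order fun d hd => ?_)
      (order_le_order_subst cc_X_some f)
    rw [coeff_oe_symm, PowerSeries.coeff_C]
    split_ifs with h0
    · refine MvPowerSeries.coeff_of_lt_order (lt_of_le_of_lt ?_ hd)
      have h3 := degree_optionElim (d none) d.some
      rw [optionElim_some'] at h3
      exact_mod_cast by omega
    · simp
  · change (MvPowerSeries.optionEquivLeft σ A).symm (PowerSeries.C _) - _ = 0
    rw [sub_eq_zero, AlgEquiv.symm_apply_eq, MvPowerSeries.subst_monomial hsx,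
      map_mul (MvPowerSeries.optionEquivLeft _ A), ← MvPowerSeries.c_eq_algebraMap,
      MvPowerSeries.optionEquivLeft_C]
    simp only [Finsupp.prod, map_prod, map_pow, MvPowerSeries.optionEquivLeft_X_some]
    rw [MvPowerSeries.monomial_eq', map_mul, Finsupp.prod, map_prod]
    simp only [map_pow]

/-- A valued field in which power series over `A` can be evaluated at tuples of topologically
small elements. The valuation is `V`, the evaluation is `ev`; `ϖ` is a uniformizer and `T` a set
of representatives of the residue classes. -/
structure AnStr (A : Type) [CommRing A] (F : Type) [Field F] (Γ₀ : Type)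
    [LinearOrderedCommGroupWithZero Γ₀] where
  V : Valuation F Γ₀
  ev : {σ : Type} → [Finite σ] → (σ → F) → MvPowerSeries σ A → F
  ev_add : ∀ {σ : Type} [Finite σ] (x : σ → F), (∀ j, V (x j) < 1) →
    ∀ f g : MvPowerSeries σ A, ev x (f + g) = ev x f + ev x g
  ev_mul : ∀ {σ : Type} [Finite σ] (x : σ → F), (∀ j, V (x j) < 1) →
    ∀ f g : MvPowerSeries σ A, ev x (f * g) = ev x f * ev x g
  ev_one : ∀ {σ : Type} [Finite σ] (x : σ → F), (∀ j, V (x j) < 1) →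
    ev x (1 : MvPowerSeries σ A) = 1
  ev_X : ∀ {σ : Type} [Finite σ] (x : σ → F), (∀ j, V (x j) < 1) →
    ∀ j, ev x (MvPowerSeries.X j : MvPowerSeries σ A) = x j
  ev_le : ∀ {σ : Type} [Finite σ] (x : σ → F), (∀ j, V (x j) < 1) →
    ∀ f : MvPowerSeries σ A, V (ev x f) ≤ 1
  ev_lt : ∀ {σ : Type} [Finite σ] (x : σ → F), (∀ j, V (x j) < 1) →
    ∀ f : MvPowerSeries σ A, f.constantCoeff = 0 → V (ev x f) < 1
  ev_subst : ∀ {σ τ : Type} [Finite σ] [Finite τ] (x : τ → F), (∀ j, V (x j) < 1) →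
    ∀ (g : σ → MvPowerSeries τ A), (∀ j, (g j).constantCoeff = 0) → ∀ f : MvPowerSeries σ A,
      ev x (MvPowerSeries.subst g f) = ev (fun j => ev x (g j)) f
  ϖ : F
  ϖ_ne : ϖ ≠ 0
  ϖ_lt : V ϖ < 1
  le_ϖ : ∀ x, V x < 1 → V x ≤ V ϖ
  T : Set F
  exists_T : ∀ x, V x ≤ 1 → ∃ τ ∈ T, V (x - τ) < 1
  natCast : ∀ N : ℕ, N ≠ 0 → ∃ n : ℕ, V (ϖ ^ n) ≤ V (N : F)

variable {A : Type} [CommRing A] {F : Type} [Field F] {Γ₀ : Type}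
  [LinearOrderedCommGroupWithZero Γ₀]

namespace AnStr

variable (S : AnStr A F Γ₀) {σ τ : Type} [Finite σ] [Finite τ]

/-- Evaluation as a ring homomorphism. -/
noncomputable def evHom (x : σ → F) (hx : ∀ j, S.V (x j) < 1) : MvPowerSeries σ A →+* F where
  toFun := S.ev x
  map_one' := S.ev_one x hx
  map_mul' := S.ev_mul x hx
  map_zero' := by
    have := S.ev_add x hx 0 0
    simpa using this
  map_add' := S.ev_add x hx

theorem evHom_apply (x : σ → F) (hx : ∀ j, S.V (x j) < 1) (f : MvPowerSeries σ A) :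
    S.evHom x hx f = S.ev x f := rfl

theorem ev_zero (x : σ → F) (hx : ∀ j, S.V (x j) < 1) : S.ev x (0 : MvPowerSeries σ A) = 0 :=
  map_zero (S.evHom x hx)

theorem ev_neg (x : σ → F) (hx : ∀ j, S.V (x j) < 1) (f : MvPowerSeries σ A) :
    S.ev x (-f) = - S.ev x f :=
  map_neg (S.evHom x hx) f

theorem ev_sub (x : σ → F) (hx : ∀ j, S.V (x j) < 1) (f g : MvPowerSeries σ A) :
    S.ev x (f - g) = S.ev x f - S.ev x g :=
  map_sub (S.evHom x hx) f g

theorem ev_pow (x : σ → F) (hx : ∀ j, S.V (x j) < 1) (f : MvPowerSeries σ A) (n : ℕ) :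
    S.ev x (f ^ n) = S.ev x f ^ n :=
  map_pow (S.evHom x hx) f n

theorem ev_sum (x : σ → F) (hx : ∀ j, S.V (x j) < 1) {ι : Type*} (s : Finset ι)
    (f : ι → MvPowerSeries σ A) : S.ev x (∑ i ∈ s, f i) = ∑ i ∈ s, S.ev x (f i) :=
  map_sum (S.evHom x hx) f s

theorem ev_prod (x : σ → F) (hx : ∀ j, S.V (x j) < 1) {ι : Type*} (s : Finset ι)
    (f : ι → MvPowerSeries σ A) : S.ev x (∏ i ∈ s, f i) = ∏ i ∈ s, S.ev x (f i) :=
  map_prod (S.evHom x hx) f s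

theorem ev_natCast (x : σ → F) (hx : ∀ j, S.V (x j) < 1) (n : ℕ) :
    S.ev x (n : MvPowerSeries σ A) = n :=
  map_natCast (S.evHom x hx) n

theorem V_natCast_le (n : ℕ) : S.V (n : F) ≤ 1 := by
  have h : ∀ j : Empty, S.V ((fun _ => 0 : Empty → F) j) < 1 := fun j => j.elim
  have := S.ev_le _ h (n : MvPowerSeries Empty A)
  rwa [S.ev_natCast _ h] at this

/-- Renaming of variables. -/
theorem ev_rename (x : τ → F) (hx : ∀ j, S.V (x j) < 1) (φ : σ → τ) (f : MvPowerSeries σ A) :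
    S.ev x (MvPowerSeries.subst (fun j => (MvPowerSeries.X (φ j) : MvPowerSeries τ A)) f) =
      S.ev (fun j => x (φ j)) f := by
  rw [S.ev_subst x hx _ (fun j => MvPowerSeries.constantCoeff_X _)]
  simp only [S.ev_X x hx]

theorem natCast_ne (S : AnStr A F Γ₀) {N : ℕ} (hN : N ≠ 0) : (N : F) ≠ 0 := by
  obtain ⟨n, hn⟩ := S.natCast N hN
  intro h
  rw [h, map_zero, le_zero_iff, Valuation.zero_iff] at hn
  exact pow_ne_zero _ S.ϖ_ne hn

theorem Vϖ_pos : 0 < S.V S.ϖ := zero_lt_iff.2 ((Valuation.ne_zero_iff _).2 S.ϖ_ne)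

/-- Below finitely many nonzero elements there is a nonzero small one. -/
theorem exists_small {ι : Type*} (s : Finset ι) (a : ι → F) (ha : ∀ i ∈ s, a i ≠ 0) :
    ∃ δ : F, δ ≠ 0 ∧ S.V δ < 1 ∧ ∀ i ∈ s, S.V δ < S.V (a i) := by
  classical
  induction s using Finset.induction_on with
  | empty => exact ⟨S.ϖ, S.ϖ_ne, S.ϖ_lt, by simp⟩
  | insert i s hi ih =>
    obtain ⟨δ, h0, h1, h2⟩ := ih fun j hj => ha j (Finset.mem_insert_of_mem hj)
    have hai := ha i (Finset.mem_insert_self _ _)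
    rcases lt_or_ge (S.V δ) (S.V (a i)) with h | h
    · refine ⟨δ, h0, h1, fun j hj => ?_⟩
      rcases Finset.mem_insert.1 hj with rfl | hj
      · exact h
      · exact h2 j hj
    · have hlt : S.V (S.ϖ * a i) < S.V (a i) := by
        rw [map_mul]
        exact mul_lt_of_lt_one_left (zero_lt_iff.2 ((Valuation.ne_zero_iff _).2 hai)) S.ϖ_lt
      refine ⟨S.ϖ * a i, mul_ne_zero S.ϖ_ne hai, (hlt.trans_le h).trans h1, fun j hj => ?_⟩
      rcases Finset.mem_insert.1 hj with rfl | hj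
      · exact hlt
      · exact (hlt.trans_le h).trans (h2 j hj)

/-- A subfield closed under evaluation of power series, containing a uniformizer and residue
representatives. -/
structure Closed (E : Subfield F) : Prop where
  T_mem : ∀ τ ∈ S.T, τ ∈ E
  ϖ_mem : S.ϖ ∈ E
  ev_mem : ∀ {σ : Type} [Finite σ] (x : σ → F), (∀ j, x j ∈ E) → (∀ j, S.V (x j) < 1) →
    ∀ f : MvPowerSeries σ A, S.ev x f ∈ E

/-- Values of power series without constant term at tuples from `Λ`. -/
def An0 (Λ : Set F) : Set F :=
  {y | ∃ (σ : Type) (_ : Finite σ) (x : σ → F) (f : MvPowerSeries σ A),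
    (∀ j, x j ∈ Λ) ∧ f.constantCoeff = 0 ∧ y = S.ev x f}

variable {S}

theorem An0_small {Λ : Set F} (hΛ : ∀ x ∈ Λ, S.V x < 1) {y : F} (hy : y ∈ S.An0 Λ) :
    S.V y < 1 := by
  obtain ⟨σ, _, x, f, hx, hf, rfl⟩ := hy
  exact S.ev_lt x (fun j => hΛ _ (hx j)) f hf

theorem An0_self {Λ : Set F} (hΛ : ∀ x ∈ Λ, S.V x < 1) {y : F} (hy : y ∈ Λ) :
    y ∈ S.An0 Λ :=
  ⟨Unit, inferInstance, fun _ => y, MvPowerSeries.X (), fun _ => hy,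
    MvPowerSeries.constantCoeff_X _, (S.ev_X _ (fun _ => hΛ _ hy) ()).symm⟩

/-- Finitely many elements of `An0 Λ` can be written with a common tuple of arguments. -/
theorem An0_merge {Λ : Set F} (hΛ : ∀ x ∈ Λ, S.V x < 1) {ι : Type} [Finite ι] {y : ι → F}
    (hy : ∀ i, y i ∈ S.An0 Λ) :
    ∃ (τ : Type) (_ : Finite τ) (x : τ → F) (f : ι → MvPowerSeries τ A),
      (∀ j, x j ∈ Λ) ∧ (∀ i, (f i).constantCoeff = 0) ∧ ∀ i, y i = S.ev x (f i) := by
  choose σ hσ x f hx hf hyf using hy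
  refine ⟨Σ i, σ i, inferInstance, fun j => x j.1 j.2, fun i =>
    MvPowerSeries.subst (fun j => (MvPowerSeries.X (⟨i, j⟩ : Σ i, σ i) :
      MvPowerSeries (Σ i, σ i) A)) (f i), fun j => hx _ _, fun i => ?_, fun i => ?_⟩
  · exact cc_subst (fun j => MvPowerSeries.constantCoeff_X _) (hf i)
  · rw [S.ev_rename _ (fun j => hΛ _ (hx _ _)), hyf i]

theorem An0_ev {Λ : Set F} (hΛ : ∀ x ∈ Λ, S.V x < 1) {ι : Type} [Finite ι] {y : ι → F}
    (hy : ∀ i, y i ∈ S.An0 Λ) (g : MvPowerSeries ι A) (hg : g.constantCoeff = 0) :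
    S.ev y g ∈ S.An0 Λ := by
  obtain ⟨τ, _, x, f, hx, hf, hyf⟩ := An0_merge hΛ hy
  refine ⟨τ, inferInstance, x, MvPowerSeries.subst f g, hx, cc_subst hf hg, ?_⟩
  rw [S.ev_subst x (fun j => hΛ _ (hx j)) f hf]
  congr 1
  funext i
  exact hyf i

theorem An0_mono {Λ Λ' : Set F} (hΛ' : ∀ x ∈ Λ', S.V x < 1) (h : Λ ⊆ S.An0 Λ') :
    S.An0 Λ ⊆ S.An0 Λ' := by
  rintro _ ⟨σ, _, x, f, hx, hf, rfl⟩
  exact An0_ev hΛ' (fun j => h (hx j)) f hf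

/-! ### One distinguished variable -/

theorem elim_small {lam : σ → F} {t : F} (hlam : ∀ j, S.V (lam j) < 1) (ht : S.V t < 1)
    (o : Option σ) : S.V (o.elim t lam) < 1 := by
  cases o
  · exact ht
  · exact hlam _

variable (S)

/-- Evaluation of a power series in one variable over a ring of power series. -/
noncomputable def ev2 (f : PowerSeries (MvPowerSeries σ A)) (lam : σ → F) (t : F) : F :=
  S.ev (fun o : Option σ => o.elim t lam) ((MvPowerSeries.optionEquivLeft σ A).symm f)

section ev2

variable {S} {lam : σ → F} {t : F}

/-- `ev2` as a ring homomorphism. -/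
noncomputable def ev2Hom (hlam : ∀ j, S.V (lam j) < 1) (ht : S.V t < 1) :
    PowerSeries (MvPowerSeries σ A) →+* F :=
  (S.evHom (fun o : Option σ => o.elim t lam) (elim_small hlam ht)).comp
    ((MvPowerSeries.optionEquivLeft σ A).symm : PowerSeries (MvPowerSeries σ A) →+* _)

theorem ev2Hom_apply (hlam : ∀ j, S.V (lam j) < 1) (ht : S.V t < 1)
    (f : PowerSeries (MvPowerSeries σ A)) : ev2Hom hlam ht f = S.ev2 f lam t := rfl

theorem ev2_add (hlam : ∀ j, S.V (lam j) < 1) (ht : S.V t < 1)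
    (f g : PowerSeries (MvPowerSeries σ A)) :
    S.ev2 (f + g) lam t = S.ev2 f lam t + S.ev2 g lam t := map_add (ev2Hom hlam ht) f g

theorem ev2_mul (hlam : ∀ j, S.V (lam j) < 1) (ht : S.V t < 1)
    (f g : PowerSeries (MvPowerSeries σ A)) :
    S.ev2 (f * g) lam t = S.ev2 f lam t * S.ev2 g lam t := map_mul (ev2Hom hlam ht) f g

theorem ev2_sum (hlam : ∀ j, S.V (lam j) < 1) (ht : S.V t < 1)
    {ι : Type*} (s : Finset ι) (f : ι → PowerSeries (MvPowerSeries σ A)) :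
    S.ev2 (∑ i ∈ s, f i) lam t = ∑ i ∈ s, S.ev2 (f i) lam t :=
  map_sum (ev2Hom hlam ht) f s

theorem ev2_X (hlam : ∀ j, S.V (lam j) < 1) (ht : S.V t < 1) :
    S.ev2 (PowerSeries.X : PowerSeries (MvPowerSeries σ A)) lam t = t := by
  rw [ev2, ← MvPowerSeries.optionEquivLeft_X_none, AlgEquiv.symm_apply_apply,
    S.ev_X _ (elim_small hlam ht)]
  rfl

theorem ev2_X_pow (hlam : ∀ j, S.V (lam j) < 1) (ht : S.V t < 1) (n : ℕ) :
    S.ev2 (PowerSeries.X ^ n : PowerSeries (MvPowerSeries σ A)) lam t = t ^ n := by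
  rw [← ev2Hom_apply hlam ht, map_pow, ev2Hom_apply, ev2_X hlam ht]

theorem ev2_C (hlam : ∀ j, S.V (lam j) < 1) (ht : S.V t < 1) (c : MvPowerSeries σ A) :
    S.ev2 (PowerSeries.C c) lam t = S.ev lam c := by
  rw [ev2, oe_symm_C, S.ev_rename _ (elim_small hlam ht)]
  rfl

theorem ev2_le (hlam : ∀ j, S.V (lam j) < 1) (ht : S.V t < 1)
    (f : PowerSeries (MvPowerSeries σ A)) : S.V (S.ev2 f lam t) ≤ 1 :=
  S.ev_le _ (elim_small hlam ht) _

/-- At `t = 0` only the constant coefficient survives. -/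
theorem ev2_zero (hlam : ∀ j, S.V (lam j) < 1) (f : PowerSeries (MvPowerSeries σ A)) :
    S.ev2 f lam 0 = S.ev lam (PowerSeries.coeff 0 f) := by
  have h0 : S.V (0 : F) < 1 := by simp
  conv_lhs => rw [PowerSeries.eq_X_mul_shift_add_const f]
  rw [ev2_add hlam h0, ev2_mul hlam h0, ev2_X hlam h0, zero_mul, zero_add, ev2_C hlam h0,
    PowerSeries.coeff_zero_eq_constantCoeff_apply]

variable [IsNoetherianRing A]

theorem powerSeries_split (g : PowerSeries (MvPowerSeries σ A)) (D k : ℕ)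
    (h : ∀ l < D, PowerSeries.coeff l g = if l = k then 1 else 0) :
    ∃ r, g = PowerSeries.X ^ k + PowerSeries.X ^ D * r := by
  have : (PowerSeries.X ^ D : PowerSeries (MvPowerSeries σ A)) ∣ g - PowerSeries.X ^ k := by
    rw [PowerSeries.X_pow_dvd_iff]
    intro l hl
    rw [map_sub, h l hl, PowerSeries.coeff_X_pow, sub_self]
  obtain ⟨r, hr⟩ := this
  exact ⟨r, by rw [← hr]; ring⟩

/-- The value of a power series in one variable is controlled by its coefficients. -/
theorem ev2_le_of_coeff (hlam : ∀ j, S.V (lam j) < 1) (ht : S.V t < 1)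
    (f : PowerSeries (MvPowerSeries σ A)) (a : F)
    (h : ∀ l, S.V (S.ev lam (PowerSeries.coeff l f)) ≤ S.V a) : S.V (S.ev2 f lam t) ≤ S.V a := by
  obtain ⟨D, g, hf, hg⟩ := powerSeries_generators f
  rw [hf, ev2_sum hlam ht]
  refine Valuation.map_sum_le _ fun k _ => ?_
  rw [ev2_mul hlam ht, ev2_C hlam ht, map_mul]
  exact (mul_le_of_le_one_right' (ev2_le hlam ht _)).trans (h k)

theorem coeff_eq_zero_of_generators (hlam : ∀ j, S.V (lam j) < 1)
    (f : PowerSeries (MvPowerSeries σ A)) {D : ℕ} {g : ℕ → PowerSeries (MvPowerSeries σ A)}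
    (hf : f = ∑ k ∈ Finset.range D, PowerSeries.C (PowerSeries.coeff k f) * g k)
    (h : ∀ k < D, S.ev lam (PowerSeries.coeff k f) = 0) (l : ℕ) :
    S.ev lam (PowerSeries.coeff l f) = 0 := by
  rw [hf, map_sum, S.ev_sum _ hlam]
  refine Finset.sum_eq_zero fun k hk => ?_
  rw [PowerSeries.coeff_C_mul, S.ev_mul _ hlam, h k (Finset.mem_range.1 hk), zero_mul]

/-- **Identity principle**: a power series vanishing near `0` has vanishing coefficients. -/
theorem coeff_eq_zero_of_ev2 (hlam : ∀ j, S.V (lam j) < 1)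
    (f : PowerSeries (MvPowerSeries σ A)) (ε : F) (hε : ε ≠ 0)
    (h : ∀ δ, S.V δ < 1 → S.V δ < S.V ε → S.ev2 f lam δ = 0) (l : ℕ) :
    S.ev lam (PowerSeries.coeff l f) = 0 := by
  classical
  obtain ⟨D, g, hf, hg⟩ := powerSeries_generators f
  refine coeff_eq_zero_of_generators hlam f hf ?_ l
  set c : ℕ → F := fun k => S.ev lam (PowerSeries.coeff k f) with hc
  by_contra hne
  push Not at hne
  have hex : ∃ k, k < D ∧ c k ≠ 0 := hne
  set k₀ := Nat.find hex
  obtain ⟨hkD, hk0⟩ : k₀ < D ∧ c k₀ ≠ 0 := Nat.find_spec hex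
  have hmin : ∀ k < k₀, c k = 0 := fun k hk => by
    by_contra hck
    exact Nat.find_min hex hk ⟨hk.trans hkD, hck⟩
  -- `δ` is so small that the lowest term dominates
  obtain ⟨δ, hδ0, hδ1, hδ⟩ := S.exists_small (insert (D + 1) (Finset.range D))
    (fun k => if k = D + 1 then ε else if c k = 0 then 1 else c k₀ / c k) (by
      intro k _
      split_ifs with h1 h2
      · exact hε
      · exact one_ne_zero
      · exact div_ne_zero hk0 h2)
  have hδε : S.V δ < S.V ε := by simpa using hδ (D + 1) (Finset.mem_insert_self _ _)
  have hδc : ∀ k < D, S.V (c k * δ) < S.V (c k₀) := by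
    intro k hk
    have h1 := hδ k (Finset.mem_insert_of_mem (Finset.mem_range.2 hk))
    rw [if_neg (by omega)] at h1
    split_ifs at h1 with h2
    · rw [h2, zero_mul, map_zero]
      exact zero_lt_iff.2 ((Valuation.ne_zero_iff _).2 hk0)
    · rw [map_div₀, lt_div_iff₀ (zero_lt_iff.2 ((Valuation.ne_zero_iff _).2 h2))] at h1
      rwa [map_mul, mul_comm]
  have h0 := h δ hδ1 hδε
  rw [hf, ev2_sum hlam hδ1] at h0
  choose r hr using fun k : Finset.range D => powerSeries_split (g k) D k
    (hg k (Finset.mem_range.1 k.2))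
  have hgk : ∀ k (hk : k ∈ Finset.range D), S.ev2 (g k) lam δ =
      δ ^ k + δ ^ D * S.ev2 (r ⟨k, hk⟩) lam δ := by
    intro k hk
    conv_lhs => rw [hr ⟨k, hk⟩]
    rw [ev2_add hlam hδ1, ev2_mul hlam hδ1, ev2_X_pow hlam hδ1, ev2_X_pow hlam hδ1]
  have hδV : S.V δ ≠ 0 := (Valuation.ne_zero_iff _).2 hδ0
  have hcpos : 0 < S.V (c k₀) := zero_lt_iff.2 ((Valuation.ne_zero_iff _).2 hk0)
  have key : ∀ k < D, ∀ j, k₀ < j → ∀ z, S.V z ≤ 1 →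
      S.V (c k * (δ ^ j * z)) < S.V (c k₀ * δ ^ k₀) := by
    intro k hk j hj z hz
    obtain ⟨i, rfl⟩ : ∃ i, j = k₀ + 1 + i := ⟨j - (k₀ + 1), by omega⟩
    have : c k * (δ ^ (k₀ + 1 + i) * z) = (c k * δ) * δ ^ k₀ * (δ ^ i * z) := by ring
    rw [this, map_mul]
    refine lt_of_le_of_lt (mul_le_of_le_one_right' ?_) ?_
    · rw [map_mul, map_pow]
      exact mul_le_one' (pow_le_one' hδ1.le _) hz
    · rw [map_mul, map_mul S.V (c k₀)]
      exact mul_lt_mul_of_pos_right (hδc k hk) (zero_lt_iff.2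
        ((Valuation.ne_zero_iff _).2 (pow_ne_zero _ hδ0)))
  rw [← Finset.add_sum_erase _ _ (Finset.mem_range.2 hkD)] at h0
  rw [ev2_mul hlam hδ1, ev2_C hlam hδ1, hgk _ (Finset.mem_range.2 hkD), mul_add, add_assoc] at h0
  have hlt : S.V (c k₀ * (δ ^ D * S.ev2 (r ⟨k₀, Finset.mem_range.2 hkD⟩) lam δ) +
      ∑ x ∈ (Finset.range D).erase k₀, S.ev2 (PowerSeries.C (PowerSeries.coeff x f) * g x) lam δ) <
      S.V (c k₀ * δ ^ k₀) := by
    have hpos : 0 < S.V (c k₀ * δ ^ k₀) := by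
      rw [map_mul, map_pow]
      exact mul_pos hcpos (zero_lt_iff.2 (pow_ne_zero _ hδV))
    refine Valuation.map_add_lt _ (key _ hkD _ hkD _ (ev2_le hlam hδ1 _))
      (Valuation.map_sum_lt' _ hpos fun k hk => ?_)
    obtain ⟨hk1, hk2⟩ := Finset.mem_erase.1 hk
    rw [ev2_mul hlam hδ1, ev2_C hlam hδ1, hgk _ hk2, mul_add]
    change S.V (c k * _ + c k * _) < _
    have hkD' := Finset.mem_range.1 hk2
    refine Valuation.map_add_lt _ ?_ (key _ hkD' _ hkD _ (ev2_le hlam hδ1 _))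
    rcases lt_or_gt_of_ne hk1 with h2 | h2
    · rw [hmin k h2, zero_mul, map_zero]; exact hpos
    · simpa using key k hkD' k h2 1 (by simp)
  have h3 := Valuation.map_add_eq_of_lt_right _ hlt
  change c k₀ * δ ^ k₀ + _ = 0 at h0
  rw [add_comm, h0, map_zero] at h3
  rw [← h3] at hlt
  exact not_lt_zero hlt

theorem ev2_eq_zero_of_coeff (hlam : ∀ j, S.V (lam j) < 1) (ht : S.V t < 1)
    (f : PowerSeries (MvPowerSeries σ A))
    (h : ∀ l, S.ev lam (PowerSeries.coeff l f) = 0) : S.ev2 f lam t = 0 := by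
  have := ev2_le_of_coeff hlam ht f 0 (fun l => by rw [h l])
  simpa using this

end ev2

end AnStr

variable {A : Type} [CommRing A] {F : Type} [Field F] {Γ₀ : Type}
  [LinearOrderedCommGroupWithZero Γ₀]

/-! ### Closed subfields from leading terms -/

namespace AnStr

variable {S : AnStr A F Γ₀} {σ τ : Type} [Finite σ] [Finite τ]

theorem V_one_add {a : F} (ha : S.V a < 1) : S.V (1 + a) = 1 :=
  Valuation.map_one_add_of_lt _ ha

theorem one_add_ne {a : F} (ha : S.V a < 1) : 1 + a ≠ 0 := by
  intro h
  have := V_one_add ha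
  rw [h, map_zero] at this
  exact zero_ne_one this

/-- Data from which a closed subfield can be built: `C` is a multiplicative group of leading
terms, and `A0` is the maximal ideal of the subfield to be constructed. -/
structure Leading (S : AnStr A F Γ₀) (E : Subfield F) (C A0 : Set F) : Prop where
  closed : S.Closed E
  sub : ∀ x ∈ E, x ≠ 0 → x ∈ C
  ne : ∀ c ∈ C, c ≠ 0
  mul : ∀ c ∈ C, ∀ c' ∈ C, c * c' ∈ C
  inv : ∀ c ∈ C, c⁻¹ ∈ C
  small : ∀ a ∈ A0, S.V a < 1
  ev : ∀ {σ : Type} [Finite σ] (y : σ → F), (∀ j, y j ∈ A0) →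
    ∀ f : MvPowerSeries σ A, f.constantCoeff = 0 → S.ev y f ∈ A0
  C_sub : ∀ c ∈ C, S.V c < 1 → c ∈ A0
  nf : ∀ y ∈ A0, y = 0 ∨ ∃ c ∈ C, ∃ a ∈ A0, y = c * (1 + a)

namespace Leading

variable {E : Subfield F} {C A0 : Set F}

theorem ϖ_mem_C (h : Leading S E C A0) : S.ϖ ∈ C := h.sub _ h.closed.ϖ_mem S.ϖ_ne

theorem ϖ_mem (h : Leading S E C A0) : S.ϖ ∈ A0 := h.C_sub _ h.ϖ_mem_C S.ϖ_lt

theorem zero_mem (h : Leading S E C A0) : (0 : F) ∈ A0 := by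
  have := h.ev (fun _ : Unit => S.ϖ) (fun _ => h.ϖ_mem) 0 (by simp)
  rwa [S.ev_zero _ (fun _ => S.ϖ_lt)] at this

theorem neg_mem (h : Leading S E C A0) {a : F} (ha : a ∈ A0) : -a ∈ A0 := by
  have := h.ev (fun _ : Unit => a) (fun _ => ha) (-MvPowerSeries.X ()) (by simp)
  rwa [S.ev_neg _ (fun _ => h.small _ ha), S.ev_X _ (fun _ => h.small _ ha)] at this

theorem add_mem (h : Leading S E C A0) {a b : F} (ha : a ∈ A0) (hb : b ∈ A0) : a + b ∈ A0 := by
  have hab : ∀ i : Bool, cond i a b ∈ A0 := fun i => by cases i; exacts [hb, ha]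
  have := h.ev (fun i : Bool => cond i a b) hab
    (MvPowerSeries.X true + MvPowerSeries.X false) (by simp)
  rwa [S.ev_add _ (fun i => h.small _ (hab i)), S.ev_X _ (fun i => h.small _ (hab i)),
    S.ev_X _ (fun i => h.small _ (hab i))] at this

theorem mul_mem (h : Leading S E C A0) {a b : F} (ha : a ∈ A0) (hb : b ∈ A0) : a * b ∈ A0 := by
  have hab : ∀ i : Bool, cond i a b ∈ A0 := fun i => by cases i; exacts [hb, ha]
  have := h.ev (fun i : Bool => cond i a b) hab
    (MvPowerSeries.X true * MvPowerSeries.X false) (by simp)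
  rwa [S.ev_mul _ (fun i => h.small _ (hab i)), S.ev_X _ (fun i => h.small _ (hab i)),
    S.ev_X _ (fun i => h.small _ (hab i))] at this

/-- `(1 + a)⁻¹ = 1 + a'` with `a' ∈ A0`. -/
theorem inv_one_add (h : Leading S E C A0) {a : F} (ha : a ∈ A0) : ∃ a' ∈ A0, (1 + a)⁻¹ = 1 + a' := by
  have hsm : ∀ _ : Unit, S.V a < 1 := fun _ => h.small _ ha
  -- the geometric series
  obtain ⟨g, hg⟩ : ∃ g : MvPowerSeries Unit A, (1 + MvPowerSeries.X ()) * g = 1 := by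
    have hu : IsUnit (1 + MvPowerSeries.X () : MvPowerSeries Unit A) := by
      rw [MvPowerSeries.isUnit_iff_constantCoeff]; simp
    exact hu.exists_right_inv
  refine ⟨S.ev (fun _ : Unit => a) (g - 1), h.ev _ (fun _ => ha) _ ?_, ?_⟩
  · have := congrArg MvPowerSeries.constantCoeff hg
    rw [map_mul, map_add, map_one, MvPowerSeries.constantCoeff_X, add_zero, one_mul] at this
    rw [map_sub, this, map_one, sub_self]
  · have := congrArg (S.ev (fun _ : Unit => a)) hg
    rw [S.ev_mul _ hsm, S.ev_add _ hsm, S.ev_one _ hsm, S.ev_X _ hsm] at this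
    rw [S.ev_sub _ hsm, S.ev_one _ hsm, add_sub_cancel]
    exact (eq_inv_of_mul_eq_one_right this).symm

theorem C_mul_small (h : Leading S E C A0) {c a : F} (hc : c ∈ C) (ha : a ∈ A0) (hca : S.V (c * (1 + a)) < 1) :
    c * (1 + a) ∈ A0 := by
  rw [map_mul, V_one_add (h.small _ ha), mul_one] at hca
  have := h.add_mem (h.C_sub c hc hca) (h.mul_mem (h.C_sub c hc hca) ha)
  convert this using 1
  ring

theorem repr (h : Leading S E C A0) {c a : F} (hc : c ∈ C) (ha : a ∈ A0) :
    ∃ c' ∈ C, ∃ a' ∈ A0, c * (1 + a) = c' * a' := by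
  refine ⟨c * S.ϖ⁻¹, h.mul _ hc _ (h.inv _ h.ϖ_mem_C), S.ϖ + S.ϖ * a,
    h.add_mem h.ϖ_mem (h.mul_mem h.ϖ_mem ha), ?_⟩
  have := S.ϖ_ne
  field_simp

theorem nf' (h : Leading S E C A0) {c a : F} (hc : c ∈ C) (ha : a ∈ A0) :
    c * a = 0 ∨ ∃ c' ∈ C, ∃ a' ∈ A0, c * a = c' * (1 + a') := by
  rcases h.nf a ha with rfl | ⟨c', hc', a', ha', rfl⟩
  · left; simp
  · right; exact ⟨c * c', h.mul _ hc _ hc', a', ha', by ring⟩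

theorem add_aux (h : Leading S E C A0) {c a c' a' : F} (hc : c ∈ C) (ha : a ∈ A0) (hc' : c' ∈ C) (ha' : a' ∈ A0)
    (hcc : S.V c' ≤ S.V c) : ∃ c'' ∈ C, ∃ a'' ∈ A0, c * a + c' * a' = c'' * a'' := by
  have hc0 := h.ne c hc
  have hϖ := S.ϖ_ne
  have hq : S.ϖ * c' * c⁻¹ ∈ A0 := by
    refine h.C_sub _ (h.mul _ (h.mul _ h.ϖ_mem_C _ hc') _ (h.inv _ hc)) ?_
    rw [map_mul, map_mul, map_inv₀, mul_assoc]
    refine lt_of_le_of_lt (mul_le_of_le_one_right' ?_) S.ϖ_lt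
    rw [← div_eq_mul_inv]
    exact div_le_one_of_le₀ hcc zero_le
  refine ⟨c * S.ϖ⁻¹, h.mul _ hc _ (h.inv _ h.ϖ_mem_C), S.ϖ * a + S.ϖ * c' * c⁻¹ * a',
    h.add_mem (h.mul_mem h.ϖ_mem ha) (h.mul_mem hq ha'), ?_⟩
  field_simp

/-- The closed subfield attached to the leading data. -/
def toSubfield (h : Leading S E C A0) : Subfield F where
  carrier := {z | ∃ c ∈ C, ∃ a ∈ A0, z = c * a}
  zero_mem' := ⟨S.ϖ, h.ϖ_mem_C, 0, h.zero_mem, by simp⟩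
  one_mem' := ⟨S.ϖ⁻¹, h.inv _ h.ϖ_mem_C, S.ϖ, h.ϖ_mem, (inv_mul_cancel₀ S.ϖ_ne).symm⟩
  neg_mem' := by
    rintro _ ⟨c, hc, a, ha, rfl⟩
    exact ⟨c, hc, -a, h.neg_mem ha, by ring⟩
  mul_mem' := by
    rintro _ _ ⟨c, hc, a, ha, rfl⟩ ⟨c', hc', a', ha', rfl⟩
    exact ⟨c * c', h.mul _ hc _ hc', a * a', h.mul_mem ha ha', by ring⟩
  add_mem' := by
    rintro _ _ ⟨c, hc, a, ha, rfl⟩ ⟨c', hc', a', ha', rfl⟩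
    rcases le_total (S.V c') (S.V c) with hcc | hcc
    · exact h.add_aux hc ha hc' ha' hcc
    · rw [add_comm]; exact h.add_aux hc' ha' hc ha hcc
  inv_mem' := by
    rintro _ ⟨c, hc, a, ha, rfl⟩
    rcases h.nf' hc ha with h0 | ⟨c', hc', a', ha', h0⟩
    · rw [h0, inv_zero]; exact ⟨S.ϖ, h.ϖ_mem_C, 0, h.zero_mem, by simp⟩
    · obtain ⟨a'', ha'', h1⟩ := h.inv_one_add ha'
      rw [h0, mul_inv, h1]
      exact h.repr (h.inv _ hc') ha''

theorem mem_iff (h : Leading S E C A0) {z : F} : z ∈ h.toSubfield ↔ ∃ c ∈ C, ∃ a ∈ A0, z = c * a := Iff.rfl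

theorem A0_sub (h : Leading S E C A0) {a : F} (ha : a ∈ A0) : a ∈ h.toSubfield := by
  have h1 : (1 : F) ∈ C := h.sub _ E.one_mem one_ne_zero
  exact ⟨1, h1, a, ha, (one_mul a).symm⟩

theorem C_sub_subfield (h : Leading S E C A0) {c : F} (hc : c ∈ C) : c ∈ h.toSubfield := by
  have := h.repr hc h.zero_mem
  rw [add_zero, mul_one] at this
  exact this

theorem small_mem (h : Leading S E C A0) {z : F} (hz : z ∈ h.toSubfield) (hz1 : S.V z < 1) : z ∈ A0 := by
  obtain ⟨c, hc, a, ha, rfl⟩ := hz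
  rcases h.nf' hc ha with h0 | ⟨c', hc', a', ha', h0⟩
  · rw [h0]; exact h.zero_mem
  · rw [h0] at hz1 ⊢
    exact h.C_mul_small hc' ha' hz1

theorem E_le (h : Leading S E C A0) : E ≤ h.toSubfield := by
  intro x hx
  by_cases h0 : x = 0
  · rw [h0]; exact Subfield.zero_mem _
  · exact h.C_sub_subfield (h.sub x hx h0)

theorem toSubfield_closed (h : Leading S E C A0) : S.Closed h.toSubfield where
  T_mem := fun τ hτ => h.E_le (h.closed.T_mem τ hτ)
  ϖ_mem := h.E_le h.closed.ϖ_mem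
  ev_mem := by
    intro σ _ x hx hx1 f
    have hf : f = MvPowerSeries.C f.constantCoeff + (f - MvPowerSeries.C f.constantCoeff) := by
      ring
    rw [hf, S.ev_add x hx1]
    refine Subfield.add_mem _ ?_ (h.A0_sub (h.ev x (fun j => h.small_mem (hx j) (hx1 j)) _
      (by simp)))
    have h1 := S.ev_subst x hx1 (fun e : Empty => e.elim) (fun e => e.elim)
      (MvPowerSeries.C f.constantCoeff)
    have h2 : MvPowerSeries.subst (fun e : Empty => (e.elim : MvPowerSeries σ A))
        (MvPowerSeries.C f.constantCoeff : MvPowerSeries Empty A) =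
        MvPowerSeries.C f.constantCoeff := MvPowerSeries.subst_C _
    rw [h2] at h1
    rw [h1]
    exact h.E_le (h.closed.ev_mem _ (fun e => e.elim) (fun e => e.elim) _)

end Leading

end AnStr

variable {A : Type} [CommRing A] {F : Type} [Field F] {Γ₀ : Type}
  [LinearOrderedCommGroupWithZero Γ₀]

namespace AnStr

variable {S : AnStr A F Γ₀} {σ τ : Type} [Finite σ] [Finite τ]

theorem V_pos {a : F} (ha : a ≠ 0) : 0 < S.V a := zero_lt_iff.2 ((Valuation.ne_zero_iff _).2 ha)

/-! ### Taylor expansion -/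

section Taylor

variable {lam : σ → F} {μ ζ t : F}

theorem elim2_small (hlam : ∀ j, S.V (lam j) < 1) (hμ : S.V μ < 1) (hζ : S.V ζ < 1)
    (o : Option (Option σ)) : S.V (o.elim ζ fun o' => o'.elim μ lam) < 1 :=
  elim_small (σ := Option σ) (elim_small hlam hμ) hζ o

theorem add_mul_small (hμ : S.V μ < 1) (hζ : S.V ζ < 1) (ht : S.V t < 1) :
    S.V (μ + ζ * t) < 1 := by
  refine Valuation.map_add_lt _ hμ ?_
  rw [map_mul]
  exact lt_of_le_of_lt (mul_le_of_le_one_right' ht.le) hζ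

theorem ev2_tay (hlam : ∀ j, S.V (lam j) < 1) (hμ : S.V μ < 1) (hζ : S.V ζ < 1)
    (ht : S.V t < 1) (f : PowerSeries (MvPowerSeries σ A)) :
    S.ev2 (tay f) (fun o : Option (Option σ) => o.elim ζ fun o' => o'.elim μ lam) t =
      S.ev2 f lam (μ + ζ * t) := by
  have hsm := elim_small (elim2_small hlam hμ hζ) ht
  rw [ev2, tay, AlgEquiv.symm_apply_apply, S.ev_subst _ hsm _ cc_taySub, ev2]
  congr 1
  funext o
  cases o with
  | none =>
    change S.ev _ (MvPowerSeries.X (some (some none)) +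
      MvPowerSeries.X (some none) * MvPowerSeries.X none) = _
    rw [S.ev_add _ hsm, S.ev_mul _ hsm, S.ev_X _ hsm, S.ev_X _ hsm, S.ev_X _ hsm]
    rfl
  | some j =>
    change S.ev _ (MvPowerSeries.X (some (some (some j)))) = _
    rw [S.ev_X _ hsm]
    rfl

theorem ev_coeff_tay (hlam : ∀ j, S.V (lam j) < 1) (hμ : S.V μ < 1) (hζ : S.V ζ < 1)
    (f : PowerSeries (MvPowerSeries σ A)) (j : ℕ) :
    S.ev (fun o : Option (Option σ) => o.elim ζ fun o' => o'.elim μ lam)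
      (PowerSeries.coeff j (tay f)) = ζ ^ j * S.ev2 (delta j f) lam μ := by
  have hsm := elim2_small hlam hμ hζ
  rw [coeff_tay, S.ev_mul _ hsm, S.ev_pow _ hsm, S.ev_X _ hsm, S.ev_rename _ hsm]
  rfl

end Taylor

section bounds

variable {lam : σ → F} {t : F}

theorem ps_split1 {B : Type*} [CommRing B] (f : PowerSeries B) :
    ∃ h : PowerSeries B, f = PowerSeries.C (PowerSeries.coeff 0 f) + PowerSeries.X * h ∧
      ∀ l, PowerSeries.coeff l h = PowerSeries.coeff (l + 1) f := by
  refine ⟨PowerSeries.mk fun l => PowerSeries.coeff (l + 1) f, ?_, fun l => PowerSeries.coeff_mk _ _⟩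
  conv_lhs => rw [PowerSeries.eq_X_mul_shift_add_const f]
  rw [add_comm, PowerSeries.coeff_zero_eq_constantCoeff_apply]

variable [IsNoetherianRing A]

/-- First order expansion with remainder. -/
theorem ev2_split1 (hlam : ∀ j, S.V (lam j) < 1) (ht : S.V t < 1)
    (f : PowerSeries (MvPowerSeries σ A)) (a : F)
    (h : ∀ l, S.V (S.ev lam (PowerSeries.coeff (l + 1) f)) ≤ S.V a) :
    ∃ r, S.ev2 f lam t = S.ev lam (PowerSeries.coeff 0 f) + t * r ∧ S.V r ≤ S.V a := by
  obtain ⟨g, hg, hgc⟩ := ps_split1 f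
  refine ⟨S.ev2 g lam t, ?_, ev2_le_of_coeff hlam ht g a fun l => by rw [hgc]; exact h l⟩
  conv_lhs => rw [hg]
  rw [ev2_add hlam ht, ev2_mul hlam ht, ev2_C hlam ht, ev2_X hlam ht]

/-- Second order expansion with remainder. -/
theorem ev2_split2 (hlam : ∀ j, S.V (lam j) < 1) (ht : S.V t < 1)
    (f : PowerSeries (MvPowerSeries σ A)) (a : F)
    (h : ∀ l, S.V (S.ev lam (PowerSeries.coeff (l + 2) f)) ≤ S.V a) :
    ∃ r, S.ev2 f lam t = S.ev lam (PowerSeries.coeff 0 f) +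
      S.ev lam (PowerSeries.coeff 1 f) * t + t ^ 2 * r ∧ S.V r ≤ S.V a := by
  obtain ⟨g, hg, hgc⟩ := ps_split1 f
  obtain ⟨g', hg', hgc'⟩ := ps_split1 g
  refine ⟨S.ev2 g' lam t, ?_, ev2_le_of_coeff hlam ht g' a fun l => by
    rw [hgc', hgc]; exact h l⟩
  conv_lhs => rw [hg, hg', hgc]
  rw [ev2_add hlam ht, ev2_mul hlam ht, ev2_add hlam ht, ev2_mul hlam ht, ev2_C hlam ht,
    ev2_C hlam ht, ev2_X hlam ht]
  ring

theorem V_natCast_mul_le (n : ℕ) {a b : F} (h : S.V a ≤ S.V b) : S.V ((n : F) * a) ≤ S.V b := by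
  rw [map_mul]
  exact (mul_le_of_le_one_left' (S.V_natCast_le n)).trans h

theorem ev_coeff_delta (hlam : ∀ j, S.V (lam j) < 1) (f : PowerSeries (MvPowerSeries σ A))
    (j l : ℕ) : S.ev lam (PowerSeries.coeff l (delta j f)) =
      ((l + j).choose j : F) * S.ev lam (PowerSeries.coeff (l + j) f) := by
  rw [coeff_delta, S.ev_mul _ hlam, S.ev_natCast _ hlam]

theorem V_delta_le (hlam : ∀ j, S.V (lam j) < 1) (ht : S.V t < 1)
    (f : PowerSeries (MvPowerSeries σ A)) (a : F)
    (h : ∀ l, S.V (S.ev lam (PowerSeries.coeff l f)) ≤ S.V a) (j : ℕ) :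
    S.V (S.ev2 (delta j f) lam t) ≤ S.V a := by
  refine ev2_le_of_coeff hlam ht _ a fun l => ?_
  rw [ev_coeff_delta hlam]
  exact V_natCast_mul_le _ (h _)

/-- The Taylor coefficient of dominating index keeps its size. -/
theorem V_delta_eq (hlam : ∀ j, S.V (lam j) < 1) (ht : S.V t < 1)
    (f : PowerSeries (MvPowerSeries σ A)) (N : ℕ)
    (hN : S.ev lam (PowerSeries.coeff N f) ≠ 0)
    (h : ∀ l, S.V (S.ev lam (PowerSeries.coeff l f)) ≤ S.V (S.ev lam (PowerSeries.coeff N f))) :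
    S.V (S.ev2 (delta N f) lam t) = S.V (S.ev lam (PowerSeries.coeff N f)) := by
  obtain ⟨r, hr, hra⟩ := ev2_split1 hlam ht (delta N f) (S.ev lam (PowerSeries.coeff N f))
    (fun l => by rw [ev_coeff_delta hlam]; exact V_natCast_mul_le _ (h _))
  rw [hr, ev_coeff_delta hlam]
  simp only [zero_add, Nat.choose_self, Nat.cast_one, one_mul]
  refine Valuation.map_add_eq_of_lt_left _ ?_
  rw [map_mul]
  refine lt_of_le_of_lt (mul_le_mul' le_rfl hra) ?_
  exact mul_lt_of_lt_one_left (V_pos hN) ht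

theorem delta_delta {B : Type*} [CommRing B] (j M : ℕ) (f : PowerSeries B) :
    delta j (delta M f) = ((j + M).choose M : PowerSeries B) * delta (j + M) f := by
  ext l
  rw [coeff_delta, coeff_delta, ← nsmul_eq_mul ((j + M).choose M), map_nsmul, coeff_delta,
    nsmul_eq_mul]
  have h := Nat.choose_mul (n := l + j + M) (k := j + M) (s := M) (by omega)
  rw [show l + j + M - M = l + j by omega, show j + M - M = j by omega] at h
  have h' := congrArg (Nat.cast : ℕ → B) h
  push_cast at h'
  rw [← add_assoc, ← mul_assoc, ← mul_assoc, mul_comm ((l + j).choose j : B), ← h']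
  ring

end bounds

/-! ### Adjoining one element to a closed subfield with the full value group -/

/-- Affine images `(x - e) / r` of `x` that are small. -/
def Aff (S : AnStr A F Γ₀) (E : Subfield F) (x : F) : Set F :=
  {t | (∃ e ∈ E, ∃ r ∈ E, r ≠ 0 ∧ t = (x - e) / r) ∧ S.V t < 1}

/-- Every value is attained on `E`. -/
def Full (S : AnStr A F Γ₀) (E : Subfield F) : Prop :=
  ∀ x : F, x ≠ 0 → ∃ e ∈ E, e ≠ 0 ∧ S.V e = S.V x

/-- The small elements of `E`, and `t`. -/
def mT (S : AnStr A F Γ₀) (E : Subfield F) (t : F) : Set F :=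
  {z | (z ∈ E ∨ z = t) ∧ S.V z < 1}

section adjoin

variable {E : Subfield F} {x : F}

theorem mT_small {t : F} : ∀ z ∈ S.mT E t, S.V z < 1 := fun _ hz => hz.2

theorem Aff_not_mem (hx : x ∉ E) {t : F} (ht : t ∈ S.Aff E x) : t ∉ E := by
  obtain ⟨⟨e, he, r, hr, hr0, rfl⟩, -⟩ := ht
  intro h
  apply hx
  have : x = (x - e) / r * r + e := by field_simp; ring
  rw [this]
  exact E.add_mem (E.mul_mem h hr) he

theorem Aff_nonempty (hE : S.Closed E) (hF : S.Full E) (hx : x ∉ E) : ∃ t, t ∈ S.Aff E x := by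
  have hx0 : x ≠ 0 := fun h => hx (h ▸ E.zero_mem)
  obtain ⟨e, he, he0, hev⟩ := hF x hx0
  refine ⟨(x - 0) / (e / S.ϖ), ⟨0, E.zero_mem, e / S.ϖ, E.div_mem he hE.ϖ_mem,
    div_ne_zero he0 S.ϖ_ne, rfl⟩, ?_⟩
  rw [sub_zero, map_div₀, map_div₀, hev, div_div_cancel₀ ((Valuation.ne_zero_iff _).2 hx0)]
  exact S.ϖ_lt

/-- Successive approximation of `t` by elements of `E`. -/
theorem approx (hE : S.Closed E) (hF : S.Full E) (hx : x ∉ E) {t : F} (ht : t ∈ S.Aff E x)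
    {s : F} (hs : s ∈ E) (n : ℕ) : ∃ μ ∈ E, S.V (t - μ) ≤ S.V (S.ϖ ^ n * (t - s)) := by
  induction n with
  | zero => exact ⟨s, hs, by simp⟩
  | succ n ih =>
    obtain ⟨μ, hμ, hle⟩ := ih
    have hu : t - μ ≠ 0 := fun h => Aff_not_mem hx ht (by rwa [sub_eq_zero.1 h])
    obtain ⟨r, hr, hr0, hrv⟩ := hF _ hu
    obtain ⟨τ, hτ, hτv⟩ := S.exists_T ((t - μ) / r) (by
      rw [map_div₀, hrv, div_self ((Valuation.ne_zero_iff _).2 hu)])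
    refine ⟨μ + r * τ, E.add_mem hμ (E.mul_mem hr (hE.T_mem τ hτ)), ?_⟩
    have h1 : t - (μ + r * τ) = ((t - μ) / r - τ) * r := by field_simp; ring
    rw [h1, map_mul, hrv, pow_succ, mul_right_comm, mul_comm, map_mul S.V _ S.ϖ]
    exact mul_le_mul' hle (S.le_ϖ _ hτv)

theorem refine_t (hE : S.Closed E) (hF : S.Full E) (hx : x ∉ E) {t : F} (ht : t ∈ S.Aff E x)
    {s : F} (hs : s ∈ E) (hts : S.V (t - s) < 1) {ζ : F} (hζ : ζ ∈ E) (hζ0 : ζ ≠ 0) (n : ℕ)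
    (hn : S.V (S.ϖ ^ n * (t - s)) ≤ S.V ζ) :
    ∃ μ ∈ E, S.V μ < 1 ∧ ∃ t' ∈ S.Aff E x, t = μ + ζ * t' := by
  obtain ⟨μ, hμ, hle⟩ := approx hE hF hx ht hs (n + 1)
  have hVϖ : S.V S.ϖ ≤ 1 := S.ϖ_lt.le
  have h1 : S.V (t - μ) < 1 := by
    refine lt_of_le_of_lt hle (lt_of_le_of_lt ?_ hts)
    rw [map_mul, map_pow]
    exact mul_le_of_le_one_left' (pow_le_one' hVϖ _)
  have h2 : S.V (t - μ) < S.V ζ := by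
    refine lt_of_le_of_lt hle ?_
    rw [pow_succ', mul_assoc, map_mul]
    exact lt_of_le_of_lt (mul_le_mul' le_rfl hn) (mul_lt_of_lt_one_left (V_pos hζ0) S.ϖ_lt)
  refine ⟨μ, hμ, ?_, (t - μ) / ζ, ⟨?_, ?_⟩, by field_simp; ring⟩
  · have : μ = t - (t - μ) := by ring
    rw [this]
    exact Valuation.map_sub_lt _ ht.2 h1
  · obtain ⟨⟨e, he, r, hr, hr0, h3⟩, -⟩ := ht
    refine ⟨e + r * μ, E.add_mem he (E.mul_mem hr hμ), r * ζ, E.mul_mem hr hζ,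
      mul_ne_zero hr0 hζ0, ?_⟩
    rw [h3]; field_simp; ring
  · rw [map_div₀]
    exact (div_lt_one₀ (V_pos hζ0)).2 h2

theorem refine_ϖ (hE : S.Closed E) (hF : S.Full E) (hx : x ∉ E) {t : F} (ht : t ∈ S.Aff E x)
    {ζ : F} (hζ : ζ ∈ E) (hζ0 : ζ ≠ 0) (n : ℕ) (hn : S.V (S.ϖ ^ n) ≤ S.V ζ) :
    ∃ μ ∈ E, S.V μ < 1 ∧ ∃ t' ∈ S.Aff E x, t = μ + ζ * t' := by
  refine refine_t hE hF hx ht E.zero_mem (by simpa using ht.2) hζ hζ0 n ?_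
  rw [sub_zero, map_mul]
  exact (mul_le_of_le_one_right' ht.2.le).trans hn

theorem affine_mem {t μ ζ : F} (ht : S.V t < 1) (hμ : μ ∈ E) (hμ1 : S.V μ < 1) (hζ : ζ ∈ E)
    (hζ1 : S.V ζ < 1) : μ + ζ * t ∈ S.An0 (S.mT E t) := by
  have hsm : ∀ o : Option Bool, S.V (o.elim t fun b => cond b μ ζ) < 1 :=
    elim_small (fun b => by cases b <;> assumption) ht
  refine ⟨Option Bool, inferInstance, fun o => o.elim t fun b => cond b μ ζ,
    MvPowerSeries.X (some true) + MvPowerSeries.X (some false) * MvPowerSeries.X none,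
    fun o => ?_, by simp, ?_⟩
  · rcases o with - | (- | -)
    exacts [⟨Or.inr rfl, ht⟩, ⟨Or.inl hζ, hζ1⟩, ⟨Or.inl hμ, hμ1⟩]
  · rw [S.ev_add _ hsm, S.ev_mul _ hsm, S.ev_X _ hsm, S.ev_X _ hsm, S.ev_X _ hsm]
    rfl

theorem B_mono {t t' : F} (ht' : S.V t' < 1) (h : t ∈ S.An0 (S.mT E t')) :
    S.An0 (S.mT E t) ⊆ S.An0 (S.mT E t') := by
  refine An0_mono mT_small ?_
  rintro z ⟨hz | rfl, hz1⟩
  · exact An0_self mT_small ⟨Or.inl hz, hz1⟩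
  · exact h

theorem directed_aux (hE : S.Closed E) (hF : S.Full E) (hx : x ∉ E) {e₁ e₂ r₁ r₂ : F}
    (he₁ : e₁ ∈ E) (he₂ : e₂ ∈ E) (hr₁ : r₁ ∈ E) (hr₂ : r₂ ∈ E) (h₁ : r₁ ≠ 0) (h₂ : r₂ ≠ 0)
    (ht₁ : S.V ((x - e₁) / r₁) < 1) (ht₂ : S.V ((x - e₂) / r₂) < 1) (hr : S.V r₁ ≤ S.V r₂) :
    ∃ t' ∈ S.Aff E x, (x - e₁) / r₁ ∈ S.An0 (S.mT E t') ∧ (x - e₂) / r₂ ∈ S.An0 (S.mT E t') := by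
  obtain ⟨μ, hμ, hμ1, t', ht', h⟩ := refine_ϖ hE hF hx
    (t := (x - e₁) / r₁) ⟨⟨e₁, he₁, r₁, hr₁, h₁, rfl⟩, ht₁⟩ hE.ϖ_mem S.ϖ_ne 1 (by simp)
  refine ⟨t', ht', ?_, ?_⟩
  · rw [h]; exact affine_mem ht'.2 hμ hμ1 hE.ϖ_mem S.ϖ_lt
  · have hα : S.V (r₁ / r₂) ≤ 1 := by
      rw [map_div₀]; exact div_le_one_of_le₀ hr zero_le
    have hβ : S.V ((e₁ - e₂) / r₂) < 1 := by
      have : (e₁ - e₂) / r₂ = (x - e₂) / r₂ - r₁ / r₂ * ((x - e₁) / r₁) := by field_simp; ring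
      rw [this]
      refine Valuation.map_sub_lt _ ht₂ ?_
      rw [map_mul]
      exact lt_of_le_of_lt (mul_le_of_le_one_left' hα) ht₁
    have h3 : (x - e₂) / r₂ = (r₁ / r₂ * μ + (e₁ - e₂) / r₂) + (r₁ / r₂ * S.ϖ) * t' := by
      have : (x - e₂) / r₂ = r₁ / r₂ * ((x - e₁) / r₁) + (e₁ - e₂) / r₂ := by field_simp; ring
      rw [this, h]; ring
    rw [h3]
    have hαE := E.div_mem hr₁ hr₂
    refine affine_mem ht'.2 (E.add_mem (E.mul_mem hαE hμ) (E.div_mem (E.sub_mem he₁ he₂) hr₂))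
      ?_ (E.mul_mem hαE hE.ϖ_mem) ?_
    · refine Valuation.map_add_lt _ ?_ hβ
      rw [map_mul]
      exact lt_of_le_of_lt (mul_le_of_le_one_left' hα) hμ1
    · rw [map_mul]
      exact lt_of_le_of_lt (mul_le_of_le_one_left' hα) S.ϖ_lt

theorem directed_B (hE : S.Closed E) (hF : S.Full E) (hx : x ∉ E) {t₁ t₂ : F}
    (h₁ : t₁ ∈ S.Aff E x) (h₂ : t₂ ∈ S.Aff E x) :
    ∃ t' ∈ S.Aff E x, S.An0 (S.mT E t₁) ⊆ S.An0 (S.mT E t') ∧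
      S.An0 (S.mT E t₂) ⊆ S.An0 (S.mT E t') := by
  obtain ⟨⟨e₁, he₁, r₁, hr₁, hr10, rfl⟩, ht₁⟩ := h₁
  obtain ⟨⟨e₂, he₂, r₂, hr₂, hr20, rfl⟩, ht₂⟩ := h₂
  rcases le_total (S.V r₁) (S.V r₂) with hr | hr
  · obtain ⟨t', ht', h3, h4⟩ := directed_aux hE hF hx he₁ he₂ hr₁ hr₂ hr10 hr20 ht₁ ht₂ hr
    exact ⟨t', ht', B_mono ht'.2 h3, B_mono ht'.2 h4⟩
  · obtain ⟨t', ht', h3, h4⟩ := directed_aux hE hF hx he₂ he₁ hr₂ hr₁ hr20 hr10 ht₂ ht₁ hr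
    exact ⟨t', ht', B_mono ht'.2 h4, B_mono ht'.2 h3⟩

/-- The union of the algebras `An0 (mT E t)`, for `t` an affine image of `x`. -/
def AffA (S : AnStr A F Γ₀) (E : Subfield F) (x : F) : Set F :=
  {y | ∃ t ∈ S.Aff E x, y ∈ S.An0 (S.mT E t)}

theorem AffA_common (hE : S.Closed E) (hF : S.Full E) (hx : x ∉ E) {ι : Type} [Finite ι]
    {y : ι → F} (hy : ∀ i, y i ∈ S.AffA E x) :
    ∃ t ∈ S.Aff E x, ∀ i, y i ∈ S.An0 (S.mT E t) := by
  choose t ht hyt using hy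
  obtain ⟨t0, ht0⟩ := Aff_nonempty hE hF hx
  haveI : Nonempty (S.Aff E x) := ⟨⟨t0, ht0⟩⟩
  have hdir : Directed (· ≤ ·) (fun t : S.Aff E x => S.An0 (S.mT E t.1)) := by
    intro t₁ t₂
    obtain ⟨t', ht', h1, h2⟩ := directed_B hE hF hx t₁.2 t₂.2
    exact ⟨⟨t', ht'⟩, h1, h2⟩
  obtain ⟨z, hz⟩ := hdir.finite_le (fun i => (⟨t i, ht i⟩ : S.Aff E x))
  exact ⟨z.1, z.2, fun i => hz i (hyt i)⟩

/-- Elements of `An0 (mT E t)` are power series in `t` with parameters in `E`. -/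
theorem B_repr {t : F} (ht : S.V t < 1) {ι : Type} [Finite ι] {y : ι → F}
    (hy : ∀ i, y i ∈ S.An0 (S.mT E t)) :
    ∃ (σ : Type) (_ : Finite σ) (lam : σ → F) (f : ι → PowerSeries (MvPowerSeries σ A)),
      (∀ j, lam j ∈ E) ∧ (∀ j, S.V (lam j) < 1) ∧
      (∀ i, (((MvPowerSeries.optionEquivLeft σ A).symm (f i))).constantCoeff = 0) ∧
      ∀ i, y i = S.ev2 (f i) lam t := by
  classical
  obtain ⟨σ, _, z, g, hz, hg, hyg⟩ := An0_merge mT_small hy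
  let lam : σ → F := fun j => if z j ∈ E then z j else 0
  have hlam1 : ∀ j, S.V (lam j) < 1 := fun j => by
    simp only [lam]; split_ifs; exacts [(hz j).2, by simp]
  let a : σ → MvPowerSeries (Option σ) A := fun j =>
    if z j ∈ E then MvPowerSeries.X (some j) else MvPowerSeries.X none
  have ha : ∀ j, (a j).constantCoeff = 0 := fun j => by
    simp only [a]; split_ifs <;> exact MvPowerSeries.constantCoeff_X _
  refine ⟨σ, inferInstance, lam, fun i => MvPowerSeries.optionEquivLeft σ A
    (MvPowerSeries.subst a (g i)), fun j => ?_, hlam1, fun i => ?_, fun i => ?_⟩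
  · simp only [lam]; split_ifs with h; exacts [h, E.zero_mem]
  · rw [AlgEquiv.symm_apply_apply]; exact cc_subst ha (hg i)
  · have hsm := elim_small hlam1 ht
    rw [ev2, AlgEquiv.symm_apply_apply, S.ev_subst _ hsm a ha, hyg i]
    congr 1
    funext j
    simp only [a]
    split_ifs with h
    · rw [S.ev_X _ hsm]; simp [lam, h]
    · rw [S.ev_X _ hsm]; exact (hz j).1.resolve_left h

end adjoin

end AnStr

variable {A : Type} [CommRing A] {F : Type} [Field F] {Γ₀ : Type}
  [LinearOrderedCommGroupWithZero Γ₀]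

namespace AnStr

variable {S : AnStr A F Γ₀} {σ τ : Type} [Finite σ] [Finite τ]

theorem An0_mul_ev {Λ : Set F} (hΛ : ∀ x ∈ Λ, S.V x < 1) {ι : Type} [Finite ι] {y : ι → F} {z : F}
    (hz : z ∈ S.An0 Λ) (hy : ∀ i, y i ∈ S.An0 Λ) (g : MvPowerSeries ι A) :
    z * S.ev y g ∈ S.An0 Λ := by
  have hm : ∀ o : Option ι, o.elim z y ∈ S.An0 Λ := fun o => by cases o; exacts [hz, hy _]
  have hsm : ∀ o : Option ι, S.V (o.elim z y) < 1 := fun o => An0_small hΛ (hm o)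
  have h := An0_ev hΛ hm (MvPowerSeries.X none *
    MvPowerSeries.subst (fun j => (MvPowerSeries.X (some j) : MvPowerSeries (Option ι) A)) g)
    (by simp)
  rw [S.ev_mul _ hsm, S.ev_X _ hsm, S.ev_rename _ hsm] at h
  exact h

theorem An0_sum {Λ : Set F} (hΛ : ∀ x ∈ Λ, S.V x < 1) {ι : Type} (s : Finset ι) {y : ι → F}
    (hy : ∀ i ∈ s, y i ∈ S.An0 Λ) : ∑ i ∈ s, y i ∈ S.An0 Λ := by
  have hy' : ∀ i : s, y i ∈ S.An0 Λ := fun i => hy i i.2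
  have hsm : ∀ i : s, S.V (y i) < 1 := fun i => An0_small hΛ (hy' i)
  have h := An0_ev hΛ hy' (∑ i : s, MvPowerSeries.X i) (by simp)
  rw [S.ev_sum _ hsm] at h
  simp only [S.ev_X _ hsm] at h
  rwa [Finset.sum_coe_sort s y] at h

/-! ### Hensel's lemma -/

theorem coeff_single_X_ne {i j : σ} (h : j ≠ i) :
    MvPowerSeries.coeff (Finsupp.single i 1) (MvPowerSeries.X j : MvPowerSeries σ A) = 0 := by
  classical
  rw [MvPowerSeries.coeff_X, if_neg]
  intro h1
  have := DFunLike.congr_fun h1 j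
  simp [h] at this

theorem coeff_single_mul {a b : MvPowerSeries σ A} (ha : a.constantCoeff = 0)
    (hb : b.constantCoeff = 0) (i : σ) :
    MvPowerSeries.coeff (Finsupp.single i 1) (a * b) = 0 := by
  refine MvPowerSeries.coeff_of_lt_order (lt_of_lt_of_le ?_ MvPowerSeries.le_order_mul)
  have h1 := MvPowerSeries.one_le_order_iff_constCoeff_eq_zero.2 ha
  have h2 := MvPowerSeries.one_le_order_iff_constCoeff_eq_zero.2 hb
  refine lt_of_lt_of_le ?_ (add_le_add h1 h2)
  rw [Finsupp.degree_single]
  norm_num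

section hensel

variable {E : Subfield F} {lam : σ → F} {μ B : F}

/-- If the linear coefficient of `g (μ + B W)` dominates the constant one and `B ^ 2`, then
`g (μ + B W)` has a small zero `W`, in any closed subfield containing the data. -/
theorem hensel (hE : S.Closed E) (hlamE : ∀ j, lam j ∈ E) (hlam : ∀ j, S.V (lam j) < 1)
    (hμE : μ ∈ E) (hμ : S.V μ < 1) (hBE : B ∈ E) (hB : S.V B < 1)
    (g : PowerSeries (MvPowerSeries σ A)) (k : F) (hk : k = B * S.ev2 (delta 1 g) lam μ)
    (hk0 : k ≠ 0) (h0 : S.V (S.ev2 (delta 0 g) lam μ) < S.V k) (hB2 : S.V (B ^ 2) < S.V k) :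
    ∃ W ∈ E, S.V W < 1 ∧ S.ev2 g lam (μ + B * W) = 0 := by
  set lam2 : Option (Option σ) → F := fun o => o.elim B fun o' => o'.elim μ lam with hlam2
  have hsm2 : ∀ o, S.V (lam2 o) < 1 := elim2_small hlam hμ hB
  have hlam2E : ∀ o, lam2 o ∈ E := by
    rintro (- | - | j)
    exacts [hBE, hμE, hlamE j]
  have hevE : ∀ f : PowerSeries (MvPowerSeries σ A), S.ev2 f lam μ ∈ E := fun f =>
    hE.ev_mem _ (by rintro (- | j); exacts [hμE, hlamE j]) (elim_small hlam hμ) _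
  set k0 := S.ev2 (delta 0 g) lam μ with hk0def
  have hkE : k ∈ E := by rw [hk]; exact E.mul_mem hBE (hevE _)
  set a := k0 / k with ha
  set b := B ^ 2 / k with hb
  have haE : a ∈ E := E.div_mem (hevE _) hkE
  have hbE : b ∈ E := E.div_mem (E.pow_mem hBE 2) hkE
  have ha1 : S.V a < 1 := by rw [ha, map_div₀]; exact (div_lt_one₀ (V_pos hk0)).2 h0
  have hb1 : S.V b < 1 := by rw [hb, map_div₀]; exact (div_lt_one₀ (V_pos hk0)).2 hB2
  -- the remainder of second order
  set q0 : PowerSeries (MvPowerSeries (Option (Option σ)) A) := PowerSeries.mk fun i =>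
    MvPowerSeries.X none ^ i * MvPowerSeries.subst (fun o : Option σ => (MvPowerSeries.X (some o) :
        MvPowerSeries (Option (Option σ)) A))
        ((MvPowerSeries.optionEquivLeft σ A).symm (delta (i + 2) g)) with hq0
  have htay : tay g = PowerSeries.C (PowerSeries.coeff 0 (tay g)) + PowerSeries.X *
      (PowerSeries.C (PowerSeries.coeff 1 (tay g)) + PowerSeries.X *
        (PowerSeries.C (MvPowerSeries.X none ^ 2) * q0)) := by
    ext1 i
    match i with
    | 0 => simp
    | 1 =>
      rw [map_add, PowerSeries.coeff_succ_X_mul, map_add]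
      simp [PowerSeries.coeff_C]
    | i + 2 =>
      rw [map_add, PowerSeries.coeff_succ_X_mul, map_add, PowerSeries.coeff_succ_X_mul,
        PowerSeries.coeff_C_mul, hq0, PowerSeries.coeff_mk, coeff_tay, PowerSeries.coeff_C,
        PowerSeries.coeff_C, if_neg (by omega), if_neg (by omega), zero_add, zero_add, ← mul_assoc,
        ← pow_add, add_comm 2 i]
  -- the fixed point equation `W = - a - b W ^ 2 q0 (W)`
  let ren : Option (Option (Option σ)) → Option (Option (Option (Option (Option σ)))) :=
    fun o => o.elim none fun o' => some (some (some o'))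
  obtain ⟨Wf, hWf0, hWf⟩ := exists_fixedPoint
    (σ := Option (Option (Option (Option σ))))
    (-MvPowerSeries.X (some none) - MvPowerSeries.X none * (MvPowerSeries.X none *
      (MvPowerSeries.X (some (some none)) *
      MvPowerSeries.subst (fun o => (MvPowerSeries.X (ren o) :
        MvPowerSeries (Option (Option (Option (Option (Option σ))))) A))
        ((MvPowerSeries.optionEquivLeft _ A).symm q0)))) (by simp) (by
      rw [map_sub, map_neg, coeff_single_X_ne (by simp), neg_zero, zero_sub, neg_eq_zero]
      exact coeff_single_mul (by simp) (by simp) _)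
  set x : Option (Option (Option (Option σ))) → F :=
    fun o => o.elim a fun o => o.elim b lam2 with hx
  have hxsm : ∀ o, S.V (x o) < 1 := elim_small (elim_small hsm2 hb1) ha1
  have hxE : ∀ o, x o ∈ E := by
    rintro (- | - | o)
    exacts [haE, hbE, hlam2E o]
  set W := S.ev x Wf with hW
  have hW1 : S.V W < 1 := S.ev_lt _ hxsm _ hWf0
  refine ⟨W, hE.ev_mem _ hxE hxsm _, hW1, ?_⟩
  have heq : W = - a - W * (W * (b * S.ev2 q0 lam2 W)) := by
    conv_lhs => rw [hW, ← hWf]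
    rw [S.ev_subst _ hxsm _ (fun o => by cases o; exacts [hWf0, MvPowerSeries.constantCoeff_X _])]
    have h1 : (fun o : Option (Option (Option (Option (Option σ)))) =>
        S.ev x (o.elim Wf MvPowerSeries.X)) = fun o => o.elim W x := by
      funext o
      cases o with
      | none => rfl
      | some o => exact S.ev_X _ hxsm o
    rw [h1]
    have hsm := elim_small hxsm hW1
    rw [S.ev_sub _ hsm, S.ev_neg _ hsm, S.ev_mul _ hsm, S.ev_mul _ hsm, S.ev_mul _ hsm,
      S.ev_X _ hsm, S.ev_X _ hsm, S.ev_X _ hsm, S.ev_rename _ hsm]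
    have h2 : (fun j : Option (Option (Option σ)) => (ren j).elim W x) =
        fun o => o.elim W lam2 := by
      funext o; cases o <;> rfl
    rw [h2]
    rfl
  rw [← ev2_tay hlam hμ hB hW1, htay, ev2_add hsm2 hW1, ev2_C hsm2 hW1, ev2_mul hsm2 hW1,
    ev2_X hsm2 hW1, ev2_add hsm2 hW1, ev2_C hsm2 hW1, ev2_mul hsm2 hW1, ev2_X hsm2 hW1,
    ev2_mul hsm2 hW1, ev2_C hsm2 hW1, ev_coeff_tay hlam hμ hB, ev_coeff_tay hlam hμ hB,
    S.ev_pow _ hsm2, S.ev_X _ hsm2]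
  change B ^ 0 * k0 + W * (B ^ 1 * S.ev2 (delta 1 g) lam μ + W * (B ^ 2 * S.ev2 q0 lam2 W)) = 0
  rw [pow_one, ← hk, pow_zero, one_mul]
  have e1 : k0 = a * k := by rw [ha]; field_simp
  have e2 : B ^ 2 = b * k := by rw [hb]; field_simp
  rw [e1, e2]
  linear_combination k * heq

end hensel

end AnStr

variable {A : Type} [CommRing A] {F : Type} [Field F] {Γ₀ : Type}
  [LinearOrderedCommGroupWithZero Γ₀]

/-- Renaming of variables, as a ring homomorphism. -/
noncomputable def renHom (A : Type) [CommRing A] {σ τ : Type} [Finite σ] [Finite τ] (φ : σ → τ) :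
    MvPowerSeries σ A →+* MvPowerSeries τ A :=
  (MvPowerSeries.substAlgHom (R := A) (S := A) (hs (a := fun j => (MvPowerSeries.X (φ j) :
    MvPowerSeries τ A)) (fun _ => MvPowerSeries.constantCoeff_X _))).toRingHom

theorem renHom_apply {σ τ : Type} [Finite σ] [Finite τ] (φ : σ → τ) (c : MvPowerSeries σ A) :
    renHom A φ c = MvPowerSeries.subst (fun j => (MvPowerSeries.X (φ j) :
      MvPowerSeries τ A)) c := by
  rw [← MvPowerSeries.coe_substAlgHom (hs (fun _ => MvPowerSeries.constantCoeff_X _))]; rfl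

/-- Renaming the parameters of a power series in one distinguished variable. -/
theorem oe_symm_map_rename {σ τ : Type} [Finite σ] [Finite τ] (φ : σ → τ)
    (f : PowerSeries (MvPowerSeries σ A)) :
    (MvPowerSeries.optionEquivLeft τ A).symm (PowerSeries.map (renHom A φ) f) =
      MvPowerSeries.subst (fun o : Option σ =>
        (MvPowerSeries.X (o.map φ) : MvPowerSeries (Option τ) A))
        ((MvPowerSeries.optionEquivLeft σ A).symm f) := by
  classical
  have cc1 : ∀ j : σ, (MvPowerSeries.X (φ j) : MvPowerSeries τ A).constantCoeff = 0 :=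
    fun _ => MvPowerSeries.constantCoeff_X _
  have cc2 : ∀ o : Option σ,
      (MvPowerSeries.X (o.map φ) : MvPowerSeries (Option τ) A).constantCoeff = 0 :=
    fun _ => MvPowerSeries.constantCoeff_X _
  set R := renHom A φ with hR
  have hRa : ∀ c, R c = MvPowerSeries.subst (fun j => (MvPowerSeries.X (φ j) :
      MvPowerSeries τ A)) c := renHom_apply φ
  let Ψ : MvPowerSeries (Option σ) A →+* MvPowerSeries (Option τ) A :=
    ((MvPowerSeries.optionEquivLeft τ A).symm : _ →+* MvPowerSeries (Option τ) A).comp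
      ((PowerSeries.map R).comp (MvPowerSeries.optionEquivLeft σ A : _ →+* _))
  have hΨ : ∀ g, Ψ g = (MvPowerSeries.optionEquivLeft τ A).symm
      (PowerSeries.map R (MvPowerSeries.optionEquivLeft σ A g)) := fun g => rfl
  let Φ : MvPowerSeries (Option σ) A →+ MvPowerSeries (Option τ) A :=
    AddMonoidHom.mk' (fun g => Ψ g - MvPowerSeries.subst (fun o : Option σ =>
        (MvPowerSeries.X (o.map φ) : MvPowerSeries (Option τ) A)) g) fun a b => by
      rw [map_add, MvPowerSeries.subst_add (hs cc2)]; ring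
  have h := addHom_eq_zero Φ (fun g => ?_) (fun β r => ?_)
    ((MvPowerSeries.optionEquivLeft σ A).symm f)
  · have h' := sub_eq_zero.1 h
    rw [hΨ, AlgEquiv.apply_symm_apply] at h'
    exact h'
  · refine le_order_sub (MvPowerSeries.le_order fun d hd => ?_) (order_le_order_subst cc2 g)
    rw [hΨ, coeff_oe_symm, PowerSeries.coeff_map, hRa]
    refine MvPowerSeries.coeff_of_lt_order (lt_of_lt_of_le ?_ (order_le_order_subst cc1 _))
    have h3 := degree_optionElim (d none) d.some
    rw [optionElim_some'] at h3
    -- coefficients of `g` of degree at most `deg d` vanish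
    refine lt_of_lt_of_le (b := ((Finsupp.degree d.some + 1 : ℕ) : ℕ∞))
      (by exact_mod_cast Nat.lt_succ_self _) (MvPowerSeries.le_order fun e he => ?_)
    rw [MvPowerSeries.coeff_coeff_optionEquivLeft]
    refine MvPowerSeries.coeff_of_lt_order (lt_of_le_of_lt ?_ hd)
    rw [degree_optionElim, h3]
    have he' : Finsupp.degree e < Finsupp.degree d.some + 1 := by exact_mod_cast he
    exact_mod_cast by omega
  · change Ψ _ - _ = 0
    rw [sub_eq_zero, MvPowerSeries.subst_monomial (hs cc2), MvPowerSeries.monomial_eq', map_mul,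
      ← MvPowerSeries.c_eq_algebraMap]
    congr 1
    · rw [hΨ, AlgEquiv.symm_apply_eq, MvPowerSeries.optionEquivLeft_C,
        MvPowerSeries.optionEquivLeft_C, PowerSeries.map_C, hRa, MvPowerSeries.subst_C _]
    · rw [Finsupp.prod, Finsupp.prod, map_prod]
      refine Finset.prod_congr rfl fun o _ => ?_
      rw [map_pow]
      congr 1
      rw [hΨ, AlgEquiv.symm_apply_eq]
      cases o with
      | none =>
        rw [MvPowerSeries.optionEquivLeft_X_none, PowerSeries.map_X, Option.map_none,
          MvPowerSeries.optionEquivLeft_X_none]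
      | some j =>
        rw [MvPowerSeries.optionEquivLeft_X_some, PowerSeries.map_C, hRa,
          MvPowerSeries.subst_X (hs cc1), Option.map_some, MvPowerSeries.optionEquivLeft_X_some]

namespace AnStr

variable {S : AnStr A F Γ₀} {σ τ : Type} [Finite σ] [Finite τ]

variable [IsNoetherianRing A]

/-- Rescaling a power series so that its dominating coefficient becomes `ϖ`. -/
theorem normalize {E : Subfield F} (hE : S.Closed E) {lam : σ → F} (hlamE : ∀ j, lam j ∈ E)
    (hlam : ∀ j, S.V (lam j) < 1) (f : PowerSeries (MvPowerSeries σ A)) (N : ℕ)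
    (hN : S.ev lam (PowerSeries.coeff N f) ≠ 0)
    (h : ∀ l, S.V (S.ev lam (PowerSeries.coeff l f)) ≤ S.V (S.ev lam (PowerSeries.coeff N f))) :
    ∃ (σ' : Type) (_ : Finite σ') (lam' : σ' → F) (f' : PowerSeries (MvPowerSeries σ' A)),
      (∀ j, lam' j ∈ E) ∧ (∀ j, S.V (lam' j) < 1) ∧
      (∀ l, S.ev lam' (PowerSeries.coeff l f') = S.ϖ / S.ev lam (PowerSeries.coeff N f) *
        S.ev lam (PowerSeries.coeff l f)) ∧
      ∀ t, S.V t < 1 → S.ev2 f' lam' t = S.ϖ / S.ev lam (PowerSeries.coeff N f) *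
        S.ev2 f lam t := by
  obtain ⟨D, g, hf, -⟩ := powerSeries_generators f
  set c : ℕ → F := fun l => S.ev lam (PowerSeries.coeff l f) with hc
  set R : MvPowerSeries σ A →+* MvPowerSeries (σ ⊕ Fin D) A := renHom A Sum.inl with hR
  have hRa : ∀ c, R c = MvPowerSeries.subst (fun j => (MvPowerSeries.X (Sum.inl j) :
      MvPowerSeries (σ ⊕ Fin D) A)) c := renHom_apply _
  set lam' : σ ⊕ Fin D → F := Sum.elim lam fun k => S.ϖ / c N * c k with hlam'
  have hb : ∀ k, S.V (S.ϖ / c N * c k) < 1 := fun k => by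
    rw [map_mul, map_div₀, div_mul_eq_mul_div, mul_div_assoc]
    refine lt_of_le_of_lt (mul_le_of_le_one_right' ?_) S.ϖ_lt
    exact div_le_one_of_le₀ (h k) zero_le
  have hlam'1 : ∀ j, S.V (lam' j) < 1 := by
    rintro (j | k)
    exacts [hlam j, hb k]
  have hcE : ∀ l, c l ∈ E := fun l => hE.ev_mem _ hlamE hlam _
  have hRev : ∀ c, S.ev lam' (R c) = S.ev lam c := fun c => by
    rw [hRa, S.ev_rename _ hlam'1]; rfl
  have hRev2 : ∀ t, S.V t < 1 → ∀ g, S.ev2 (PowerSeries.map R g) lam' t = S.ev2 g lam t := by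
    intro t ht g
    rw [ev2, oe_symm_map_rename, S.ev_rename _ (elim_small hlam'1 ht), ev2]
    congr 1
    funext o
    cases o <;> rfl
  refine ⟨σ ⊕ Fin D, inferInstance, lam', ∑ k : Fin D, PowerSeries.C (MvPowerSeries.X (Sum.inr k)) *
    PowerSeries.map R (g k), ?_, hlam'1, fun l => ?_, fun t ht => ?_⟩
  · rintro (j | k)
    exacts [hlamE j, E.mul_mem (E.div_mem hE.ϖ_mem (hcE N)) (hcE k)]
  · change _ = S.ϖ / c N * _
    conv_rhs => rw [hf]
    rw [map_sum, map_sum, S.ev_sum _ hlam'1, S.ev_sum _ hlam, Finset.mul_sum,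
      ← Fin.sum_univ_eq_sum_range (fun k => S.ϖ / c N * S.ev lam (PowerSeries.coeff l
        (PowerSeries.C (PowerSeries.coeff k f) * g k)))]
    refine Finset.sum_congr rfl fun k _ => ?_
    rw [PowerSeries.coeff_C_mul, PowerSeries.coeff_C_mul, S.ev_mul _ hlam'1, S.ev_mul _ hlam,
      S.ev_X _ hlam'1, PowerSeries.coeff_map, hRev]
    change S.ϖ / c N * c k * _ = S.ϖ / c N * (c k * _)
    ring
  · change _ = S.ϖ / c N * _
    conv_rhs => rw [hf]
    rw [ev2_sum hlam'1 ht, ev2_sum hlam ht, Finset.mul_sum,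
      ← Fin.sum_univ_eq_sum_range (fun k => S.ϖ / c N * S.ev2
        (PowerSeries.C (PowerSeries.coeff k f) * g k) lam t)]
    refine Finset.sum_congr rfl fun k _ => ?_
    rw [ev2_mul hlam'1 ht, ev2_mul hlam ht, ev2_C hlam'1 ht, ev2_C hlam ht, S.ev_X _ hlam'1,
      hRev2 t ht]
    change S.ϖ / c N * c k * _ = S.ϖ / c N * (c k * _)
    ring

end AnStr

variable {A : Type} [CommRing A] {F : Type} [Field F] {Γ₀ : Type}
  [LinearOrderedCommGroupWithZero Γ₀]

theorem delta_zero {B : Type*} [CommRing B] (f : PowerSeries B) : delta 0 f = f := by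
  ext l; simp [coeff_delta]

namespace AnStr

variable {S : AnStr A F Γ₀} {σ τ : Type} [Finite σ] [Finite τ]

variable [IsNoetherianRing A] {E : Subfield F} {x : F}

/-- The coefficient of index `N` dominates all the others. -/
def Dom (S : AnStr A F Γ₀) {σ : Type} [Finite σ] (f : PowerSeries (MvPowerSeries σ A))
    (lam : σ → F) (N : ℕ) : Prop :=
  S.ev lam (PowerSeries.coeff N f) ≠ 0 ∧
    ∀ l, S.V (S.ev lam (PowerSeries.coeff l f)) ≤ S.V (S.ev lam (PowerSeries.coeff N f))

theorem index_drop {lam : σ → F} (hlam : ∀ j, S.V (lam j) < 1)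
    (f : PowerSeries (MvPowerSeries σ A)) (N : ℕ) (hN : S.Dom f lam (N + 1)) {μ ζ : F}
    (hμ : S.V μ < 1) (hζ : S.V ζ < 1) (hζ0 : ζ ≠ 0)
    (h : S.V (ζ * S.ev lam (PowerSeries.coeff (N + 1) f)) ≤ S.V (S.ev2 (delta N f) lam μ)) :
    ∃ N' < N + 1, S.Dom (tay f) (fun o : Option (Option σ) => o.elim ζ fun o' => o'.elim μ lam)
      N' := by
  set c : ℕ → F := fun j => ζ ^ j * S.ev2 (delta j f) lam μ with hc
  obtain ⟨N', hN', hmax⟩ := Finset.exists_max_image (Finset.range (N + 1)) (fun j => S.V (c j))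
    ⟨0, by simp⟩
  have hNN : S.V (c N) ≤ S.V (c N') := hmax N (by simp)
  have hpos : 0 < S.V (c N) := by
    rw [hc, map_mul]
    refine mul_pos (V_pos (pow_ne_zero _ hζ0)) (lt_of_lt_of_le ?_ h)
    exact V_pos (mul_ne_zero hζ0 hN.1)
  refine ⟨N', Finset.mem_range.1 hN', ?_, fun l => ?_⟩
  · rw [ev_coeff_tay hlam hμ hζ]
    exact (Valuation.ne_zero_iff _).1 (ne_of_gt (hpos.trans_le hNN))
  · rw [ev_coeff_tay hlam hμ hζ, ev_coeff_tay hlam hμ hζ]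
    change S.V (c l) ≤ S.V (c N')
    rcases lt_or_ge l (N + 1) with hl | hl
    · exact hmax l (Finset.mem_range.2 hl)
    · refine le_trans ?_ hNN
      obtain ⟨i, rfl⟩ := Nat.exists_eq_add_of_le hl
      have h1 := V_delta_le hlam hμ f _ hN.2 (N + 1 + i)
      calc S.V (c (N + 1 + i)) = S.V (ζ ^ i) * (S.V (ζ ^ N) * (S.V ζ *
            S.V (S.ev2 (delta (N + 1 + i) f) lam μ))) := by
            rw [hc, ← map_mul, ← map_mul, ← map_mul]; ring_nf
        _ ≤ 1 * (S.V (ζ ^ N) * S.V (S.ev2 (delta N f) lam μ)) := by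
            refine mul_le_mul' (by rw [map_pow]; exact pow_le_one' hζ.le _)
              (mul_le_mul' le_rfl (le_trans ?_ h))
            rw [map_mul]
            exact mul_le_mul' le_rfl h1
        _ = S.V (c N) := by rw [one_mul, hc, ← map_mul]

theorem exists_refine (hE : S.Closed E) (hF : S.Full E) (hx : x ∉ E) {lam : σ → F}
    (hlamE : ∀ j, lam j ∈ E) (hlam : ∀ j, S.V (lam j) < 1)
    (f : PowerSeries (MvPowerSeries σ A)) (N : ℕ) (hN : S.Dom f lam (N + 1))
    (hϖ : S.ev lam (PowerSeries.coeff (N + 1) f) = S.ϖ) {t : F} (ht : t ∈ S.Aff E x) :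
    ∃ μ ∈ E, S.V μ < 1 ∧ ∃ ζ ∈ E, ζ ≠ 0 ∧ S.V ζ < 1 ∧ ∃ t' ∈ S.Aff E x, t = μ + ζ * t' ∧
      S.V (ζ * S.ϖ) ≤ S.V (S.ev2 (delta N f) lam μ) := by
  have hM0 : ((N + 1 : ℕ) : F) ≠ 0 := natCast_ne S (Nat.succ_ne_zero N)
  obtain ⟨n, hn⟩ := S.natCast (N + 1) (Nat.succ_ne_zero N)
  have hM1 := S.V_natCast_le (N + 1)
  have hME : ((N + 1 : ℕ) : F) ∈ E := natCast_mem E _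
  set M : F := ((N + 1 : ℕ) : F) with hM
  have hϖE := hE.ϖ_mem
  have hϖ0 := S.ϖ_ne
  have hϖ1 := S.ϖ_lt
  have hvM : 0 < S.V M := V_pos hM0
  have hvϖ : 0 < S.V S.ϖ := S.Vϖ_pos
  set ζ0 : F := S.ϖ ^ (2 * n + 2) with hζ0
  have hζ0E : ζ0 ∈ E := E.pow_mem hϖE _
  have hζ0v : S.V ζ0 ≤ S.V M * (S.V M * (S.V S.ϖ * S.V S.ϖ)) := by
    have : ζ0 = S.ϖ ^ n * (S.ϖ ^ n * (S.ϖ * S.ϖ)) := by rw [hζ0]; ring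
    rw [this, map_mul, map_mul, map_mul S.V S.ϖ]
    exact mul_le_mul' hn (mul_le_mul' hn le_rfl)
  have hζ01 : S.V ζ0 < 1 := by
    rw [hζ0, map_pow]; exact pow_lt_one₀ zero_le hϖ1 (by omega)
  obtain ⟨μ0, hμ0E, hμ01, t0, ht0, htt0⟩ := refine_ϖ hE hF hx ht hζ0E (pow_ne_zero _ hϖ0)
    (2 * n + 2) le_rfl
  by_cases hcase : S.V (ζ0 * S.ϖ) ≤ S.V (S.ev2 (delta N f) lam μ0)
  · exact ⟨μ0, hμ0E, hμ01, ζ0, hζ0E, pow_ne_zero _ hϖ0, hζ01, t0, ht0, htt0, hcase⟩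
  rw [not_le] at hcase
  set g := delta N f with hg
  -- the derivative of `g`
  have hg1 : ∀ u, S.V u < 1 → S.V (S.ev2 (delta 1 g) lam u) = S.V M * S.V S.ϖ ∧
      S.ev2 (delta 1 g) lam u ≠ 0 := by
    intro u hu
    have h1 : S.ev2 (delta 1 g) lam u = M * S.ev2 (delta (N + 1) f) lam u := by
      rw [hg, delta_delta, ev2_mul hlam hu, add_comm 1 N, show (N + 1).choose N = N + 1 from
        Nat.choose_succ_self_right N]
      congr 1
      exact map_natCast (ev2Hom hlam hu) (N + 1)
    have h2 : S.V (S.ev2 (delta 1 g) lam u) = S.V M * S.V S.ϖ := by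
      rw [h1, map_mul, V_delta_eq hlam hu f (N + 1) hN.1 hN.2, hϖ]
    refine ⟨h2, (Valuation.ne_zero_iff S.V).1 ?_⟩
    rw [h2]; exact (mul_pos hvM hvϖ).ne'
  have hgle : ∀ l, S.V (S.ev lam (PowerSeries.coeff l g)) ≤ S.V S.ϖ := fun l => by
    rw [hg, ev_coeff_delta hlam, ← hϖ]
    exact V_natCast_mul_le _ (hN.2 _)
  set B : F := M * (S.ϖ * S.ϖ) with hB
  have hBE : B ∈ E := E.mul_mem hME (E.mul_mem hϖE hϖE)
  have hBv : S.V B = S.V M * (S.V S.ϖ * S.V S.ϖ) := by rw [hB, map_mul, map_mul]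
  have hB1 : S.V B < 1 := by
    rw [hBv]
    exact lt_of_le_of_lt (mul_le_of_le_one_left' hM1)
      (lt_of_le_of_lt (mul_le_of_le_one_left' hϖ1.le) hϖ1)
  obtain ⟨hd1, hd0⟩ := hg1 μ0 hμ01
  have hkv : S.V (B * S.ev2 (delta 1 g) lam μ0) =
      S.V M * (S.V M * (S.V S.ϖ * S.V S.ϖ)) * S.V S.ϖ := by
    rw [map_mul, hBv, hd1]; ac_rfl
  have hB0 : B ≠ 0 := mul_ne_zero hM0 (mul_ne_zero hϖ0 hϖ0)
  obtain ⟨W, hWE, hW1, hW⟩ := hensel hE hlamE hlam hμ0E hμ01 hBE hB1 g _ rfl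
    (mul_ne_zero hB0 hd0)
    (by
      rw [delta_zero]
      refine lt_of_lt_of_le hcase ?_
      rw [hkv, map_mul]
      exact mul_le_mul' hζ0v le_rfl)
    (by
      rw [hkv, pow_two, map_mul, hBv]
      calc S.V M * (S.V S.ϖ * S.V S.ϖ) * (S.V M * (S.V S.ϖ * S.V S.ϖ)) =
          S.V S.ϖ * (S.V M * (S.V M * (S.V S.ϖ * S.V S.ϖ)) * S.V S.ϖ) := by ac_rfl
        _ < _ := mul_lt_of_lt_one_left (by positivity) hϖ1)
  set m := μ0 + B * W with hm
  have hmE : m ∈ E := E.add_mem hμ0E (E.mul_mem hBE hWE)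
  have hm1 : S.V m < 1 := add_mul_small hμ01 hB1 hW1
  have hρ0 : t - m ≠ 0 := fun h => Aff_not_mem hx ht (by rwa [sub_eq_zero.1 h])
  have hρB : S.V (t - m) < S.V B := by
    have : t - m = ζ0 * t0 - B * W := by rw [htt0, hm]; ring
    rw [this]
    refine Valuation.map_sub_lt _ ?_ ?_
    · rw [map_mul]
      refine lt_of_lt_of_le (mul_lt_of_lt_one_right (V_pos (pow_ne_zero _ hϖ0)) ht0.2) ?_
      refine hζ0v.trans ?_
      rw [hBv]
      exact mul_le_of_le_one_left' hM1
    · rw [map_mul]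
      exact mul_lt_of_lt_one_right (V_pos hB0) hW1
  set ρ := t - m with hρ
  obtain ⟨r0, hr0E, hr00, hr0v⟩ := hF ρ hρ0
  set ζ := M * r0 with hζ
  have hζv : S.V ζ = S.V M * S.V ρ := by rw [hζ, map_mul, hr0v]
  have hζne : ζ ≠ 0 := mul_ne_zero hM0 hr00
  have hζle : S.V ζ ≤ S.V ρ := by rw [hζv]; exact mul_le_of_le_one_left' hM1
  obtain ⟨μ, hμE, hμ1, t', ht', htt'⟩ := refine_t hE hF hx ht hmE (hρB.trans hB1)
    (E.mul_mem hME hr0E) hζne n (by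
      rw [map_mul]
      change _ ≤ S.V ζ
      rw [hζv]
      exact mul_le_mul' hn le_rfl)
  refine ⟨μ, hμE, hμ1, ζ, E.mul_mem hME hr0E, hζne, hζle.trans_lt (hρB.trans hB1), t', ht', htt',
    le_of_eq ?_⟩
  -- `μ = m + ϖ u`
  set u := (μ - m) / S.ϖ with hu
  have hwv : S.V (μ - m) = S.V ρ := by
    have : μ - m = ρ - ζ * t' := by rw [hρ, htt']; ring
    rw [this]
    refine Valuation.map_sub_eq_of_lt_left _ ?_
    rw [map_mul]
    exact lt_of_lt_of_le (mul_lt_of_lt_one_right (V_pos hζne) ht'.2) hζle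
  have huv : S.V u * S.V S.ϖ = S.V ρ := by
    rw [← map_mul, hu, div_mul_cancel₀ _ hϖ0, hwv]
  have hu0 : 0 < S.V u := by
    rw [hu, map_div₀, hwv]
    exact div_pos (V_pos hρ0) hvϖ
  have hult : S.V u < S.V M * S.V S.ϖ := by
    have : S.V u * S.V S.ϖ < S.V M * S.V S.ϖ * S.V S.ϖ := by
      rw [huv, mul_assoc, ← hBv]; exact hρB
    exact lt_of_mul_lt_mul_right this zero_le
  have hu1 : S.V u < 1 := hult.trans_le (mul_le_one' hM1 hϖ1.le)
  have hmu : μ = m + S.ϖ * u := by rw [hu]; field_simp; ring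
  obtain ⟨r, hr, hrv⟩ := ev2_split2 (elim2_small hlam hm1 hϖ1) hu1 (tay g)
    (S.ϖ * (S.ϖ * S.ϖ)) (fun l => by
      rw [ev_coeff_tay hlam hm1 hϖ1]
      have := V_delta_le hlam hm1 g S.ϖ hgle (l + 2)
      rw [show S.ϖ ^ (l + 2) * S.ev2 (delta (l + 2) g) lam m = S.ϖ ^ l *
        (S.ϖ * (S.ϖ * S.ev2 (delta (l + 2) g) lam m)) by ring, map_mul, map_mul S.V S.ϖ,
        map_mul S.V S.ϖ, map_mul S.V S.ϖ, map_mul S.V S.ϖ, map_pow]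
      exact (mul_le_of_le_one_left' (pow_le_one' hϖ1.le _)).trans
        (mul_le_mul' le_rfl (mul_le_mul' le_rfl this)))
  rw [ev_coeff_tay hlam hm1 hϖ1, ev_coeff_tay hlam hm1 hϖ1, ev2_tay hlam hm1 hϖ1 hu1, ← hmu,
    delta_zero, hW, mul_zero, zero_add, pow_one] at hr
  have hc1v : S.V (S.ϖ * S.ev2 (delta 1 g) lam m * u) = S.V M * S.V ρ * S.V S.ϖ := by
    rw [map_mul, map_mul, (hg1 m hm1).1, ← huv]; ac_rfl
  rw [hr, Valuation.map_add_eq_of_lt_left, hc1v, map_mul, hζv]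
  rw [hc1v, map_mul, map_pow, ← huv]
  calc S.V u ^ 2 * S.V r ≤ S.V u ^ 2 * S.V (S.ϖ * (S.ϖ * S.ϖ)) := mul_le_mul' le_rfl hrv
    _ = (S.V u * (S.V S.ϖ * S.V S.ϖ)) * (S.V u * S.V S.ϖ) := by
        rw [map_mul, map_mul, pow_two]; ac_rfl
    _ < (S.V u * (S.V S.ϖ * S.V S.ϖ)) * S.V M := by
        refine mul_lt_mul_of_pos_left ?_ (by positivity)
        refine lt_of_le_of_lt (mul_le_of_le_one_right' hϖ1.le) (hult.trans_le ?_)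
        exact mul_le_of_le_one_right' hϖ1.le
    _ = _ := by ac_rfl

end AnStr

variable {A : Type} [CommRing A] {F : Type} [Field F] {Γ₀ : Type}
  [LinearOrderedCommGroupWithZero Γ₀]

namespace AnStr

variable {S : AnStr A F Γ₀} {σ τ : Type} [Finite σ] [Finite τ]

variable [IsNoetherianRing A] {E : Subfield F} {x : F}

theorem exists_Dom {lam : σ → F} (hlam : ∀ j, S.V (lam j) < 1)
    (f : PowerSeries (MvPowerSeries σ A))
    (h : ∃ l, S.ev lam (PowerSeries.coeff l f) ≠ 0) : ∃ N, S.Dom f lam N := by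
  obtain ⟨D, g, hf, -⟩ := powerSeries_generators f
  have h1 : ∃ k < D, S.ev lam (PowerSeries.coeff k f) ≠ 0 := by
    by_contra hne
    push Not at hne
    obtain ⟨l, hl⟩ := h
    exact hl (coeff_eq_zero_of_generators hlam f hf hne l)
  obtain ⟨k, hk, hk0⟩ := h1
  obtain ⟨N, -, hmax⟩ := Finset.exists_max_image (Finset.range D)
    (fun j => S.V (S.ev lam (PowerSeries.coeff j f))) ⟨k, by simpa using hk⟩
  refine ⟨N, fun h0 => hk0 ?_, fun l => ?_⟩
  · have := hmax k (by simpa using hk)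
    rw [h0, map_zero, le_zero_iff, Valuation.zero_iff] at this
    exact this
  · rw [hf, map_sum, S.ev_sum _ hlam, ← hf]
    refine Valuation.map_sum_le _ fun k hk => ?_
    rw [PowerSeries.coeff_C_mul, S.ev_mul _ hlam, map_mul]
    exact (mul_le_of_le_one_right' (S.ev_le _ hlam _)).trans (hmax k hk)

/-- If the constant coefficient dominates, it is the leading term. -/
theorem nf_zero (hE : S.Closed E) (hF : S.Full E) (hx : x ∉ E) {lam : σ → F}
    (hlamE : ∀ j, lam j ∈ E) (hlam : ∀ j, S.V (lam j) < 1)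
    (f : PowerSeries (MvPowerSeries σ A)) (hN : S.Dom f lam 0) {t : F} (ht : t ∈ S.Aff E x) :
    ∃ c ∈ E, c ≠ 0 ∧ ∃ t' ∈ S.Aff E x, ∃ a ∈ S.An0 (S.mT E t'),
      S.ev2 f lam t = c * (1 + a) := by
  classical
  obtain ⟨μ, hμE, hμ1, t', ht', htt'⟩ := refine_ϖ hE hF hx ht hE.ϖ_mem S.ϖ_ne 1 (by simp)
  obtain ⟨D, g, hf, hg⟩ := powerSeries_generators f
  have hcE : ∀ k, S.ev lam (PowerSeries.coeff k f) ∈ E := fun k => hE.ev_mem _ hlamE hlam _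
  set c : ℕ → F := fun k => S.ev lam (PowerSeries.coeff k f) with hc
  have hc0 : c 0 ≠ 0 := hN.1
  have hD : 0 < D := by
    by_contra h
    obtain rfl : D = 0 := by omega
    apply hc0
    rw [Finset.range_zero, Finset.sum_empty] at hf
    change S.ev lam (PowerSeries.coeff 0 f) = 0
    rw [hf, map_zero, S.ev_zero _ hlam]
  choose h hh _ using fun k => ps_split1 (g k)
  have hα : ∀ k, S.V (c k / c 0) ≤ 1 := fun k => by
    rw [map_div₀]; exact div_le_one_of_le₀ (hN.2 k) zero_le
  have htm : ∀ o : Option σ, o.elim t lam ∈ S.An0 (S.mT E t') := by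
    rintro (- | j)
    · change t ∈ _
      rw [htt']; exact affine_mem ht'.2 hμE hμ1 hE.ϖ_mem S.ϖ_lt
    · exact An0_self mT_small ⟨Or.inl (hlamE j), hlam j⟩
  refine ⟨c 0, hcE 0, hc0, t', ht', ∑ k ∈ Finset.range D, c k / c 0 * t * S.ev2 (h k) lam t,
    An0_sum mT_small _ fun k _ => An0_mul_ev mT_small ?_ htm _, ?_⟩
  · have : c k / c 0 * t = c k / c 0 * μ + (c k / c 0 * S.ϖ) * t' := by rw [htt']; ring
    rw [this]
    have hE' := E.div_mem (hcE k) (hcE 0)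
    refine affine_mem ht'.2 (E.mul_mem hE' hμE) ?_ (E.mul_mem hE' hE.ϖ_mem) ?_
    · rw [map_mul]; exact lt_of_le_of_lt (mul_le_of_le_one_left' (hα k)) hμ1
    · rw [map_mul]; exact lt_of_le_of_lt (mul_le_of_le_one_left' (hα k)) S.ϖ_lt
  · have h1 : ∀ k ∈ Finset.range D, S.ev2 (PowerSeries.C (PowerSeries.coeff k f) * g k) lam t =
        (if k = 0 then c 0 else 0) + c 0 * (c k / c 0 * t * S.ev2 (h k) lam t) := by
      intro k hk
      rw [ev2_mul hlam ht.2, ev2_C hlam ht.2, hh k, ev2_add hlam ht.2, ev2_mul hlam ht.2,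
        ev2_X hlam ht.2, ev2_C hlam ht.2, hg k (Finset.mem_range.1 hk) 0 hD]
      change c k * _ = _
      by_cases h0 : k = 0
      · rw [if_pos h0.symm, if_pos h0, S.ev_one _ hlam, h0]
        field_simp
      · rw [if_neg (Ne.symm h0), if_neg h0, S.ev_zero _ hlam]
        field_simp
        ring
    conv_lhs => rw [hf]
    rw [ev2_sum hlam ht.2, Finset.sum_congr rfl h1, Finset.sum_add_distrib, ← Finset.mul_sum,
      Finset.sum_ite_eq' (Finset.range D) 0, if_pos (Finset.mem_range.2 hD)]
    ring

/-- **Normal form**: a nonzero value `f (t)` is a constant from `E` times a one-unit, after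
passing to a suitable affine image of `t`. -/
theorem nf_ind (hE : S.Closed E) (hF : S.Full E) (hx : x ∉ E) (N : ℕ) :
    ∀ {σ : Type} [Finite σ] {lam : σ → F}, (∀ j, lam j ∈ E) → (∀ j, S.V (lam j) < 1) →
    ∀ f : PowerSeries (MvPowerSeries σ A), S.Dom f lam N → ∀ {t : F}, t ∈ S.Aff E x →
    ∃ c ∈ E, c ≠ 0 ∧ ∃ t' ∈ S.Aff E x, ∃ a ∈ S.An0 (S.mT E t'),
      S.ev2 f lam t = c * (1 + a) := by
  induction N using Nat.strong_induction_on with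
  | _ N ih =>
  intro σ _ lam hlamE hlam f hN t ht
  cases N with
  | zero => exact nf_zero hE hF hx hlamE hlam f hN ht
  | succ N =>
    obtain ⟨σ', _, lam', f', hlamE', hlam', hco, hev⟩ :=
      normalize hE hlamE hlam f (N + 1) hN.1 hN.2
    set cN := S.ev lam (PowerSeries.coeff (N + 1) f) with hcN
    have hcN0 : cN ≠ 0 := hN.1
    have hcNE : cN ∈ E := hE.ev_mem _ hlamE hlam _
    have hϖ' : S.ev lam' (PowerSeries.coeff (N + 1) f') = S.ϖ := by
      rw [hco, div_mul_cancel₀ _ hcN0]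
    have hN' : S.Dom f' lam' (N + 1) := by
      refine ⟨by rw [hϖ']; exact S.ϖ_ne, fun l => ?_⟩
      rw [hco, hco, map_mul, map_mul]
      exact mul_le_mul' le_rfl (hN.2 l)
    obtain ⟨μ, hμE, hμ1, ζ, hζE, hζ0, hζ1, t', ht', htt', hle⟩ :=
      exists_refine hE hF hx hlamE' hlam' f' N hN' hϖ' ht
    obtain ⟨N', hNN', hdom⟩ := index_drop hlam' f' N hN' hμ1 hζ1 hζ0 (by rw [hϖ']; exact hle)
    obtain ⟨c, hcE, hc0, t'', ht'', a, ha, h⟩ := ih N' hNN' (lam := fun o : Option (Option σ') =>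
      o.elim ζ fun o' => o'.elim μ lam') (by rintro (- | - | j); exacts [hζE, hμE, hlamE' j])
      (elim2_small hlam' hμ1 hζ1) _ hdom ht'
    rw [ev2_tay hlam' hμ1 hζ1 ht'.2, ← htt', hev t ht.2] at h
    refine ⟨cN / S.ϖ * c, E.mul_mem (E.div_mem hcNE hE.ϖ_mem) hcE,
      mul_ne_zero (div_ne_zero hcN0 S.ϖ_ne) hc0, t'', ht'', a, ha, ?_⟩
    rw [mul_assoc, ← h]
    have := S.ϖ_ne
    field_simp

/-- Adjoining `x` to `E`. -/
theorem adjoin_leading (hE : S.Closed E) (hF : S.Full E) (hx : x ∉ E) :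
    Leading S E {c | c ∈ E ∧ c ≠ 0} (S.AffA E x) where
  closed := hE
  sub := fun y hy hy0 => ⟨hy, hy0⟩
  ne := fun c hc => hc.2
  mul := fun c hc c' hc' => ⟨E.mul_mem hc.1 hc'.1, mul_ne_zero hc.2 hc'.2⟩
  inv := fun c hc => ⟨E.inv_mem hc.1, inv_ne_zero hc.2⟩
  small := by
    rintro a ⟨t, ht, ha⟩
    exact An0_small mT_small ha
  ev := by
    intro σ _ y hy f hf
    obtain ⟨t, ht, hyt⟩ := AffA_common hE hF hx hy
    exact ⟨t, ht, An0_ev mT_small hyt f hf⟩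
  C_sub := by
    rintro c ⟨hc, -⟩ hc1
    obtain ⟨t, ht⟩ := Aff_nonempty hE hF hx
    exact ⟨t, ht, An0_self mT_small ⟨Or.inl hc, hc1⟩⟩
  nf := by
    rintro y ⟨t, ht, hy⟩
    obtain ⟨σ, _, lam, f, hlamE, hlam, -, hyf⟩ := B_repr (ι := Unit) ht.2 (fun _ => hy)
    rw [hyf ()]
    by_cases h : ∃ l, S.ev lam (PowerSeries.coeff l (f ())) ≠ 0
    · right
      obtain ⟨N, hN⟩ := exists_Dom hlam _ h
      obtain ⟨c, hc, hc0, t', ht', a, ha, h⟩ := nf_ind hE hF hx N hlamE hlam _ hN ht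
      exact ⟨c, ⟨hc, hc0⟩, a, ⟨t', ht', ha⟩, h⟩
    · left
      push Not at h
      exact ev2_eq_zero_of_coeff hlam ht.2 _ h

theorem adjoin_full (hE : S.Closed E) (hF : S.Full E) (hx : x ∉ E) :
    S.Full (adjoin_leading hE hF hx).toSubfield := fun y hy => by
  obtain ⟨e, he, he0, hv⟩ := hF y hy
  exact ⟨e, (adjoin_leading hE hF hx).E_le he, he0, hv⟩

theorem adjoin_mem (hE : S.Closed E) (hF : S.Full E) (hx : x ∉ E) :
    x ∈ (adjoin_leading hE hF hx).toSubfield := by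
  obtain ⟨t, ht⟩ := Aff_nonempty hE hF hx
  have hL := adjoin_leading hE hF hx
  have htm : t ∈ hL.toSubfield := hL.A0_sub ⟨t, ht, An0_self mT_small ⟨Or.inr rfl, ht.2⟩⟩
  obtain ⟨⟨e, he, r, hr, hr0, h⟩, -⟩ := ht
  have : x = t * r + e := by rw [h]; field_simp; ring
  have hmem := Subfield.add_mem _ (Subfield.mul_mem _ htm (hL.E_le hr)) (hL.E_le he)
  rwa [← this] at hmem

/-! ### Isolated solutions lie in every closed subfield with the full value group -/

/-- If the coordinates of an isolated solution lie in the closed subfield obtained by adjoining one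
element `x` to `E`, then they lie in `E`: they are power series over `E` in one parameter `t`, and
varying `t` gives further solutions unless these series are locally constant. -/
theorem isolated_step (hE : S.Closed E) (hF : S.Full E) (hx : x ∉ E) {s ρ κ : Type} [Finite s]
    [Finite ρ] (α : ρ → F) (hαE : ∀ a, α a ∈ E) (hα : ∀ a, S.V (α a) < 1)
    (G : κ → MvPowerSeries (ρ ⊕ s) A) (y : s → F) (hy : ∀ l, S.V (y l) < 1)
    (hG : ∀ i, S.ev (Sum.elim α y) (G i) = 0) (ε : F) (hε : ε ≠ 0)
    (hiso : ∀ y' : s → F, (∀ l, S.V (y' l) < 1) → (∀ i, S.ev (Sum.elim α y') (G i) = 0) →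
      (∀ l, S.V (y' l - y l) < S.V ε) → y' = y)
    (hyE : ∀ l, y l ∈ (adjoin_leading hE hF hx).toSubfield) (l : s) : y l ∈ E := by
  have hL := adjoin_leading hE hF hx
  obtain ⟨t, ht, hyt⟩ := AffA_common hE hF hx (fun l => hL.small_mem (hyE l) (hy l))
  obtain ⟨σ, _, lam, f, hlamE, hlam, hfc, hyf⟩ := B_repr ht.2 hyt
  -- the relations as power series in `t`
  let h : ρ ⊕ s → MvPowerSeries (Option (σ ⊕ ρ)) A := Sum.elim
    (fun a => MvPowerSeries.X (some (Sum.inr a)))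
    (fun l => MvPowerSeries.subst (fun o : Option σ => (MvPowerSeries.X (o.map Sum.inl) :
      MvPowerSeries (Option (σ ⊕ ρ)) A)) ((MvPowerSeries.optionEquivLeft σ A).symm (f l)))
  have hh : ∀ b, (h b).constantCoeff = 0 := by
    rintro (a | l)
    · exact MvPowerSeries.constantCoeff_X _
    · exact cc_subst (fun _ => MvPowerSeries.constantCoeff_X _) (hfc l)
  set lam' : σ ⊕ ρ → F := Sum.elim lam α with hlam'
  have hlam'1 : ∀ j, S.V (lam' j) < 1 := by rintro (j | a); exacts [hlam j, hα a]
  have hlam'E : ∀ j, lam' j ∈ E := by rintro (j | a); exacts [hlamE j, hαE a]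
  let H : κ → PowerSeries (MvPowerSeries (σ ⊕ ρ) A) := fun i =>
    MvPowerSeries.optionEquivLeft _ A (MvPowerSeries.subst h (G i))
  have hH : ∀ i t, S.V t < 1 → S.ev2 (H i) lam' t =
      S.ev (Sum.elim α fun l => S.ev2 (f l) lam t) (G i) := by
    intro i t ht
    have hsm := elim_small hlam'1 ht
    rw [ev2, AlgEquiv.symm_apply_apply, S.ev_subst _ hsm h hh]
    congr 1
    funext b
    rcases b with a | l
    · exact S.ev_X _ hsm _
    · change S.ev _ (MvPowerSeries.subst _ _) = _
      rw [S.ev_rename _ hsm]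
      change _ = S.ev _ _
      congr 1
      funext o
      cases o <;> rfl
  -- a relation that holds at `t` holds identically
  have hHc : ∀ i l, S.ev lam' (PowerSeries.coeff l (H i)) = 0 := by
    intro i
    by_contra hne
    push Not at hne
    obtain ⟨N, hN⟩ := exists_Dom hlam'1 _ hne
    obtain ⟨c, hc, hc0, t', ht', a, ha, h1⟩ := nf_ind hE hF hx N hlam'E hlam'1 _ hN ht
    have h2 : S.ev2 (H i) lam' t = 0 := by
      rw [hH i t ht.2, ← hG i]
      congr 2
      funext l
      exact (hyf l).symm
    rw [h2] at h1
    exact mul_ne_zero hc0 (one_add_ne (An0_small mT_small ha)) h1.symm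
  -- the solution is constant near `t`
  obtain ⟨ζ, hζ0, hζ1, hζε⟩ := S.exists_small {()} (fun _ => ε) (fun _ _ => hε)
  have hζε' : S.V ζ < S.V ε := hζε () (by simp)
  have hconst : ∀ T, S.V T < 1 → ∀ l, S.ev2 (f l) lam (t + ζ * T) = y l := by
    intro T hT
    have ht1 : S.V (t + ζ * T) < 1 := add_mul_small ht.2 hζ1 hT
    have hlt : ∀ l, S.V (S.ev2 (f l) lam (t + ζ * T)) < 1 := fun l =>
      S.ev_lt _ (elim_small hlam ht1) _ (hfc l)
    have := hiso (fun l => S.ev2 (f l) lam (t + ζ * T)) hlt (fun i => by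
      rw [← hH i _ ht1]
      exact ev2_eq_zero_of_coeff hlam'1 ht1 _ (hHc i)) (fun l => by
      have hsm2 := elim2_small hlam ht.2 hζ1
      obtain ⟨r, hr, hr1⟩ := ev2_split1 hsm2 hT (tay (f l)) ζ (fun j => by
        rw [ev_coeff_tay hlam ht.2 hζ1, pow_succ', mul_assoc, map_mul]
        refine mul_le_of_le_one_right' ?_
        rw [map_mul, map_pow]
        exact mul_le_one' (pow_le_one' hζ1.le _) (ev2_le hlam ht.2 _))
      rw [ev2_tay hlam ht.2 hζ1 hT, ev_coeff_tay hlam ht.2 hζ1, delta_zero, pow_zero, one_mul,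
        ← hyf] at hr
      rw [hr, add_sub_cancel_left, map_mul]
      exact lt_of_le_of_lt ((mul_le_of_le_one_left' hT.le).trans hr1) hζε')
    exact fun l => congrFun this l
  -- hence all the higher Taylor coefficients at `t` vanish
  have hder : ∀ j, S.ev2 (delta (j + 1) (f l)) lam t = 0 := by
    intro j
    have hsm2 := elim2_small hlam ht.2 hζ1
    have h1 := coeff_eq_zero_of_ev2 hsm2
      (tay (f l) - PowerSeries.C (PowerSeries.coeff 0 (tay (f l)))) 1 one_ne_zero
      (fun T hT _ => by
        rw [sub_eq_add_neg, ← map_neg, ev2_add hsm2 hT, ev2_C hsm2 hT, S.ev_neg _ hsm2,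
          ev2_tay hlam ht.2 hζ1 hT, ev_coeff_tay hlam ht.2 hζ1, delta_zero, pow_zero, one_mul,
          hconst T hT, ← hyf, add_neg_cancel]) (j + 1)
    rw [map_sub, PowerSeries.coeff_C, if_neg (Nat.succ_ne_zero j), sub_zero,
      ev_coeff_tay hlam ht.2 hζ1] at h1
    exact (mul_eq_zero.1 h1).resolve_left (pow_ne_zero _ hζ0)
  -- and `y l` is the value at an approximation `μ ∈ E` of `t`
  obtain ⟨μ, hμE, hμ1, t', ht', htt'⟩ := refine_ϖ hE hF hx ht hE.ϖ_mem S.ϖ_ne 1 (by simp)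
  have hnt : S.V (-t') < 1 := by rw [Valuation.map_neg]; exact ht'.2
  have hμ : μ = t + S.ϖ * (-t') := by rw [htt']; ring
  have h3 : y l = S.ev2 (f l) lam μ := by
    obtain ⟨r, hr, hr1⟩ := ev2_split1 (elim2_small hlam ht.2 S.ϖ_lt) hnt (tay (f l)) 0 (fun j => by
      rw [ev_coeff_tay hlam ht.2 S.ϖ_lt, hder, mul_zero])
    rw [ev2_tay hlam ht.2 S.ϖ_lt hnt, ev_coeff_tay hlam ht.2 S.ϖ_lt, delta_zero, pow_zero, one_mul,
        ← hyf, ← hμ] at hr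
    rw [map_zero, le_zero_iff, Valuation.zero_iff] at hr1
    rw [hr, hr1, mul_zero, add_zero]
  rw [h3]
  exact hE.ev_mem _ (by rintro (- | j); exacts [hμE, hlamE j]) (elim_small hlam hμ1) _

/-- An isolated small solution of a system of power series equations over a closed subfield with
the full value group has its coordinates in that subfield. -/
theorem isolated_mem {s ρ κ : Type} [Finite s] [Finite ρ] (α : ρ → F)
    (hα : ∀ a, S.V (α a) < 1) (G : κ → MvPowerSeries (ρ ⊕ s) A) (y : s → F)
    (hy : ∀ l, S.V (y l) < 1) (hG : ∀ i, S.ev (Sum.elim α y) (G i) = 0) (ε : F) (hε : ε ≠ 0)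
    (hiso : ∀ y' : s → F, (∀ l, S.V (y' l) < 1) → (∀ i, S.ev (Sum.elim α y') (G i) = 0) →
      (∀ l, S.V (y' l - y l) < S.V ε) → y' = y) :
    ∀ (n : ℕ) (E : Subfield F), S.Closed E → S.Full E → (∀ a, α a ∈ E) →
      {l | y l ∉ E}.ncard ≤ n → ∀ l, y l ∈ E := by
  intro n
  induction n with
  | zero =>
    intro E _ _ _ hn l
    have h0 : {l | y l ∉ E} = ∅ := (Set.ncard_eq_zero (Set.toFinite _)).1 (by omega)
    by_contra h
    exact (Set.eq_empty_iff_forall_notMem.1 h0 l) h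
  | succ n ih =>
    intro E hE hF hαE hn l
    by_contra hl
    have hL := adjoin_leading hE hF hl
    have h2 := ih hL.toSubfield hL.toSubfield_closed (adjoin_full hE hF hl)
      (fun a => hL.E_le (hαE a)) (by
        have : {l | y l ∉ hL.toSubfield} ⊂ {l | y l ∉ E} := by
          refine ⟨fun j hj h => hj (hL.E_le h), fun h => ?_⟩
          exact h hl (adjoin_mem hE hF hl)
        have := Set.ncard_lt_ncard this (Set.toFinite _)
        omega)
    exact hl (isolated_step hE hF hl α hαE hα G y hy hG ε hε hiso h2 l)

end AnStr

variable {A : Type} [CommRing A] {F : Type} [Field F] {Γ₀ : Type}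
  [LinearOrderedCommGroupWithZero Γ₀]

namespace AnStr

variable {S : AnStr A F Γ₀} {σ τ : Type} [Finite σ] [Finite τ]

/-! ### Closed subfields with a pure subgroup of the value group -/

/-- A cross-section `P : Z → F` of the valuation of `F`, defined on an additive group `Z` that is
also a ring acting on `F` through `c`. The values of `E` correspond to the subring `R` of `Z`, and
the `R`-module `Z ⧸ R` is separated by its `R`-linear maps to `E`. -/
structure Section (S : AnStr A F Γ₀) (E : Subfield F) (Z : Type) [CommRing Z] where
  P : Z → F
  P_zero : P 0 = 1
  P_add : ∀ a b, P (a + b) = P a * P b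
  R : Subring Z
  c : Z →+* F
  c_mem : ∀ r ∈ R, c r ∈ E
  c_le : ∀ r, S.V (c r) ≤ 1
  P_mem : ∀ r ∈ R, P r ∈ E
  full : ∀ x, x ≠ 0 → ∃ k, S.V x = S.V (P k)
  disc : ∀ k, ∀ e ∈ E, S.V (P k) = S.V e → k ∈ R
  sep : ∀ k, k ∉ R → ∃ ψ : Z →+ F, (∀ z, ψ z ∈ E) ∧ (∀ r ∈ R, ∀ z, ψ (r * z) = c r * ψ z) ∧
    (∀ r ∈ R, ψ r = 0) ∧ ψ k ≠ 0

variable [IsNoetherianRing A] {E : Subfield F} {Z : Type} [CommRing Z]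

namespace Section

variable (D : Section S E Z)

theorem P_ne (k : Z) : D.P k ≠ 0 := by
  intro h
  have := D.P_add k (-k)
  rw [add_neg_cancel, D.P_zero, h, zero_mul] at this
  exact one_ne_zero this

theorem P_neg (k : Z) : D.P (-k) = (D.P k)⁻¹ := by
  have := D.P_add k (-k)
  rw [add_neg_cancel, D.P_zero] at this
  exact (inv_eq_of_mul_eq_one_right this.symm).symm

theorem P_sub (k l : Z) : D.P (k - l) = D.P k / D.P l := by
  rw [sub_eq_add_neg, D.P_add, D.P_neg, div_eq_mul_inv]

/-- The group of weights. -/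
abbrev W : Type := Z ⧸ D.R.toAddSubgroup

theorem mk_eq_zero {k : Z} : (k : D.W) = 0 ↔ k ∈ D.R :=
  (QuotientAddGroup.eq_zero_iff k).trans Iff.rfl

/-- `x` is homogeneous of weight `κ`: it is a multiple of `P k` by an element of `E`, where `κ` is
the class of `k`. -/
def Hom (κ : D.W) (x : F) : Prop := ∃ k : Z, (k : D.W) = κ ∧ ∃ e ∈ E, x = D.P k * e

variable {D}

theorem Hom.of {k : Z} {κ : D.W} (hk : (k : D.W) = κ) {x : F} (hx : D.Hom κ x) :
    ∃ e ∈ E, x = D.P k * e := by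
  obtain ⟨k', rfl, e, he, rfl⟩ := hx
  have : (k' - k : Z) ∈ D.R := by
    rw [← D.mk_eq_zero, QuotientAddGroup.mk_sub, hk, sub_self]
  refine ⟨D.P (k' - k) * e, E.mul_mem (D.P_mem _ this) he, ?_⟩
  rw [← mul_assoc, ← D.P_add]; ring_nf

theorem Hom.zero (κ : D.W) : D.Hom κ 0 := by
  obtain ⟨k, rfl⟩ := QuotientAddGroup.mk_surjective κ
  exact ⟨k, rfl, 0, E.zero_mem, by simp⟩

theorem Hom.of_mem {x : F} (hx : x ∈ E) : D.Hom 0 x :=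
  ⟨0, rfl, x, hx, by rw [D.P_zero, one_mul]⟩

theorem Hom.mem {x : F} (hx : D.Hom 0 x) : x ∈ E := by
  obtain ⟨e, he, h⟩ := hx.of (k := 0) rfl
  rw [h, D.P_zero, one_mul]; exact he

theorem Hom.mul {κ κ' : D.W} {x x' : F} (hx : D.Hom κ x) (hx' : D.Hom κ' x') :
    D.Hom (κ + κ') (x * x') := by
  obtain ⟨k, rfl, e, he, rfl⟩ := hx
  obtain ⟨k', rfl, e', he', rfl⟩ := hx'
  exact ⟨k + k', rfl, e * e', E.mul_mem he he', by rw [D.P_add]; ring⟩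

theorem Hom.inv {κ : D.W} {x : F} (hx : D.Hom κ x) : D.Hom (-κ) x⁻¹ := by
  obtain ⟨k, rfl, e, he, rfl⟩ := hx
  exact ⟨-k, rfl, e⁻¹, E.inv_mem he, by rw [D.P_neg, mul_inv]⟩

theorem Hom.add {κ : D.W} {x x' : F} (hx : D.Hom κ x) (hx' : D.Hom κ x') :
    D.Hom κ (x + x') := by
  obtain ⟨k, rfl⟩ := QuotientAddGroup.mk_surjective κ
  obtain ⟨e, he, rfl⟩ := hx.of rfl
  obtain ⟨e', he', rfl⟩ := hx'.of rfl
  exact ⟨k, rfl, e + e', E.add_mem he he', by ring⟩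

theorem Hom.sum {κ : D.W} {ι : Type*} (s : Finset ι) {x : ι → F}
    (hx : ∀ i ∈ s, D.Hom κ (x i)) : D.Hom κ (∑ i ∈ s, x i) := by
  classical
  induction s using Finset.induction_on with
  | empty => exact Hom.zero _
  | insert i s hi ih =>
    rw [Finset.sum_insert hi]
    exact (hx i (Finset.mem_insert_self _ _)).add
      (ih fun j hj => hx j (Finset.mem_insert_of_mem hj))

theorem Hom.pow {κ : D.W} {x : F} (hx : D.Hom κ x) (n : ℕ) : D.Hom (n • κ) (x ^ n) := by
  induction n with
  | zero => rw [zero_nsmul, pow_zero]; exact Hom.of_mem E.one_mem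
  | succ n ih => rw [succ_nsmul, pow_succ]; exact ih.mul hx

theorem Hom.prod {ι : Type*} (s : Finset ι) {x : ι → F} {κ : ι → D.W}
    (hx : ∀ i ∈ s, D.Hom (κ i) (x i)) : D.Hom (∑ i ∈ s, κ i) (∏ i ∈ s, x i) := by
  classical
  induction s using Finset.induction_on with
  | empty => exact Hom.of_mem E.one_mem
  | insert i s hi ih =>
    rw [Finset.sum_insert hi, Finset.prod_insert hi]
    exact (hx i (Finset.mem_insert_self _ _)).mul
      (ih fun j hj => hx j (Finset.mem_insert_of_mem hj))

/-- Nonzero homogeneous elements of distinct weights have distinct values. -/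
theorem Hom.weight_eq {κ κ' : D.W} {x x' : F} (hx : D.Hom κ x) (hx' : D.Hom κ' x')
    (h0 : x ≠ 0) (h : S.V x = S.V x') : κ = κ' := by
  have hx0' : x' ≠ 0 := by
    rintro rfl
    rw [map_zero, Valuation.zero_iff] at h
    exact h0 h
  obtain ⟨k, rfl, e, he, rfl⟩ := hx
  obtain ⟨k', rfl, e', he', rfl⟩ := hx'
  have he0 : e ≠ 0 := right_ne_zero_of_mul h0
  have : k - k' ∈ D.R := by
    refine D.disc _ (e' / e) (E.div_mem he' he) ?_
    have h1 : D.P (k - k') = (D.P k * e) / (D.P k' * e) := by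
      rw [D.P_sub]; have := D.P_ne k'; field_simp
    have h2 : e' / e = (D.P k' * e') / (D.P k' * e) := by
      have := D.P_ne k'; field_simp
    rw [h1, h2, map_div₀, map_div₀, h]
  rw [← D.mk_eq_zero, QuotientAddGroup.mk_sub, sub_eq_zero] at this
  exact this

end Section

theorem ev_monomial (x : σ → F) (hx : ∀ j, S.V (x j) < 1) (β : σ →₀ ℕ) :
    S.ev x (MvPowerSeries.monomial β (1 : A)) = β.prod fun j n => x j ^ n := by
  rw [MvPowerSeries.monomial_eq', map_one, one_mul, Finsupp.prod, S.ev_prod x hx]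
  simp only [S.ev_pow x hx, S.ev_X x hx]
  rfl

theorem V_monomial_lt (x : σ → F) (hx : ∀ j, S.V (x j) < 1) {β : σ →₀ ℕ} (hβ : β ≠ 0) :
    S.V (β.prod fun j n => x j ^ n) < 1 := by
  classical
  rw [← ev_monomial x hx]
  refine S.ev_lt x hx _ ?_
  rw [← MvPowerSeries.coeff_zero_eq_constantCoeff_apply, MvPowerSeries.coeff_monomial,
    if_neg hβ.symm]

/-- The value of a homogeneous component, computed through the semigroup of exponents. -/
theorem ev_comp {G : Type} [AddCommGroup G] (wt : (σ →₀ ℕ) →+ G) (ω : G)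
    (f : MvPowerSeries σ A) :
    ∃ B Γ : Finset (σ →₀ ℕ), (∀ β ∈ B, wt β = ω) ∧ (∀ γ ∈ Γ, wt γ = 0 ∧ γ ≠ 0) ∧
      ∃ h : (σ →₀ ℕ) → MvPowerSeries Γ A, ∀ x : σ → F, (∀ j, S.V (x j) < 1) →
        S.ev x (comp wt ω f) = ∑ β ∈ B, (β.prod fun j n => x j ^ n) *
          S.ev (fun γ : Γ => γ.1.prod fun j n => x j ^ n) (h β) := by
  classical
  obtain ⟨B, Γ, hB, hΓ, h, hf⟩ := homog_decomp wt ω f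
  refine ⟨B, Γ, hB, hΓ, h, fun x hx => ?_⟩
  rw [hf, S.ev_sum x hx]
  refine Finset.sum_congr rfl fun β hβ => ?_
  rw [S.ev_mul x hx, ev_monomial x hx, S.ev_subst x hx _ fun γ => ?_]
  · simp only [ev_monomial x hx]
  · rw [← MvPowerSeries.coeff_zero_eq_constantCoeff_apply, MvPowerSeries.coeff_monomial,
      if_neg (hΓ γ.1 γ.2).2.symm]

/-- Rescaling the arguments by a character of the group of weights rescales homogeneous
components. -/
theorem ev_scale {G : Type} [AddCommGroup G] (wt : (σ →₀ ℕ) →+ G) (f : MvPowerSeries σ A)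
    (x c : σ → F) (hx : ∀ j, S.V (x j) < 1) (hc : ∀ j, S.V (c j) ≤ 1)
    (hwt : ∀ β β', wt β = wt β' → (β.prod fun j n => c j ^ n) = β'.prod fun j n => c j ^ n)
    (β₀ : σ →₀ ℕ) :
    S.ev (fun j => x j * c j) (comp wt (wt β₀) f) =
      (β₀.prod fun j n => c j ^ n) * S.ev x (comp wt (wt β₀) f) := by
  obtain ⟨B, Γ, hB, hΓ, h, hev⟩ := ev_comp (S := S) wt (wt β₀) f
  have hxc : ∀ j, S.V (x j * c j) < 1 := fun j => by
    rw [map_mul]; exact mul_lt_one_of_lt_of_le (hx j) (hc j)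
  have hmul : ∀ β : σ →₀ ℕ, (β.prod fun j n => (x j * c j) ^ n) =
      (β.prod fun j n => x j ^ n) * β.prod fun j n => c j ^ n := fun β => by
    simp only [mul_pow, Finsupp.prod_mul]
  rw [hev _ hxc, hev _ hx, Finset.mul_sum]
  refine Finset.sum_congr rfl fun β hβ => ?_
  have h1 : (fun γ : Γ => γ.1.prod fun j n => (x j * c j) ^ n) =
      fun γ : Γ => γ.1.prod fun j n => x j ^ n := by
    funext γ
    have := hwt γ.1 0 (by rw [(hΓ γ.1 γ.2).1, map_zero])
    rw [hmul, this, Finsupp.prod_zero_index, mul_one]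
  rw [h1, hmul, hwt β β₀ (hB β hβ)]
  ring

namespace Section

variable {D : Section S E Z} {lam : σ → F} {κ : σ → D.W}

theorem Hom.monomial (hlam : ∀ j, D.Hom (κ j) (lam j)) (β : σ →₀ ℕ) :
    D.Hom (wtOf κ β) (β.prod fun j n => lam j ^ n) := by
  rw [wtOf_apply]
  exact Hom.prod _ fun j _ => (hlam j).pow _

theorem Hom.ev (hE : S.Closed E) (hlam : ∀ j, D.Hom (κ j) (lam j)) (hl : ∀ j, S.V (lam j) < 1)
    (ω : D.W) (f : MvPowerSeries σ A) : D.Hom ω (S.ev lam (comp (wtOf κ) ω f)) := by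
  obtain ⟨B, Γ, hB, hΓ, h, hev⟩ := ev_comp (S := S) (wtOf κ) ω f
  rw [hev _ hl]
  refine Hom.sum _ fun β hβ => ?_
  have h1 := Hom.monomial hlam β
  rw [hB β hβ] at h1
  rw [← add_zero ω]
  refine h1.mul (Hom.of_mem (hE.ev_mem _ (fun γ => ?_) (fun γ => ?_) _))
  · have h2 := Hom.monomial hlam γ.1
    rw [(hΓ γ.1 γ.2).1] at h2
    exact h2.mem
  · exact V_monomial_lt _ hl (hΓ γ.1 γ.2).2

variable (D) in
/-- The small homogeneous elements. -/
def Lam : Set F := {x | (∃ κ, D.Hom κ x) ∧ S.V x < 1}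

theorem Lam_small : ∀ x ∈ D.Lam, S.V x < 1 := fun _ hx => hx.2

/-- The value of a power series at homogeneous arguments is dominated by one of its homogeneous
components, unless all components vanish. -/
theorem ev_dichotomy (hE : S.Closed E) (hlam : ∀ j, D.Hom (κ j) (lam j))
    (hl : ∀ j, S.V (lam j) < 1) (f : MvPowerSeries σ A) :
    (S.ev lam f = 0 ∧ ∀ ω, S.ev lam (comp (wtOf κ) ω f) = 0) ∨
    ∃ x, x ≠ 0 ∧ (∃ ω, D.Hom ω x) ∧ ∃ a ∈ S.An0 D.Lam, S.ev lam f = x * (1 + a) := by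
  classical
  obtain ⟨s, u, hf, hu, hw⟩ := graded_generators (wtOf κ) f
  have hsum : S.ev lam f = ∑ ω ∈ s, S.ev lam (u ω) * S.ev lam (comp (wtOf κ) ω f) := by
    conv_lhs => rw [hf]
    rw [S.ev_sum _ hl]
    simp only [S.ev_mul _ hl]
  set Fω : D.W → F := fun ω => S.ev lam (comp (wtOf κ) ω f) with hFω
  have hHom : ∀ ω, D.Hom ω (Fω ω) := fun ω => Hom.ev hE hlam hl ω f
  by_cases h : ∀ ω ∈ s, Fω ω = 0
  · left
    refine ⟨?_, fun ω => ?_⟩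
    · rw [hsum]; exact Finset.sum_eq_zero fun ω hω => by
        rw [show S.ev lam (comp (wtOf κ) ω f) = 0 from h ω hω, mul_zero]
    · obtain ⟨w, hw⟩ := hw ω
      rw [hw, S.ev_sum _ hl]
      exact Finset.sum_eq_zero fun ω hω => by
        rw [S.ev_mul _ hl, show S.ev lam (comp (wtOf κ) ω f) = 0 from h ω hω, mul_zero]
  · right
    push Not at h
    obtain ⟨ω₁, hω₁, hne₁⟩ := h
    obtain ⟨ω₀, hω₀, hmax⟩ := s.exists_max_image (fun ω => S.V (Fω ω)) ⟨ω₁, hω₁⟩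
    have hne : Fω ω₀ ≠ 0 := by
      intro h0
      have := hmax ω₁ hω₁
      rw [h0, map_zero, le_zero_iff, Valuation.zero_iff] at this
      exact hne₁ this
    have hlamL : ∀ j, lam j ∈ S.An0 D.Lam := fun j => An0_self Lam_small ⟨⟨_, hlam j⟩, hl j⟩
    refine ⟨Fω ω₀, hne, ⟨_, hHom ω₀⟩, ∑ ω ∈ s, if ω = ω₀ then S.ev lam (u ω₀ - 1) else
      Fω ω / Fω ω₀ * S.ev lam (u ω), An0_sum Lam_small _ fun ω hω => ?_, ?_⟩
    · split_ifs with h0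
      · exact An0_ev Lam_small hlamL _ (by rw [map_sub, hu ω₀ hω₀, map_one, sub_self])
      · refine An0_mul_ev Lam_small (An0_self Lam_small ⟨⟨ω + -ω₀, ?_⟩, ?_⟩) hlamL _
        · rw [div_eq_mul_inv]; exact (hHom ω).mul (hHom ω₀).inv
        · have hlt : S.V (Fω ω) < S.V (Fω ω₀) := by
            refine lt_of_le_of_ne (hmax ω hω) fun he => h0 ?_
            exact ((hHom ω₀).weight_eq (hHom ω) hne he.symm).symm
          rw [map_div₀]
          exact (div_lt_one₀ (zero_lt_iff.2 ((Valuation.ne_zero_iff _).2 hne))).2 hlt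
    · have hterm : ∀ ω ∈ s, S.ev lam (u ω) * Fω ω = (if ω = ω₀ then Fω ω₀ else 0) + Fω ω₀ *
          (if ω = ω₀ then S.ev lam (u ω₀ - 1) else Fω ω / Fω ω₀ * S.ev lam (u ω)) := by
        intro ω hω
        split_ifs with h0
        · rw [h0, S.ev_sub _ hl, S.ev_one _ hl]; ring
        · field_simp
          ring
      rw [hsum, Finset.sum_congr rfl hterm, Finset.sum_add_distrib, ← Finset.mul_sum,
        Finset.sum_ite_eq' s ω₀, if_pos hω₀]
      ring

theorem comp_eq_zero_of_ev (hE : S.Closed E) (hlam : ∀ j, D.Hom (κ j) (lam j))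
    (hl : ∀ j, S.V (lam j) < 1) (f : MvPowerSeries σ A) (h : S.ev lam f = 0) (ω : D.W) :
    S.ev lam (comp (wtOf κ) ω f) = 0 := by
  rcases ev_dichotomy hE hlam hl f with h1 | ⟨x, hx0, -, a, ha, h1⟩
  · exact h1.2 ω
  · exact absurd (h1.symm.trans h) (mul_ne_zero hx0 (one_add_ne (An0_small Lam_small ha)))

theorem ev_eq_of_comp (hl : ∀ j, S.V (lam j) < 1) (f : MvPowerSeries σ A)
    (h : ∀ ω, ω ≠ 0 → S.ev lam (comp (wtOf κ) ω f) = 0) (hE : S.Closed E)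
    (hlam : ∀ j, D.Hom (κ j) (lam j)) : S.ev lam f ∈ E := by
  have h0 := Hom.ev hE hlam hl 0 f
  suffices S.ev lam (f - comp (wtOf κ) 0 f) = 0 by
    rw [S.ev_sub _ hl, sub_eq_zero] at this
    rw [this]; exact h0.mem
  classical
  obtain ⟨s, u, hf, -, -⟩ := graded_generators (wtOf κ) (f - comp (wtOf κ) 0 f)
  rw [hf, S.ev_sum _ hl]
  refine Finset.sum_eq_zero fun ω _ => ?_
  rw [S.ev_mul _ hl, map_sub, comp_comp]
  by_cases hω : ω = 0
  · rw [if_pos hω, hω, sub_self, S.ev_zero _ hl, mul_zero]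
  · rw [if_neg hω, sub_zero, h ω hω, mul_zero]

/-- Relations between homogeneous elements persist when the arguments are rescaled by a character
of the group of weights. -/
theorem ev_scale_eq_zero (hE : S.Closed E) (hlam : ∀ j, D.Hom (κ j) (lam j))
    (hl : ∀ j, S.V (lam j) < 1) (c : σ → F) (hc : ∀ j, S.V (c j) ≤ 1)
    (hwt : ∀ β β', wtOf κ β = wtOf κ β' →
      (β.prod fun j n => c j ^ n) = β'.prod fun j n => c j ^ n)
    (f : MvPowerSeries σ A) (h : S.ev lam f = 0) : S.ev (fun j => lam j * c j) f = 0 := by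
  classical
  have hxc : ∀ j, S.V (lam j * c j) < 1 := fun j => by
    rw [map_mul]; exact mul_lt_one_of_lt_of_le (hl j) (hc j)
  obtain ⟨s, u, hf, -, -⟩ := graded_generators (wtOf κ) f
  rw [hf, S.ev_sum _ hxc]
  refine Finset.sum_eq_zero fun ω _ => ?_
  rw [S.ev_mul _ hxc]
  by_cases hω : ∃ β, wtOf κ β = ω
  · obtain ⟨β, rfl⟩ := hω
    rw [ev_scale _ _ _ _ hl hc hwt, comp_eq_zero_of_ev hE hlam hl f h]; simp
  · have : comp (wtOf κ) ω f = 0 := by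
      ext β
      rw [coeff_comp, if_neg fun h => hω ⟨β, h⟩, map_zero]
    rw [this, S.ev_zero _ hxc, mul_zero]

variable (D) in
theorem leading (hE : S.Closed E) : Leading S E {x | x ≠ 0 ∧ ∃ κ, D.Hom κ x} (S.An0 D.Lam) where
  closed := hE
  sub := fun x hx h0 => ⟨h0, 0, Hom.of_mem hx⟩
  ne := fun c hc => hc.1
  mul := by
    rintro c ⟨hc, κ, hκ⟩ c' ⟨hc', κ', hκ'⟩
    exact ⟨mul_ne_zero hc hc', _, hκ.mul hκ'⟩
  inv := by
    rintro c ⟨hc, κ, hκ⟩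
    exact ⟨inv_ne_zero hc, _, hκ.inv⟩
  small := fun a ha => An0_small Lam_small ha
  ev := fun y hy f hf => An0_ev Lam_small hy f hf
  C_sub := fun c hc h1 => An0_self Lam_small ⟨hc.2, h1⟩
  nf := by
    rintro y ⟨σ, _, x, f, hx, -, rfl⟩
    choose κ hκ using fun j => (hx j).1
    rcases ev_dichotomy hE hκ (fun j => (hx j).2) f with h | ⟨x, hx, h1, a, ha, h2⟩
    · exact Or.inl h.1
    · exact Or.inr ⟨x, ⟨hx, h1⟩, a, ha, h2⟩

theorem leading_full (hE : S.Closed E) : S.Full (D.leading hE).toSubfield := fun x hx => by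
  obtain ⟨k, hk⟩ := D.full x hx
  exact ⟨D.P k, (D.leading hE).C_sub_subfield ⟨D.P_ne k, _, k, rfl, 1, E.one_mem, by simp⟩,
    D.P_ne k, hk.symm⟩

end Section
end AnStr

variable {A : Type} [CommRing A] {F : Type} [Field F] {Γ₀ : Type}
  [LinearOrderedCommGroupWithZero Γ₀]

namespace AnStr

variable {S : AnStr A F Γ₀} {σ τ : Type} [Finite σ] [Finite τ]

/-! ### An exponential, and deformations along characters of the value group -/

/-- A power series `e` satisfying the functional equation of the exponential; `p` is the residue
characteristic. -/
structure ExpData (S : AnStr A F Γ₀) (p : ℕ) where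
  e : MvPowerSeries Unit A
  cc : e.constantCoeff = 1
  add : ∀ x y, S.V x < 1 → S.V y < 1 →
    S.ev (fun _ => x + y) e = S.ev (fun _ => x) e * S.ev (fun _ => y) e
  ne : ∀ x, S.V x < 1 → x ≠ 0 → S.ev (fun _ => x) e ≠ 1
  p_ne : p ≠ 0
  p_lt : S.V (p : F) < 1

namespace ExpData

variable {p : ℕ} (X : ExpData S p)

/-- The exponential as a function. -/
noncomputable def ex (x : F) : F := S.ev (fun _ => x) X.e

theorem V_ex {x : F} (hx : S.V x < 1) : S.V (X.ex x) = 1 := by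
  have h : X.e = 1 + (X.e - 1) := by ring
  rw [ex, h, S.ev_add _ (fun _ => hx), S.ev_one _ (fun _ => hx)]
  exact V_one_add (S.ev_lt _ (fun _ => hx) _ (by rw [map_sub, X.cc, map_one, sub_self]))

theorem ex_ne {x : F} (hx : S.V x < 1) : X.ex x ≠ 0 := by
  intro h
  have := X.V_ex hx
  rw [h, map_zero] at this
  exact zero_ne_one this

theorem ex_add {x y : F} (hx : S.V x < 1) (hy : S.V y < 1) :
    X.ex (x + y) = X.ex x * X.ex y := X.add x y hx hy

theorem ex_zero : X.ex 0 = 1 := by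
  have h0 : S.V (0 : F) < 1 := by rw [map_zero]; exact zero_lt_one
  have h := X.ex_add h0 h0
  rw [add_zero] at h
  exact (mul_eq_left₀ (X.ex_ne h0)).1 h.symm

theorem V_zero_lt : S.V (0 : F) < 1 := by rw [map_zero]; exact zero_lt_one

theorem V_sum_lt {ι : Type*} (s : Finset ι) {x : ι → F} (hx : ∀ i ∈ s, S.V (x i) < 1) :
    S.V (∑ i ∈ s, x i) < 1 := S.V.map_sum_lt one_ne_zero hx

theorem ex_sum {ι : Type*} (s : Finset ι) {x : ι → F} (hx : ∀ i ∈ s, S.V (x i) < 1) :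
    X.ex (∑ i ∈ s, x i) = ∏ i ∈ s, X.ex (x i) := by
  classical
  induction s using Finset.induction_on with
  | empty => simpa using X.ex_zero
  | insert i s hi ih =>
    rw [Finset.sum_insert hi, Finset.prod_insert hi, X.ex_add (hx i (Finset.mem_insert_self _ _))
      (V_sum_lt _ fun j hj => hx j (Finset.mem_insert_of_mem hj)),
      ih fun j hj => hx j (Finset.mem_insert_of_mem hj)]

theorem V_nat_mul_lt {x : F} (hx : S.V x < 1) (n : ℕ) : S.V (n * x) < 1 := by
  rw [map_mul]; exact lt_of_le_of_lt (mul_le_of_le_one_left' (S.V_natCast_le n)) hx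

theorem ex_nat_mul {x : F} (hx : S.V x < 1) (n : ℕ) : X.ex (n * x) = X.ex x ^ n := by
  induction n with
  | zero => simpa using X.ex_zero
  | succ n ih =>
    rw [pow_succ, ← ih, ← X.ex_add (V_nat_mul_lt hx n) hx]; push_cast; ring_nf

end ExpData

variable [IsNoetherianRing A] {E : Subfield F} {Z : Type} [CommRing Z]

namespace Section

variable {D : Section S E Z} {lam : σ → F} {p : ℕ} (X : ExpData S p)

theorem wtOf_mk (k : σ → Z) (β : σ →₀ ℕ) :
    wtOf (fun j => ((k j : Z) : D.W)) β = ((wtOf k β : Z) : D.W) := by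
  rw [wtOf_apply, wtOf_apply, Finsupp.sum, Finsupp.sum]
  exact (map_sum (QuotientAddGroup.mk' D.R.toAddSubgroup) _ _).symm

/-- The multipliers `exp (ψ (k j) t)` form a character of the group of weights. -/
theorem prod_ex (ψ : Z →+ F) (k : σ → Z) (t : F) (ht : ∀ j, S.V (ψ (k j) * t) < 1)
    (β : σ →₀ ℕ) :
    (β.prod fun j n => X.ex (ψ (k j) * t) ^ n) = X.ex (ψ (wtOf k β) * t) ∧
      S.V (ψ (wtOf k β) * t) < 1 := by
  have h : ψ (wtOf k β) * t = ∑ j ∈ β.support, (β j : F) * (ψ (k j) * t) := by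
    rw [wtOf_apply, Finsupp.sum, map_sum, Finset.sum_mul]
    refine Finset.sum_congr rfl fun j _ => ?_
    rw [map_nsmul, nsmul_eq_mul]; ring
  rw [h]
  refine ⟨?_, ExpData.V_sum_lt _ fun j _ => ExpData.V_nat_mul_lt (ht j) _⟩
  rw [X.ex_sum _ fun j _ => ExpData.V_nat_mul_lt (ht j) _, Finsupp.prod]
  exact Finset.prod_congr rfl fun j _ => (X.ex_nat_mul (ht j) _).symm

theorem prod_ex_eq (ψ : Z →+ F) (hψ : ∀ r ∈ D.R, ψ r = 0) (k : σ → Z) (t : F)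
    (ht : ∀ j, S.V (ψ (k j) * t) < 1) (β β' : σ →₀ ℕ)
    (h : wtOf (fun j => ((k j : Z) : D.W)) β = wtOf (fun j => ((k j : Z) : D.W)) β') :
    (β.prod fun j n => X.ex (ψ (k j) * t) ^ n) = β'.prod fun j n => X.ex (ψ (k j) * t) ^ n := by
  rw [wtOf_mk, wtOf_mk] at h
  have h1 : wtOf k β - wtOf k β' ∈ D.R := by
    rw [← D.mk_eq_zero, QuotientAddGroup.mk_sub, h, sub_self]
  have h2 := hψ _ h1
  rw [map_sub, sub_eq_zero] at h2
  rw [(prod_ex X ψ k t ht β).1, (prod_ex X ψ k t ht β').1, h2]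

/-- The difference `f (λ exp (s t)) + z t - f (λ)` is a power series in `t`. -/
theorem deform_series (hl : ∀ j, S.V (lam j) < 1) (s : σ → F) (hsm : ∀ j, S.V (s j) < 1)
    (f : MvPowerSeries σ A) (z : F) (hz : S.V z < 1) :
    ∃ (x : σ ⊕ Option σ → F) (g : PowerSeries (MvPowerSeries (σ ⊕ Option σ) A)),
      (∀ b, S.V (x b) < 1) ∧ ∀ t, S.V t < 1 → S.ev2 g x t =
        S.ev (fun j => lam j * X.ex (s j * t)) f + z * t - S.ev lam f := by
  let x : σ ⊕ Option σ → F := Sum.elim lam fun o => o.elim z s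
  have hx : ∀ b, S.V (x b) < 1 := by
    rintro (j | - | j); exacts [hl j, hz, hsm j]
  let Y : Option (σ ⊕ Option σ) → MvPowerSeries (Option (σ ⊕ Option σ)) A := MvPowerSeries.X
  let a : σ → MvPowerSeries (Option (σ ⊕ Option σ)) A := fun j => Y (some (.inl j)) *
    MvPowerSeries.subst (fun _ : Unit => Y (some (.inr (some j))) * Y none) X.e
  have hY : ∀ b, (Y b).constantCoeff = 0 := fun b => MvPowerSeries.constantCoeff_X _
  have ha : ∀ j, (a j).constantCoeff = 0 := fun j => by
    simp only [a, map_mul, hY, zero_mul]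
  let g : MvPowerSeries (Option (σ ⊕ Option σ)) A := MvPowerSeries.subst a f -
    MvPowerSeries.subst (fun j => (MvPowerSeries.X (some (Sum.inl j)) :
      MvPowerSeries (Option (σ ⊕ Option σ)) A)) f + Y (some (.inr none)) * Y none
  refine ⟨x, MvPowerSeries.optionEquivLeft _ A g, hx, fun t ht => ?_⟩
  have hx' : ∀ o : Option (σ ⊕ Option σ), S.V (o.elim t x) < 1 := by
    rintro (- | b); exacts [ht, hx b]
  rw [ev2, AlgEquiv.symm_apply_apply, S.ev_add _ hx', S.ev_sub _ hx', S.ev_subst _ hx' _ ha,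
    S.ev_rename _ hx', S.ev_mul _ hx', S.ev_X _ hx', S.ev_X _ hx']
  have h1 : ∀ j, S.ev (fun o : Option (σ ⊕ Option σ) => o.elim t x) (a j) =
      lam j * X.ex (s j * t) := by
    intro j
    simp only [a]
    rw [S.ev_mul _ hx', S.ev_subst _ hx' _ (fun _ => by rw [map_mul, hY, zero_mul]),
      S.ev_X _ hx']
    simp only [S.ev_mul _ hx', Y, S.ev_X _ hx']
    rfl
  simp only [h1]
  change _ - S.ev lam f + z * t = _
  ring

/-- If `f (λ exp (s t)) + z t = f (λ)` for all `t` close to `0`, then this holds for all small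
`t`. -/
theorem deform_identity (hl : ∀ j, S.V (lam j) < 1) (s : σ → F) (hsm : ∀ j, S.V (s j) < 1)
    (f : MvPowerSeries σ A) (z : F) (hz : S.V z < 1) (ε : F) (hε : ε ≠ 0)
    (h : ∀ t, S.V t < 1 → S.V t < S.V ε →
      S.ev (fun j => lam j * X.ex (s j * t)) f + z * t = S.ev lam f) (t : F) (ht : S.V t < 1) :
    S.ev (fun j => lam j * X.ex (s j * t)) f + z * t = S.ev lam f := by
  obtain ⟨x, g, hx, hg⟩ := deform_series X hl s hsm f z hz
  have := ev2_eq_zero_of_coeff hx ht g (coeff_eq_zero_of_ev2 hx _ ε hε fun t ht ht' => by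
      rw [hg t ht, h t ht ht', sub_self])
  rw [hg t ht] at this
  exact sub_eq_zero.1 this

theorem deform_close (hl : ∀ j, S.V (lam j) < 1) (s : σ → F) (hsm : ∀ j, S.V (s j) < 1)
    (f : MvPowerSeries σ A) (z : F) (hz : S.V z < 1) (t : F) (ht : S.V t < 1) :
    S.V (S.ev (fun j => lam j * X.ex (s j * t)) f + z * t - S.ev lam f) ≤ S.V t := by
  obtain ⟨x, g, hx, hg⟩ := deform_series X hl s hsm f z hz
  have hco : ∀ l, S.V (S.ev x (PowerSeries.coeff (l + 1) g)) ≤ S.V (1 : F) := fun l => by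
    rw [map_one]; exact S.ev_le _ hx _
  obtain ⟨r, hr, hr1⟩ := ev2_split1 hx ht g 1 hco
  obtain ⟨r', hr', -⟩ := ev2_split1 hx (t := (0 : F)) ExpData.V_zero_lt g 1 hco
  rw [hg 0 ExpData.V_zero_lt] at hr'
  simp only [mul_zero, X.ex_zero, mul_one, add_zero, sub_self, zero_mul] at hr'
  rw [← hg t ht, hr, ← hr', zero_add, map_mul]
  rw [map_one] at hr1
  exact mul_le_of_le_one_right' hr1

theorem deform_zero (hE : S.Closed E) (k : σ → Z) (hlam : ∀ j, D.Hom ((k j : Z) : D.W) (lam j))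
    (hl : ∀ j, S.V (lam j) < 1) (ψ : Z →+ F) (hψE : ∀ z, ψ z ∈ E) (hψ : ∀ r ∈ D.R, ψ r = 0)
    (t : F) (htE : t ∈ E) (ht0 : t ≠ 0) (ht : ∀ j, S.V (ψ (k j) * t) < 1)
    (f : MvPowerSeries σ A) (z : F) (hzE : z ∈ E) (hz : S.V z < 1)
    (h : S.ev (fun j => lam j * X.ex (ψ (k j) * t)) f + z = S.ev lam f) :
    z = 0 ∧ ∀ β, ψ (wtOf k β) ≠ 0 →
      S.ev lam (comp (wtOf fun j => ((k j : Z) : D.W)) ((wtOf k β : Z) : D.W) f) = 0 := by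
  classical
  set c : σ → F := fun j => X.ex (ψ (k j) * t) with hc
  have hcE : ∀ j, c j ∈ E := fun j => hE.ev_mem _ (fun _ => E.mul_mem (hψE _) htE) (fun _ => ht j) _
  have hc1 : ∀ j, S.V (c j) ≤ 1 := fun j => (X.V_ex (ht j)).le
  have hlc : ∀ j, S.V (lam j * c j) < 1 := fun j => by
    rw [map_mul]; exact mul_lt_one_of_lt_of_le (hl j) (hc1 j)
  set κ : σ → D.W := fun j => ((k j : Z) : D.W) with hκ
  let x : Option (σ ⊕ σ) → F := fun o => o.elim z (Sum.elim lam fun j => lam j * c j)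
  let κ' : Option (σ ⊕ σ) → D.W := fun o => o.elim 0 (Sum.elim κ κ)
  have hx : ∀ o, S.V (x o) < 1 := by
    rintro (- | j | j); exacts [hz, hl j, hlc j]
  have hxH : ∀ o, D.Hom (κ' o) (x o) := by
    rintro (- | j | j)
    · exact Hom.of_mem hzE
    · exact hlam j
    · have := (hlam j).mul (Hom.of_mem (D := D) (hcE j))
      rwa [add_zero] at this
  let Y : Option (σ ⊕ σ) → MvPowerSeries (Option (σ ⊕ σ)) A := MvPowerSeries.X
  have hYh : ∀ o, comp (wtOf κ') (κ' o) (Y o) = Y o := fun o => by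
    have := comp_homog_monomial (wtOf κ') (Finsupp.single o 1) (1 : A)
    rwa [wtOf_single] at this
  have hY : ∀ b, (Y b).constantCoeff = 0 := fun b => MvPowerSeries.constantCoeff_X _
  have key : S.ev x (MvPowerSeries.subst (fun j => Y (some (.inr j))) f -
      MvPowerSeries.subst (fun j => Y (some (.inl j))) f + Y none) = 0 := by
    rw [S.ev_add _ hx, S.ev_sub _ hx, S.ev_rename _ hx, S.ev_rename _ hx, S.ev_X _ hx]
    change S.ev (fun j => lam j * c j) f - S.ev lam f + z = 0
    rw [← h]; ring
  have hω : ∀ ω : D.W, S.ev (fun j => lam j * c j) (comp (wtOf κ) ω f) -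
      S.ev lam (comp (wtOf κ) ω f) + (if ω = 0 then z else 0) = 0 := by
    intro ω
    have h1 := comp_eq_zero_of_ev hE hxH hx _ key ω
    rw [map_add, map_sub, comp_subst _ κ (fun j => hY _) (fun j => hYh (some (.inr j))),
      comp_subst _ κ (fun j => hY _) (fun j => hYh (some (.inl j))),
      comp_of_homog _ (hYh none), S.ev_add _ hx, S.ev_sub _ hx, S.ev_rename _ hx,
      S.ev_rename _ hx, apply_ite (S.ev x), S.ev_X _ hx, S.ev_zero _ hx] at h1
    by_cases h0 : ω = 0
    · rw [if_pos (show ω = κ' none from h0)] at h1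
      rw [if_pos h0]; exact h1
    · rw [if_neg (show ¬ ω = κ' none from h0)] at h1
      rw [if_neg h0]; exact h1
  have hscale := ev_scale (S := S) (wtOf κ) f lam c hl hc1 (prod_ex_eq X ψ hψ k t ht)
  constructor
  · have h1 := hω 0
    have h2 := hscale 0
    rw [map_zero, Finsupp.prod_zero_index, one_mul] at h2
    rwa [h2, sub_self, zero_add, if_pos rfl] at h1
  · intro β hβ
    have h1 := hω (wtOf κ β)
    have hne : wtOf κ β ≠ 0 := by
      rw [hκ, wtOf_mk]
      intro h0
      exact hβ (hψ _ (D.mk_eq_zero.1 h0))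
    rw [hscale β, if_neg hne, add_zero, (prod_ex X ψ k t ht β).1] at h1
    rw [← wtOf_mk]
    have h2 := X.ne _ (prod_ex X ψ k t ht β).2 (mul_ne_zero hβ ht0)
    have h3 : (X.ex (ψ (wtOf k β) * t) - 1) * S.ev lam (comp (wtOf κ) (wtOf κ β) f) = 0 := by
      rw [← h1]; ring
    exact (mul_eq_zero.1 h3).resolve_left (sub_ne_zero.2 h2)

end Section
end AnStr

variable {A : Type} [CommRing A] {F : Type} [Field F] {Γ₀ : Type}
  [LinearOrderedCommGroupWithZero Γ₀]

namespace AnStr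

variable {S : AnStr A F Γ₀} {σ τ : Type} [Finite σ] [Finite τ]

variable [IsNoetherianRing A] {E : Subfield F} {Z : Type} [CommRing Z]

theorem exists_scale (hE : S.Closed E) {ι : Type*} (s : Finset ι) (v : ι → F)
    (hv : ∀ i ∈ s, v i ∈ E) : ∃ δ ∈ E, δ ≠ 0 ∧ S.V δ < 1 ∧ ∀ i ∈ s, S.V (v i * δ) < 1 := by
  classical
  induction s using Finset.induction_on with
  | empty => exact ⟨S.ϖ, hE.ϖ_mem, S.ϖ_ne, S.ϖ_lt, by simp⟩
  | insert i s hi ih =>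
    obtain ⟨δ, hδE, h0, h1, h2⟩ := ih fun j hj => hv j (Finset.mem_insert_of_mem hj)
    rcases lt_or_ge (S.V (v i)) 1 with h | h
    · refine ⟨δ, hδE, h0, h1, fun j hj => ?_⟩
      rcases Finset.mem_insert.1 hj with rfl | hj
      · rw [map_mul]; exact mul_lt_one_of_lt_of_le h h1.le
      · exact h2 j hj
    · have hvi : v i ≠ 0 := by
        intro h0; rw [h0, map_zero] at h; exact absurd h (not_le.2 zero_lt_one)
      have hinv : S.V (v i)⁻¹ ≤ 1 := by
        rw [map_inv₀]; exact inv_le_one_of_one_le₀ h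
      refine ⟨δ * (v i)⁻¹, E.mul_mem hδE (E.inv_mem (hv i (Finset.mem_insert_self _ _))),
        mul_ne_zero h0 (inv_ne_zero hvi), ?_, fun j hj => ?_⟩
      · rw [map_mul]; exact mul_lt_one_of_lt_of_le h1 hinv
      · rcases Finset.mem_insert.1 hj with rfl | hj
        · rw [mul_comm δ, ← mul_assoc, mul_inv_cancel₀ hvi, one_mul]; exact h1
        · rw [← mul_assoc, map_mul]; exact mul_lt_one_of_lt_of_le (h2 j hj) hinv

namespace Section

variable {D : Section S E Z} {p : ℕ} (X : ExpData S p)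

section relation

variable {I J L : Type} [Fintype I] [Fintype J] [Fintype L]

/-- The relation `∑ j, α i j * exp (∑ l, α j l * y l)` as a power series. -/
noncomputable def rel (i : I) : MvPowerSeries (((I × J) ⊕ (J × L)) ⊕ L) A :=
  ∑ j, MvPowerSeries.X (.inl (.inl (i, j))) * MvPowerSeries.subst (fun _ : Unit =>
    ∑ l, (MvPowerSeries.X (.inl (.inr (j, l))) * MvPowerSeries.X (.inr l) :
      MvPowerSeries (((I × J) ⊕ (J × L)) ⊕ L) A)) X.e

theorem ev_rel (i : I) (α : (I × J) ⊕ (J × L) → F) (y : L → F) (hα : ∀ b, S.V (α b) < 1)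
    (hy : ∀ l, S.V (y l) < 1) : S.ev (Sum.elim α y) (rel X i) =
      ∑ j, α (.inl (i, j)) * X.ex (∑ l, α (.inr (j, l)) * y l) := by
  have hx : ∀ b, S.V (Sum.elim α y b) < 1 := by rintro (b | l); exacts [hα b, hy l]
  rw [rel, S.ev_sum _ hx]
  refine Finset.sum_congr rfl fun j _ => ?_
  rw [S.ev_mul _ hx, S.ev_X _ hx, S.ev_subst _ hx _ fun _ => by simp]
  simp only [S.ev_sum _ hx, S.ev_mul _ hx, S.ev_X _ hx]
  rfl

end relation

/-- **Isolated solutions of exponential systems over `E`.** If `y` is an isolated solution of a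
system `∑ j, B i j * P (∑ l, a j l * k l) * exp (∑ l, p * a j l * y l) = 0` with coefficients from
`E` and exponents from `R`, then all `k l` are in `R` and all `y l` are in `E`. -/
theorem isolated_mem_section (hE : S.Closed E) {I J L : Type} [Fintype I] [Fintype J] [Fintype L]
    (B : I → J → F) (hB : ∀ i j, B i j ∈ E) (a : J → L → Z) (ha : ∀ j l, a j l ∈ D.R)
    (k : L → Z) (y : L → F) (hy : ∀ l, S.V (y l) < 1)
    (hrel : ∀ i, ∑ j, B i j * D.P (∑ l, a j l * k l) * X.ex (∑ l, p * D.c (a j l) * y l) = 0)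
    (ε : F) (hε : ε ≠ 0)
    (hiso : ∀ y' : L → F, (∀ l, S.V (y' l) < 1) →
      (∀ i, ∑ j, B i j * D.P (∑ l, a j l * k l) * X.ex (∑ l, p * D.c (a j l) * y' l) = 0) →
      (∀ l, S.V (y' l - y l) < S.V ε) → y' = y) (l : L) : k l ∈ D.R ∧ y l ∈ E := by
  classical
  set K : J → Z := fun j => ∑ l, a j l * k l with hK
  have hM : ∀ i, ∃ kM : Z, ∃ eM ∈ E, eM ≠ 0 ∧ ∀ j, S.V (B i j * D.P (K j)) ≤ S.V (D.P kM * eM) := by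
    intro i
    by_cases h : ∃ j, B i j ≠ 0
    · obtain ⟨j₁, hj₁⟩ := h
      obtain ⟨j₀, -, hmax⟩ := Finset.univ.exists_max_image (fun j => S.V (B i j * D.P (K j)))
        ⟨j₁, Finset.mem_univ _⟩
      refine ⟨K j₀, B i j₀, hB _ _, fun h0 => ?_, fun j => ?_⟩
      · have := hmax j₁ (Finset.mem_univ _)
        rw [h0, zero_mul, map_zero, le_zero_iff, Valuation.zero_iff] at this
        exact mul_ne_zero hj₁ (D.P_ne _) this
      · rw [mul_comm (D.P _)]; exact hmax j (Finset.mem_univ _)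
    · push Not at h
      exact ⟨0, 1, E.one_mem, one_ne_zero, fun j => by rw [h j]; simp⟩
  choose kM eM heM heM0 hMle using hM
  have hPe : ∀ i, D.P (kM i) * eM i ≠ 0 := fun i => mul_ne_zero (D.P_ne _) (heM0 i)
  -- the normalized coefficients and exponents
  let α : (I × J) ⊕ (J × L) → F := Sum.elim
    (fun q => S.ϖ * (B q.1 q.2 * D.P (K q.2)) / (D.P (kM q.1) * eM q.1))
    (fun q => p * D.c (a q.1 q.2))
  let kα : (I × J) ⊕ (J × L) → Z := Sum.elim (fun q => K q.2 - kM q.1) fun _ => 0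
  have hpE : (p : F) ∈ E := natCast_mem E p
  have hαH : ∀ b, D.Hom ((kα b : Z) : D.W) (α b) := by
    rintro (⟨i, j⟩ | ⟨j, l⟩)
    · refine ⟨K j - kM i, rfl, S.ϖ * B i j / eM i, E.div_mem (E.mul_mem hE.ϖ_mem (hB _ _)) (heM i),
        ?_⟩
      simp only [α, Sum.elim_inl]
      rw [D.P_sub]
      have := heM0 i
      have := D.P_ne (kM i)
      field_simp
    · exact Hom.of_mem (E.mul_mem hpE (D.c_mem _ (ha j l)))
  have hα : ∀ b, S.V (α b) < 1 := by
    rintro (⟨i, j⟩ | ⟨j, l⟩)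
    · simp only [α, Sum.elim_inl]
      rw [mul_div_assoc, map_mul, map_div₀]
      refine lt_of_le_of_lt (mul_le_of_le_one_right' ?_) S.ϖ_lt
      exact div_le_one_of_le₀ (hMle i j) zero_le
    · simp only [α, Sum.elim_inr]
      rw [map_mul]
      exact mul_lt_one_of_lt_of_le X.p_lt (D.c_le _)
  have hrel' : ∀ (y' : L → F), (∀ l, S.V (y' l) < 1) → ∀ i, S.ev (Sum.elim α y') (rel X i) =
      S.ϖ / (D.P (kM i) * eM i) *
        ∑ j, B i j * D.P (K j) * X.ex (∑ l, p * D.c (a j l) * y' l) := by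
    intro y' hy' i
    rw [ev_rel X i α y' hα hy', Finset.mul_sum]
    refine Finset.sum_congr rfl fun j _ => ?_
    simp only [α, Sum.elim_inl, Sum.elim_inr]
    ring
  have hL := D.leading hE
  have hαL : ∀ b, α b ∈ D.Lam := fun b => ⟨⟨_, hαH b⟩, hα b⟩
  have hyL := isolated_mem α hα (fun i : I => rel X i) y hy
    (fun i => by rw [hrel' y hy, hrel i, mul_zero]) ε hε
    (fun y' hy' h hle => hiso y' hy' (fun i => by
      have := h i
      rw [hrel' y' hy'] at this
      exact (mul_eq_zero.1 this).resolve_left (div_ne_zero S.ϖ_ne (hPe i))) hle)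
    _ _ hL.toSubfield_closed (D.leading_full hE)
    (fun b => hL.A0_sub (An0_self Lam_small (hαL b))) le_rfl
  obtain ⟨τ, _, lam, f, hlamL, hf0, hyf⟩ :=
    An0_merge Lam_small fun l => hL.small_mem (hyL l) (hy l)
  choose kτ' hkτ' using fun j => (hlamL j).1
  choose kτ hkτ using fun j => QuotientAddGroup.mk_surjective (kτ' j)
  let x : ((I × J) ⊕ (J × L)) ⊕ τ → F := Sum.elim α lam
  let k' : ((I × J) ⊕ (J × L)) ⊕ τ → Z := Sum.elim kα kτ
  have hx : ∀ b, S.V (x b) < 1 := by rintro (b | j); exacts [hα b, (hlamL j).2]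
  have hxH : ∀ b, D.Hom ((k' b : Z) : D.W) (x b) := by
    rintro (b | j)
    · exact hαH b
    · have := hkτ' j
      rwa [← hkτ j] at this
  let f' : L → MvPowerSeries (((I × J) ⊕ (J × L)) ⊕ τ) A := fun l => MvPowerSeries.subst
    (fun j => (MvPowerSeries.X (.inr j) : MvPowerSeries (((I × J) ⊕ (J × L)) ⊕ τ) A)) (f l)
  have hf'0 : ∀ l, (f' l).constantCoeff = 0 := fun l =>
    cc_subst (fun _ => MvPowerSeries.constantCoeff_X _) (hf0 l)
  have hyf' : ∀ l, S.ev x (f' l) = y l := fun l => by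
    rw [S.ev_rename x hx, hyf l]; rfl
  let hh : ((I × J) ⊕ (J × L)) ⊕ L → MvPowerSeries (((I × J) ⊕ (J × L)) ⊕ τ) A :=
    Sum.elim (fun b => MvPowerSeries.X (.inl b)) f'
  have hh0 : ∀ b, (hh b).constantCoeff = 0 := by
    rintro (b | l)
    · exact MvPowerSeries.constantCoeff_X _
    · exact hf'0 l
  have hHev : ∀ (x' : ((I × J) ⊕ (J × L)) ⊕ τ → F), (∀ b, S.V (x' b) < 1) → ∀ i,
      S.ev x' (MvPowerSeries.subst hh (rel X i)) =
        ∑ j, x' (.inl (.inl (i, j))) *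
          X.ex (∑ l, x' (.inl (.inr (j, l))) * S.ev x' (f' l)) := by
    intro x' hx' i
    rw [S.ev_subst x' hx' _ hh0]
    have : (fun b => S.ev x' (hh b)) = Sum.elim (fun b => x' (.inl b)) fun l => S.ev x' (f' l) := by
      funext b
      rcases b with b | l
      · exact S.ev_X x' hx' _
      · rfl
    rw [this, ev_rel X i _ _ (fun b => hx' _) fun l => S.ev_lt x' hx' _ (hf'0 l)]
  have hH0 : ∀ i, S.ev x (MvPowerSeries.subst hh (rel X i)) = 0 := by
    intro i
    rw [hHev x hx]
    have h1 := hrel' y hy i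
    rw [ev_rel X i α y hα hy, hrel i, mul_zero] at h1
    simp only [hyf']
    exact h1
  have hpF : (p : F) ≠ 0 := S.natCast_ne X.p_ne
  -- every admissible `ψ` kills `k` and the weights occurring in `f'`
  have claim : ∀ ψ : Z →+ F, (∀ z, ψ z ∈ E) → (∀ r ∈ D.R, ∀ z, ψ (r * z) = D.c r * ψ z) →
      (∀ r ∈ D.R, ψ r = 0) → ∀ l, ψ (k l) = 0 ∧ ∀ β, ψ (wtOf k' β) ≠ 0 →
      S.ev x (comp (wtOf fun j => ((k' j : Z) : D.W)) ((wtOf k' β : Z) : D.W) (f' l)) = 0 := by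
    intro ψ hψE hψR hψ l
    have := Fintype.ofFinite τ
    obtain ⟨δ, hδE, hδ0, hδ1, hδ⟩ := exists_scale hE Finset.univ
      (Sum.elim (fun b => ψ (k' b)) (Sum.elim (fun i => ψ (kM i)) fun l => ψ (k l) / p))
      (by rintro (b | i | l) -; exacts [hψE _, hψE _, E.div_mem (hψE _) hpE])
    have hs1 : ∀ b, S.V (ψ (k' b) * δ) < 1 := fun b => hδ (.inl b) (Finset.mem_univ _)
    have hs2 : ∀ i, S.V (ψ (kM i) * δ) < 1 := fun i => hδ (.inr (.inl i)) (Finset.mem_univ _)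
    have hs3 : ∀ l, S.V (ψ (k l) / p * δ) < 1 := fun l => hδ (.inr (.inr l)) (Finset.mem_univ _)
    have small : ∀ {v t : F}, S.V (v * δ) < 1 → S.V t < 1 → S.V (v * (δ * t)) < 1 := by
      intro v t hv ht
      rw [← mul_assoc, map_mul]; exact mul_lt_one_of_lt_of_le hv ht.le
    have main : ∀ t, S.V t < 1 → S.V t < S.V ε →
        (fun l => S.ev (fun b => x b * X.ex (ψ (k' b) * δ * t)) (f' l) + ψ (k l) / p * δ * t) =
          y := by
      intro t ht htε
      have hxc : ∀ b, S.V (x b * X.ex (ψ (k' b) * δ * t)) < 1 := fun b => by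
        rw [map_mul, mul_assoc, X.V_ex (small (hs1 b) ht), mul_one]; exact hx b
      have husm : ∀ l, S.V (S.ev (fun b => x b * X.ex (ψ (k' b) * δ * t)) (f' l)) < 1 := fun l =>
        S.ev_lt _ hxc _ (hf'0 l)
      have hzsm : ∀ l, S.V (ψ (k l) / p * δ * t) < 1 := fun l => by
        rw [mul_assoc]; exact small (hs3 l) ht
      refine hiso _ (fun l => ?_) (fun i => ?_) fun l => ?_
      · exact Valuation.map_add_lt _ (husm l) (hzsm l)
      · have h1 := ev_scale_eq_zero hE hxH hx (fun b => X.ex (ψ (k' b) * (δ * t)))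
          (fun b => (X.V_ex (small (hs1 b) ht)).le)
          (prod_ex_eq X ψ hψ k' (δ * t) fun b => small (hs1 b) ht) _ (hH0 i)
        simp only [← mul_assoc] at h1
        rw [hHev _ hxc] at h1
        set u : L → F := fun l => S.ev (fun b => x b * X.ex (ψ (k' b) * δ * t)) (f' l) with hu
        have hterm : ∀ j, B i j * D.P (K j) *
            X.ex (∑ l, p * D.c (a j l) * (u l + ψ (k l) / p * δ * t)) =
            (D.P (kM i) * eM i) / S.ϖ * X.ex (ψ (kM i) * (δ * t)) *
              (x (.inl (.inl (i, j))) * X.ex (ψ (k' (.inl (.inl (i, j)))) * δ * t) *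
              X.ex (∑ l, x (.inl (.inr (j, l))) * X.ex (ψ (k' (.inl (.inr (j, l)))) * δ * t) *
                u l)) := by
          intro j
          have e1 : ∑ l, p * D.c (a j l) * (u l + ψ (k l) / p * δ * t) =
              ∑ l, p * D.c (a j l) * u l + (ψ (K j - kM i) * (δ * t) + ψ (kM i) * (δ * t)) := by
            have e2 : ψ (K j) = ∑ l, D.c (a j l) * ψ (k l) := by
              rw [hK, map_sum]
              exact Finset.sum_congr rfl fun l _ => hψR _ (ha j l) _
            rw [map_sub, e2, ← add_mul, sub_add_cancel, Finset.sum_mul, ← Finset.sum_add_distrib]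
            refine Finset.sum_congr rfl fun l _ => ?_
            field_simp
          have e3 : ∀ l, x (.inl (.inr (j, l))) * X.ex (ψ (k' (.inl (.inr (j, l)))) * δ * t) * u l =
              p * D.c (a j l) * u l := by
            intro l
            have : ψ (k' (.inl (.inr (j, l)))) = 0 := map_zero ψ
            rw [this, zero_mul, zero_mul, X.ex_zero, mul_one]
            rfl
          have s1 : S.V (∑ l, p * D.c (a j l) * u l) < 1 := ExpData.V_sum_lt _ fun l _ => by
            rw [map_mul, map_mul]
            exact mul_lt_one_of_lt_of_le (mul_lt_one_of_lt_of_le X.p_lt (D.c_le _)) (husm l).le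
          have s2 : S.V (ψ (K j - kM i) * (δ * t)) < 1 := small (hs1 (.inl (.inl (i, j)))) ht
          have s3 : S.V (ψ (kM i) * (δ * t)) < 1 := small (hs2 i) ht
          simp only [e3]
          rw [e1, X.ex_add s1 (Valuation.map_add_lt _ s2 s3), X.ex_add s2 s3, mul_assoc _ δ t]
          change _ = D.P (kM i) * eM i / S.ϖ * X.ex (ψ (kM i) * (δ * t)) *
            (S.ϖ * (B i j * D.P (K j)) / (D.P (kM i) * eM i) * X.ex (ψ (K j - kM i) * (δ * t)) *
              X.ex (∑ l, p * D.c (a j l) * u l))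
          have := S.ϖ_ne
          have := heM0 i
          have := D.P_ne (kM i)
          field_simp
        rw [Finset.sum_congr rfl fun j _ => hterm j, ← Finset.mul_sum, h1, mul_zero]
      · rw [← hyf' l]
        exact lt_of_le_of_lt (deform_close X hx _ hs1 (f' l) _ (hs3 l) t ht) htε
    have h2 := deform_identity X hx (fun b => ψ (k' b) * δ) hs1 (f' l) (ψ (k l) / p * δ) (hs3 l) ε
      hε (fun t ht ht' => by rw [hyf' l]; exact congrFun (main t ht ht') l) S.ϖ S.ϖ_lt
    simp only [mul_assoc] at h2
    have hz1 : S.V (ψ (k l) / p * (δ * S.ϖ)) < 1 := small (hs3 l) S.ϖ_lt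
    have h3 := deform_zero X hE k' hxH hx ψ hψE hψ (δ * S.ϖ) (E.mul_mem hδE hE.ϖ_mem)
      (mul_ne_zero hδ0 S.ϖ_ne) (fun b => small (hs1 b) S.ϖ_lt) (f' l) _
      (E.mul_mem (E.div_mem (hψE _) hpE) (E.mul_mem hδE hE.ϖ_mem)) hz1 h2
    refine ⟨?_, h3.2⟩
    have h4 := h3.1
    simpa [hpF, hδ0, S.ϖ_ne] using h4
  constructor
  · by_contra hk
    obtain ⟨ψ, h1, h2, h3, h4⟩ := D.sep _ hk
    exact h4 (claim ψ h1 h2 h3 l).1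
  · rw [← hyf' l]
    refine ev_eq_of_comp hx (f' l) (fun ω hω => ?_) hE hxH
    by_cases hβ : ∃ β, wtOf (fun j => ((k' j : Z) : D.W)) β = ω
    · obtain ⟨β, rfl⟩ := hβ
      rw [wtOf_mk] at hω ⊢
      obtain ⟨ψ, h1, h2, h3, h4⟩ := D.sep (wtOf k' β) fun h => hω (D.mk_eq_zero.2 h)
      exact (claim ψ h1 h2 h3 l).2 β h4
    · have : comp (wtOf fun j => ((k' j : Z) : D.W)) ω (f' l) = 0 := by
        ext β
        rw [coeff_comp, if_neg fun h => hβ ⟨β, h⟩, map_zero]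
      rw [this, S.ev_zero _ hx]

end Section
end AnStr

/-! ### Evaluation of power series in a complete ultrametric field -/

section Eval

variable {A : Type} [CommRing A] {K : Type} [NormedField K] [IsUltrametricDist K]
  {σ τ : Type} [Finite σ] [Finite τ]

theorem norm_tsum_le_of {ι : Type} {f : ι → K} {C : ℝ} (hC : 0 ≤ C) (hf : ∀ i, ‖f i‖ ≤ C) :
    ‖∑' i, f i‖ ≤ C := by
  by_cases hs : Summable f
  · have h := hs.hasSum
    refine le_of_tendsto (continuous_norm.continuousAt.tendsto.comp h) (Eventually.of_forall ?_)
    intro s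
    exact IsUltrametricDist.norm_sum_le_of_forall_le_of_nonneg hC fun i _ => hf i
  · rw [tsum_eq_zero_of_not_summable hs, norm_zero]
    exact hC

/-- The term of index `β` in the series `f(x)`. -/
noncomputable def term (φ : A →+* K) (x : σ → K) (f : MvPowerSeries σ A) (β : σ →₀ ℕ) : K :=
  φ (MvPowerSeries.coeff β f) * β.prod fun j n => x j ^ n

/-- The value `f(x)` of a power series `f` with coefficients in `A`, viewed in `K` through `φ`. -/
noncomputable def evK (φ : A →+* K) (x : σ → K) (f : MvPowerSeries σ A) : K :=
  ∑' β, term φ x f β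

theorem exists_rho (x : σ → K) (hx : ∀ j, ‖x j‖ < 1) :
    ∃ ρ : ℝ, 0 < ρ ∧ ρ < 1 ∧ ∀ j, ‖x j‖ ≤ ρ := by
  classical
  have := Fintype.ofFinite σ
  obtain ⟨r, hr⟩ : ∃ r : ℝ, r < 1 ∧ ∀ j, ‖x j‖ ≤ r := by
    rcases isEmpty_or_nonempty σ with h | h
    · exact ⟨0, zero_lt_one, fun j => (h.false j).elim⟩
    · obtain ⟨j, hj⟩ := Finite.exists_max fun j => ‖x j‖
      exact ⟨‖x j‖, hx j, hj⟩
  exact ⟨max r (1 / 2), by positivity, max_lt hr.1 (by norm_num),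
    fun j => (hr.2 j).trans (le_max_left _ _)⟩

variable {φ : A →+* K}

theorem norm_prod_le {x : σ → K} {ρ : ℝ} (hxρ : ∀ j, ‖x j‖ ≤ ρ) (β : σ →₀ ℕ) :
    ‖β.prod fun j n => x j ^ n‖ ≤ ρ ^ β.degree := by
  rw [Finsupp.prod, norm_prod, Finsupp.degree_apply, ← Finset.prod_pow_eq_pow_sum]
  refine Finset.prod_le_prod (fun _ _ => norm_nonneg _) fun j _ => ?_
  rw [norm_pow]
  exact pow_le_pow_left₀ (norm_nonneg _) (hxρ j) _

theorem norm_term_le (hφ : ∀ a, ‖φ a‖ ≤ 1) {x : σ → K} {ρ : ℝ}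
    (hxρ : ∀ j, ‖x j‖ ≤ ρ) (f : MvPowerSeries σ A) (β : σ →₀ ℕ) :
    ‖term φ x f β‖ ≤ ρ ^ β.degree := by
  rw [term, norm_mul]
  refine (mul_le_mul (hφ _) (norm_prod_le hxρ β) (norm_nonneg _) zero_le_one).trans ?_
  rw [one_mul]

theorem summable_term [CompleteSpace K] (hφ : ∀ a, ‖φ a‖ ≤ 1) {x : σ → K}
    (hx : ∀ j, ‖x j‖ < 1) (f : MvPowerSeries σ A) : Summable (term φ x f) := by
  obtain ⟨ρ, h0, h1, hρ⟩ := exists_rho x hx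
  refine NonarchimedeanAddGroup.summable_of_tendsto_cofinite_zero ?_
  rw [Metric.tendsto_nhds]
  intro ε hε
  obtain ⟨N, hN⟩ := exists_pow_lt_of_lt_one hε h1
  rw [eventually_cofinite]
  refine (Finsupp.finite_of_degree_le N).subset fun β hβ => ?_
  by_contra hc
  refine hβ ?_
  rw [dist_zero_right]
  refine (norm_term_le hφ hρ f β).trans_lt (lt_of_le_of_lt ?_ hN)
  exact pow_le_pow_of_le_one h0.le h1.le (not_le.1 hc).le

theorem norm_evK_le (hφ : ∀ a, ‖φ a‖ ≤ 1) {x : σ → K} {ρ : ℝ} (h0 : 0 ≤ ρ) (h1 : ρ ≤ 1)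
    (hxρ : ∀ j, ‖x j‖ ≤ ρ) (f : MvPowerSeries σ A) (n : ℕ) (hf : (n : ℕ∞) ≤ f.order) :
    ‖evK φ x f‖ ≤ ρ ^ n := by
  refine norm_tsum_le_of (pow_nonneg h0 n) fun β => ?_
  by_cases hβ : β.degree < n
  · rw [term, MvPowerSeries.coeff_of_lt_order (lt_of_lt_of_le (by exact_mod_cast hβ) hf), map_zero,
      zero_mul, norm_zero]
    exact pow_nonneg h0 n
  · exact (norm_term_le hφ hxρ f β).trans (pow_le_pow_of_le_one h0 h1 (not_lt.1 hβ))

theorem evK_monomial (x : σ → K) (β : σ →₀ ℕ) (r : A) :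
    evK φ x (MvPowerSeries.monomial β r) = φ r * β.prod fun j n => x j ^ n := by
  classical
  rw [evK, tsum_eq_single β]
  · rw [term, MvPowerSeries.coeff_monomial, if_pos rfl]
  · intro b hb
    rw [term, MvPowerSeries.coeff_monomial, if_neg hb, map_zero, zero_mul]

theorem evK_add [CompleteSpace K] (hφ : ∀ a, ‖φ a‖ ≤ 1) {x : σ → K}
    (hx : ∀ j, ‖x j‖ < 1) (f g : MvPowerSeries σ A) :
    evK φ x (f + g) = evK φ x f + evK φ x g := by
  rw [evK, evK, evK, ← (summable_term hφ hx f).tsum_add (summable_term hφ hx g)]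
  refine tsum_congr fun β => ?_
  rw [term, term, term, map_add, map_add, add_mul]

/-- A continuous additive functional on power series is determined by its values on monomials. -/
theorem functional_zero {Φ : MvPowerSeries σ A → K}
    (hadd : ∀ f g, Φ (f + g) = Φ f + Φ g) {ρ : ℝ} (h0 : 0 ≤ ρ) (h1 : ρ < 1)
    (hΦ : ∀ (f : MvPowerSeries σ A) (n : ℕ), (n : ℕ∞) ≤ f.order → ‖Φ f‖ ≤ ρ ^ n)
    (hm : ∀ β r, Φ (MvPowerSeries.monomial β r) = 0) (f : MvPowerSeries σ A) : Φ f = 0 := by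
  let Φ' : MvPowerSeries σ A →+ K := AddMonoidHom.mk' Φ hadd
  have key : ∀ n : ℕ, ‖Φ f‖ ≤ ρ ^ n := by
    intro n
    have h := order_sub_truncTotal f n
    have h2 := hΦ _ n h
    have h3 : Φ' (f - (MvPowerSeries.truncTotal n f : MvPolynomial σ A)) = Φ' f := by
      rw [map_sub, addHom_coe_eq_zero Φ' hm, sub_zero]
    change Φ _ = Φ _ at h3
    rwa [h3] at h2
  have h4 : ‖Φ f‖ ≤ 0 :=
    ge_of_tendsto (tendsto_pow_atTop_nhds_zero_of_lt_one h0 h1) (Eventually.of_forall key)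
  exact norm_le_zero_iff.1 h4

theorem norm_sub_le_of {a b : K} {C : ℝ} (ha : ‖a‖ ≤ C) (hb : ‖b‖ ≤ C) : ‖a - b‖ ≤ C := by
  rw [sub_eq_add_neg]
  exact (IsUltrametricDist.norm_add_le_max a (-b)).trans (max_le ha (by rwa [norm_neg]))

theorem norm_evK_le_one (hφ : ∀ a, ‖φ a‖ ≤ 1) {x : σ → K} (hx : ∀ j, ‖x j‖ < 1)
    (f : MvPowerSeries σ A) : ‖evK φ x f‖ ≤ 1 := by
  obtain ⟨ρ, h0, h1, hρ⟩ := exists_rho x hx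
  simpa using norm_evK_le hφ h0.le h1.le hρ f 0 (by simp)

theorem norm_evK_lt_one (hφ : ∀ a, ‖φ a‖ ≤ 1) {x : σ → K} (hx : ∀ j, ‖x j‖ < 1)
    (f : MvPowerSeries σ A) (hf : f.constantCoeff = 0) : ‖evK φ x f‖ < 1 := by
  obtain ⟨ρ, h0, h1, hρ⟩ := exists_rho x hx
  refine lt_of_le_of_lt (norm_evK_le hφ h0.le h1.le hρ f 1 ?_) (by rwa [pow_one])
  exact cc_one_le hf

theorem evK_mul [CompleteSpace K] (hφ : ∀ a, ‖φ a‖ ≤ 1) {x : σ → K}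
    (hx : ∀ j, ‖x j‖ < 1) (f g : MvPowerSeries σ A) :
    evK φ x (f * g) = evK φ x f * evK φ x g := by
  obtain ⟨ρ, h0, h1, hρ⟩ := exists_rho x hx
  have hbound : ∀ (f g : MvPowerSeries σ A) (n : ℕ), (n : ℕ∞) ≤ f.order →
      ‖evK φ x (f * g) - evK φ x f * evK φ x g‖ ≤ ρ ^ n := by
    intro f g n hn
    refine norm_sub_le_of (norm_evK_le hφ h0.le h1.le hρ _ n
      ((le_add_right hn).trans MvPowerSeries.le_order_mul)) ?_
    rw [norm_mul]
    exact (mul_le_of_le_one_right (norm_nonneg _) (norm_evK_le_one hφ hx g)).trans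
      (norm_evK_le hφ h0.le h1.le hρ _ n hn)
  refine sub_eq_zero.1 (functional_zero (Φ := fun f => evK φ x (f * g) - evK φ x f * evK φ x g)
    (fun f f' => ?_) h0.le h1 (fun f n hn => hbound f g n hn) (fun β r => ?_) f)
  · rw [add_mul, evK_add hφ hx, evK_add hφ hx]; ring
  · refine functional_zero (Φ := fun g => evK φ x (MvPowerSeries.monomial β r * g) -
      evK φ x (MvPowerSeries.monomial β r) * evK φ x g)
      (fun f f' => ?_) h0.le h1 (fun f n hn => ?_) (fun γ s => ?_) g
    · rw [mul_add, evK_add hφ hx, evK_add hφ hx]; ring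
    · have := hbound f (MvPowerSeries.monomial β r) n hn
      rwa [mul_comm f, mul_comm (evK φ x f)] at this
    · rw [MvPowerSeries.monomial_mul_monomial, evK_monomial, evK_monomial, evK_monomial, map_mul,
        Finsupp.prod_add_index' (fun _ => pow_zero _) (fun _ _ _ => pow_add _ _ _)]
      ring

theorem evK_one (x : σ → K) : evK φ x (1 : MvPowerSeries σ A) = 1 := by
  have h : (1 : MvPowerSeries σ A) = MvPowerSeries.monomial 0 1 := rfl
  rw [h, evK_monomial, map_one, Finsupp.prod_zero_index, mul_one]

theorem evK_X (x : σ → K) (j : σ) : evK φ x (MvPowerSeries.X j : MvPowerSeries σ A) = x j := by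
  rw [MvPowerSeries.X, evK_monomial, map_one, one_mul, Finsupp.prod_single_index (h := fun j n => x j ^ n) (pow_zero _),
    pow_one]

theorem evK_C (x : σ → K) (r : A) : evK φ x (MvPowerSeries.C r : MvPowerSeries σ A) = φ r := by
  have h : (MvPowerSeries.C r : MvPowerSeries σ A) = MvPowerSeries.monomial 0 r := rfl
  rw [h, evK_monomial, Finsupp.prod_zero_index, mul_one]

theorem evK_subst [CompleteSpace K] (hφ : ∀ a, ‖φ a‖ ≤ 1) {x : τ → K} (hx : ∀ j, ‖x j‖ < 1)
    (g : σ → MvPowerSeries τ A) (hg : ∀ j, (g j).constantCoeff = 0) (f : MvPowerSeries σ A) :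
    evK φ x (MvPowerSeries.subst g f) = evK φ (fun j => evK φ x (g j)) f := by
  obtain ⟨ρ, h0, h1, hρ⟩ := exists_rho x hx
  have hsg := hs hg
  have hy : ∀ j, ‖evK φ x (g j)‖ ≤ ρ := fun j => by
    simpa using norm_evK_le hφ h0.le h1.le hρ (g j) 1 (cc_one_le (hg j))
  have hy1 : ∀ j, ‖evK φ x (g j)‖ < 1 := fun j => (hy j).trans_lt h1
  let evH : MvPowerSeries τ A →+* K :=
    { toFun := evK φ x, map_one' := evK_one x, map_mul' := evK_mul hφ hx,
      map_add' := evK_add hφ hx,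
      map_zero' := by simpa using evK_add hφ hx 0 0 }
  refine sub_eq_zero.1 (functional_zero (Φ := fun f => evK φ x (MvPowerSeries.subst g f) -
      evK φ (fun j => evK φ x (g j)) f)
    (fun f f' => ?_) h0.le h1 (fun f n hn => ?_) (fun β r => ?_) f)
  · rw [MvPowerSeries.subst_add hsg, evK_add hφ hx, evK_add hφ hy1]; ring
  · exact norm_sub_le_of (norm_evK_le hφ h0.le h1.le hρ _ n (hn.trans (order_le_order_subst hg f)))
      (norm_evK_le hφ h0.le h1.le hy _ n hn)
  · rw [sub_eq_zero, MvPowerSeries.subst_monomial hsg, evK_monomial, evK_mul hφ hx,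
      ← MvPowerSeries.c_eq_algebraMap, evK_C]
    congr 1
    change evH _ = _
    rw [Finsupp.prod, map_prod]
    simp only [map_pow]
    rfl

end Eval

/-! ### The exponential series of `p X` -/

section ExpSeries

variable (p : ℕ) [Fact p.Prime]

theorem exists_divFactorial (n : ℕ) (hn : n ≠ 0) :
    ∃ d : ℤ_[p], d * (n.factorial : ℤ_[p]) = (p : ℤ_[p]) ^ (n - 1) := by
  have hp := Fact.out (p := p.Prime)
  have h1 : (p - 1) * padicValNat p n.factorial < n :=
    sub_one_mul_padicValNat_factorial_lt_of_ne_zero p hn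
  have h2 : padicValNat p n.factorial ≤ n - 1 := by
    have : 1 ≤ p - 1 := Nat.le_sub_one_of_lt hp.one_lt
    have := Nat.mul_le_mul_right (padicValNat p n.factorial) this
    omega
  obtain ⟨u, hu, hpu⟩ : ∃ u, n.factorial = p ^ padicValNat p n.factorial * u ∧ ¬ p ∣ u := by
    refine ⟨n.factorial / p ^ padicValNat p n.factorial,
      (Nat.mul_div_cancel' pow_padicValNat_dvd).symm, ?_⟩
    intro hdvd
    have h3 : p ^ (padicValNat p n.factorial + 1) ∣ n.factorial := by
      rw [pow_succ]
      conv_rhs => rw [← Nat.mul_div_cancel' (pow_padicValNat_dvd (p := p) (n := n.factorial))]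
      exact Nat.mul_dvd_mul_left _ hdvd
    exact pow_succ_padicValNat_not_dvd n.factorial_ne_zero h3
  have hunit : IsUnit (u : ℤ_[p]) := by
    rw [PadicInt.isUnit_iff]
    have := (PadicInt.norm_int_lt_one_iff_dvd (p := p) (u : ℤ)).not.2 (by exact_mod_cast hpu)
    have h4 := PadicInt.norm_le_one (u : ℤ_[p])
    push_cast at this
    exact le_antisymm h4 (not_lt.1 this)
  obtain ⟨v, hv⟩ := hunit
  refine ⟨p ^ (n - 1 - padicValNat p n.factorial) * ((v⁻¹ : (ℤ_[p])ˣ) : ℤ_[p]), ?_⟩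
  set N := padicValNat p n.factorial with hN
  rw [hu]
  push_cast
  rw [← hv]
  calc (p : ℤ_[p]) ^ (n - 1 - N) * ((v⁻¹ : (ℤ_[p])ˣ) : ℤ_[p]) * (p ^ N * v)
      = (p ^ (n - 1 - N) * p ^ N) * (((v⁻¹ : (ℤ_[p])ˣ) : ℤ_[p]) * v) := by ring
    _ = p ^ (n - 1) := by
      rw [← pow_add, Nat.sub_add_cancel h2, Units.inv_mul, mul_one]

/-- The `p`-adic integers `p ^ (n - 1) / n!`, for `n ≥ 1`. -/
noncomputable def dco (n : ℕ) : ℤ_[p] :=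
  if hn : n = 0 then 0 else (exists_divFactorial p n hn).choose

theorem dco_spec {n : ℕ} (hn : n ≠ 0) :
    dco p n * (n.factorial : ℤ_[p]) = (p : ℤ_[p]) ^ (n - 1) := by
  rw [dco, dif_neg hn]
  exact (exists_divFactorial p n hn).choose_spec

theorem dco_one : dco p 1 = 1 := by
  simpa using dco_spec p one_ne_zero

/-- The part of degree at least two of the series `(exp (p X) - 1) / p`. -/
noncomputable def tailSeries : MvPowerSeries Unit ℤ_[p] :=
  fun β => if β () ≤ 1 then 0 else dco p (β ())

/-- The part of degree at least two of the series `(exp (p ^ 2 X) - 1) / p ^ 2`. -/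
noncomputable def tailSeries' : MvPowerSeries Unit ℤ_[p] :=
  fun β => if β () ≤ 1 then 0 else dco p (β ()) * p ^ (β () - 1)

/-- The series `exp (p X)`. -/
noncomputable def expSeries : MvPowerSeries Unit ℤ_[p] :=
  1 + MvPowerSeries.C (p : ℤ_[p]) * (MvPowerSeries.X () + tailSeries p)

theorem degree_unit (β : Unit →₀ ℕ) : β.degree = β () := by
  rw [Finsupp.degree_eq_sum]; simp

theorem two_le_order_tail : ((2 : ℕ) : ℕ∞) ≤ (tailSeries p).order := by
  refine MvPowerSeries.le_order fun d hd => ?_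
  rw [degree_unit] at hd
  exact if_pos (Nat.le_of_lt_succ (by exact_mod_cast hd))

theorem two_le_order_tail' : ((2 : ℕ) : ℕ∞) ≤ (tailSeries' p).order := by
  refine MvPowerSeries.le_order fun d hd => ?_
  rw [degree_unit] at hd
  exact if_pos (Nat.le_of_lt_succ (by exact_mod_cast hd))

theorem cc_tail : (tailSeries p).constantCoeff = 0 :=
  cc_of_one_le (le_trans (by norm_num) (two_le_order_tail p))

theorem cc_tail' : (tailSeries' p).constantCoeff = 0 :=
  cc_of_one_le (le_trans (by norm_num) (two_le_order_tail' p))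

theorem cc_expSeries : (expSeries p).constantCoeff = 1 := by
  rw [expSeries, map_add, map_mul, map_add, cc_tail, MvPowerSeries.constantCoeff_X]; simp

theorem coeff_expSeries_mul (β : Unit →₀ ℕ) :
    MvPowerSeries.coeff β (expSeries p) * ((β ()).factorial : ℤ_[p]) = p ^ (β ()) := by
  classical
  rw [expSeries, map_add, MvPowerSeries.coeff_C_mul, map_add, MvPowerSeries.coeff_one,
    MvPowerSeries.coeff_X]
  have htail : MvPowerSeries.coeff β (tailSeries p) = if β () ≤ 1 then 0 else dco p (β ()) := rfl
  rw [htail]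
  have hβ : β = Finsupp.single () (β ()) := by ext; simp
  rcases Nat.lt_or_ge 1 (β ()) with h | h
  · rw [if_neg (not_le.2 h), if_neg, if_neg, zero_add, zero_add, mul_assoc,
      dco_spec p (by omega), ← pow_succ', Nat.sub_add_cancel h.le]
    · intro h2; rw [h2] at h; simp at h
    · intro h2; rw [h2] at h; simp at h
  · rw [if_pos h]
    rcases Nat.lt_or_ge (β ()) 1 with h1 | h1
    · have h0 : β () = 0 := by omega
      rw [if_pos (by rw [hβ, h0]; simp), if_neg (by
        rw [hβ, h0]; exact fun h => by simpa using DFunLike.congr_fun h ()), h0]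
      simp
    · have h0 : β () = 1 := by omega
      rw [if_neg (by rw [hβ, h0]; simp), if_pos (by rw [hβ, h0]), h0]
      simp

end ExpSeries

section ExpK

variable (p : ℕ) [Fact p.Prime] {K : Type} [NormedField K] [IsUltrametricDist K]
  [NormedAlgebra ℚ_[p] K]

variable (K) in
/-- The embedding of `ℤ_p`. -/
noncomputable def emb : ℤ_[p] →+* K := (algebraMap ℚ_[p] K).comp PadicInt.Coe.ringHom

theorem norm_emb (r : ℤ_[p]) : ‖emb p K r‖ = ‖r‖ := by
  change ‖algebraMap ℚ_[p] K r‖ = ‖r‖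
  rw [norm_algebraMap']; rfl

theorem emb_le (r : ℤ_[p]) : ‖emb p K r‖ ≤ 1 := by
  rw [norm_emb]; exact PadicInt.norm_le_one r

theorem charZeroK (p : ℕ) [Fact p.Prime] (K : Type) [NormedField K] [NormedAlgebra ℚ_[p] K] :
    CharZero K :=
  have _ : CharZero ℚ_[p] := inferInstance
  charZero_of_injective_algebraMap (algebraMap ℚ_[p] K).injective

theorem emb_p : emb p K (p : ℤ_[p]) = (p : K) := map_natCast _ _

theorem norm_p : ‖(p : K)‖ = (p : ℝ)⁻¹ := by
  rw [← emb_p, norm_emb, PadicInt.norm_p]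

theorem norm_p_lt : ‖(p : K)‖ < 1 := by
  rw [norm_p]
  exact inv_lt_one_of_one_lt₀ (by exact_mod_cast (Fact.out (p := p.Prime)).one_lt)

theorem p_ne : (p : K) ≠ 0 := by
  have := charZeroK p K
  exact_mod_cast (Fact.out (p := p.Prime)).ne_zero

theorem evK_unit {A : Type} [CommRing A] (φ : A →+* K) (x : K) (f : MvPowerSeries Unit A) :
    evK φ (fun _ => x) f =
      ∑' n : ℕ, φ (MvPowerSeries.coeff (Finsupp.single () n) f) * x ^ n := by
  let e : ℕ ≃ (Unit →₀ ℕ) :=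
    { toFun := fun n => Finsupp.single () n
      invFun := fun β => β ()
      left_inv := fun n => by simp
      right_inv := fun β => by ext; simp }
  rw [evK, ← e.tsum_eq]
  refine tsum_congr fun n => ?_
  change φ (MvPowerSeries.coeff (Finsupp.single () n) f) * (Finsupp.single () n).prod _ = _
  rw [Finsupp.prod_single_index (h := fun _ n => x ^ n) (pow_zero _)]

variable (K) in
/-- The function `x ↦ exp (p x)` on the open unit disc. -/
noncomputable def expK (x : K) : K := evK (emb p K) (fun _ => x) (expSeries p)

theorem expK_add [CompleteSpace K] {x y : K} (hx : ‖x‖ < 1) (hy : ‖y‖ < 1) :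
    expK p K (x + y) = expK p K x * expK p K y := by
  have := charZeroK p K
  set c : ℕ → K := fun n => emb p K (MvPowerSeries.coeff (Finsupp.single () n) (expSeries p))
    with hc
  have hcn : ∀ n, c n * (n.factorial : K) = (p : K) ^ n := by
    intro n
    have h := congrArg (emb p K) (coeff_expSeries_mul p (Finsupp.single () n))
    rw [Finsupp.single_eq_same, map_mul, map_natCast, map_pow, emb_p] at h
    exact h
  have hf : ∀ n : ℕ, (n.factorial : K) ≠ 0 := fun n => by exact_mod_cast n.factorial_ne_zero
  have hsum : ∀ {x : K}, ‖x‖ < 1 → Summable fun n => ‖c n * x ^ n‖ := by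
    intro x hx
    refine Summable.of_nonneg_of_le (fun _ => norm_nonneg _) (fun n => ?_)
      (summable_geometric_of_lt_one (norm_nonneg x) hx)
    rw [norm_mul, norm_pow]
    exact mul_le_of_le_one_left (pow_nonneg (norm_nonneg _) _) (emb_le p _)
  rw [expK, expK, expK, evK_unit, evK_unit, evK_unit]
  change ∑' n, c n * (x + y) ^ n = (∑' n, c n * x ^ n) * ∑' n, c n * y ^ n
  rw [tsum_mul_tsum_eq_tsum_sum_antidiagonal_of_summable_norm (hsum hx) (hsum hy)]
  refine tsum_congr fun n => ?_
  rw [(Commute.all x y).add_pow', Finset.mul_sum]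
  refine Finset.sum_congr rfl fun ij hij => ?_
  have hn := Finset.HasAntidiagonal.mem_antidiagonal.1 hij
  have h1 : c n * (n.choose ij.1 : K) = c ij.1 * c ij.2 := by
    refine mul_right_cancel₀ (mul_ne_zero (hf ij.1) (hf ij.2)) ?_
    have h2 : c ij.1 * c ij.2 * ((ij.1.factorial : K) * ij.2.factorial) =
        (c ij.1 * ij.1.factorial) * (c ij.2 * ij.2.factorial) := by ring
    rw [h2, hcn, hcn, ← pow_add, hn, ← hcn n, ← hn,
      ← Nat.add_choose_mul_factorial_mul_factorial ij.1 ij.2, Nat.choose_symm_add]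
    push_cast
    ring
  rw [nsmul_eq_mul, ← mul_assoc, h1]
  ring

theorem expK_eq [CompleteSpace K] {x : K} (hx : ‖x‖ < 1) :
    expK p K x = 1 + p * (x + evK (emb p K) (fun _ => x) (tailSeries p)) := by
  have hx' : ∀ _ : Unit, ‖x‖ < 1 := fun _ => hx
  rw [expK, expSeries, evK_add (emb_le p) hx', evK_one, evK_mul (emb_le p) hx', evK_C, emb_p,
    evK_add (emb_le p) hx', evK_X]

theorem norm_tail_le {x : K} (hx : ‖x‖ < 1) :
    ‖evK (emb p K) (fun _ => x) (tailSeries p)‖ ≤ ‖x‖ ^ 2 :=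
  norm_evK_le (emb_le p) (norm_nonneg _) hx.le (fun _ => le_rfl) _ 2 (two_le_order_tail p)

theorem expK_ne [CompleteSpace K] {x : K} (hx : ‖x‖ < 1) (hx0 : x ≠ 0) : expK p K x ≠ 1 := by
  rw [expK_eq p hx]
  intro h
  have h1 : x + evK (emb p K) (fun _ => x) (tailSeries p) = 0 := by
    have h2 : (p : K) * (x + evK (emb p K) (fun _ => x) (tailSeries p)) = 0 := by
      linear_combination h
    exact (mul_eq_zero.1 h2).resolve_left (p_ne p)
  have h2 := norm_tail_le p hx
  rw [← neg_eq_of_add_eq_zero_right h1, norm_neg] at h2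
  have h3 : 0 < ‖x‖ := norm_pos_iff.2 hx0
  nlinarith

theorem expK_sub_one_le [CompleteSpace K] {x : K} (hx : ‖x‖ < 1) :
    ‖expK p K x - 1‖ ≤ ‖x‖ := by
  rw [expK_eq p hx, add_sub_cancel_left, norm_mul]
  refine (mul_le_of_le_one_left (norm_nonneg _) (norm_p_lt p).le).trans ?_
  refine (IsUltrametricDist.norm_add_le_max _ _).trans (max_le le_rfl ((norm_tail_le p hx).trans ?_))
  nlinarith [norm_nonneg x]

theorem norm_expK [CompleteSpace K] {x : K} (hx : ‖x‖ < 1) : ‖expK p K x‖ = 1 := by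
  have h := (expK_sub_one_le p hx).trans_lt hx
  have h2 : expK p K x = 1 + (expK p K x - 1) := by ring
  rw [h2, IsUltrametricDist.norm_add_eq_max_of_norm_ne_norm (by rw [norm_one]; exact h.ne'),
    norm_one, max_eq_left h.le]

/-- Every `1 + p² w` with `‖w‖ < 1` is an exponential. -/
theorem exists_expK [CompleteSpace K] {w : K} (hw : ‖w‖ < 1) :
    ∃ y : K, ‖y‖ < 1 ∧ expK p K (p * y) = 1 + p ^ 2 * w := by
  classical
  set φ := emb p K
  have hφ : ∀ a, ‖φ a‖ ≤ 1 := emb_le p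
  let Q : MvPowerSeries (Option Unit) ℤ_[p] := MvPowerSeries.X (some ()) -
    MvPowerSeries.subst (fun _ : Unit => MvPowerSeries.X none) (tailSeries' p)
  have hXn : ∀ _ : Unit, (MvPowerSeries.X none : MvPowerSeries (Option Unit) ℤ_[p]).constantCoeff
      = 0 := fun _ => MvPowerSeries.constantCoeff_X _
  obtain ⟨S, hS0, hS⟩ := exists_fixedPoint Q
    (by rw [map_sub, cc_subst hXn (cc_tail' p), MvPowerSeries.constantCoeff_X, sub_zero])
    (by
      rw [map_sub, MvPowerSeries.coeff_of_lt_order (f := MvPowerSeries.subst _ _)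
        (lt_of_lt_of_le ?_ ((two_le_order_tail' p).trans (order_le_order_subst hXn _))),
        MvPowerSeries.coeff_X, if_neg, sub_zero]
      · intro h
        have := DFunLike.congr_fun h none
        simp at this
      · simp)
  have hw' : ∀ _ : Unit, ‖w‖ < 1 := fun _ => hw
  set y := evK φ (fun _ => w) S with hy
  have hy1 : ‖y‖ < 1 := norm_evK_lt_one hφ hw' S hS0
  have hval : ∀ o : Option Unit, evK φ (fun _ : Unit => w) (o.elim S MvPowerSeries.X) =
      o.elim y fun _ => w := by
    rintro (_ | _)
    · rfl
    · exact evK_X _ _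
  have hvs : ∀ o : Option Unit, ‖(o.elim y fun _ => w : K)‖ < 1 := by
    rintro (_ | _)
    · exact hy1
    · exact hw
  have h1 := congrArg (evK φ (fun _ => w)) hS
  rw [evK_subst hφ hw' _ (fun o => cc_elim hS0 (fun _ => MvPowerSeries.constantCoeff_X _) o)] at h1
  simp only [hval] at h1
  have h2 := evK_add hφ hvs Q (MvPowerSeries.subst (fun _ : Unit => MvPowerSeries.X none)
    (tailSeries' p))
  rw [sub_add_cancel, evK_X, h1, evK_subst hφ hvs _ hXn] at h2
  simp only [evK_X] at h2
  have hpy : ‖(p : K) * y‖ < 1 := by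
    rw [norm_mul]
    exact mul_lt_one_of_nonneg_of_lt_one_left (norm_nonneg _) (norm_p_lt p) hy1.le
  have h3 : evK φ (fun _ => p * y) (tailSeries p) =
      p * evK φ (fun _ => y) (tailSeries' p) := by
    rw [evK_unit, evK_unit, ← tsum_mul_left]
    refine tsum_congr fun n => ?_
    have e1 : MvPowerSeries.coeff (Finsupp.single () n) (tailSeries p) =
      if (Finsupp.single () n : Unit →₀ ℕ) () ≤ 1 then 0 else dco p ((Finsupp.single () n : Unit →₀ ℕ) ()) := rfl
    have e2 : MvPowerSeries.coeff (Finsupp.single () n) (tailSeries' p) =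
      if (Finsupp.single () n : Unit →₀ ℕ) () ≤ 1 then 0 else
        dco p ((Finsupp.single () n : Unit →₀ ℕ) ()) * p ^ ((Finsupp.single () n : Unit →₀ ℕ) () - 1) := rfl
    rw [e1, e2, Finsupp.single_eq_same]
    split_ifs with h
    · simp
    · rw [map_mul, map_pow, emb_p, mul_pow]
      have : (p : K) ^ n = p * p ^ (n - 1) := by
        rw [← pow_succ', Nat.sub_add_cancel (by omega)]
      rw [this]
      ring
  refine ⟨y, hy1, ?_⟩
  change w = y + evK φ (fun _ => y) (tailSeries' p) at h2
  rw [expK_eq p hpy, h3, h2]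
  ring

end ExpK

/-! ### Locally compact fields -/

section Proper

variable (p : ℕ) [Fact p.Prime] (K : Type) [NormedField K] [IsUltrametricDist K]
  [NormedAlgebra ℚ_[p] K] [ProperSpace K]

theorem exists_unif (p : ℕ) [Fact p.Prime] (K : Type) [NormedField K] [IsUltrametricDist K]
    [NormedAlgebra ℚ_[p] K] [ProperSpace K] :
    ∃ ϖ : K, ϖ ≠ 0 ∧ ‖ϖ‖ < 1 ∧ ∀ x : K, ‖x‖ < 1 → ‖x‖ ≤ ‖ϖ‖ := by
  have hc : IsCompact (Metric.ball (0 : K) 1) := by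
    have h := (Metric.isBounded_ball (x := (0 : K)) (r := 1)).isCompact_closure
    rwa [(IsUltrametricDist.isClosed_ball (0 : K) 1).closure_eq] at h
  obtain ⟨ϖ, hϖ, hmax⟩ := hc.exists_isMaxOn ⟨(p : K), by simpa using norm_p_lt p⟩
    continuous_norm.continuousOn
  have hmax' : ∀ x : K, ‖x‖ < 1 → ‖x‖ ≤ ‖ϖ‖ := fun x hx => hmax (by simpa using hx)
  refine ⟨ϖ, ?_, by simpa using hϖ, hmax'⟩
  have h := hmax' (p : K) (norm_p_lt p)
  exact norm_pos_iff.1 (lt_of_lt_of_le (norm_pos_iff.2 (p_ne p)) h)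

variable {K}

theorem exists_ord {ϖ : K} (h0 : ϖ ≠ 0) (h1 : ‖ϖ‖ < 1) (hm : ∀ x : K, ‖x‖ < 1 → ‖x‖ ≤ ‖ϖ‖)
    (x : K) (hx : x ≠ 0) : ∃ k : ℤ, ‖x‖ = ‖ϖ‖ ^ k := by
  have hpos : 0 < ‖ϖ‖ := norm_pos_iff.2 h0
  obtain ⟨k, hk1, hk2⟩ := exists_mem_Ioc_zpow (norm_pos_iff.2 hx) ((one_lt_inv₀ hpos).2 h1)
  -- `‖x ϖ ^ (k + 1)‖ ≤ 1`, with equality because it exceeds `‖ϖ‖`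
  have h2 : ‖x * ϖ ^ (k + 1)‖ ≤ 1 := by
    rw [norm_mul, norm_zpow]
    rw [inv_zpow] at hk2
    calc ‖x‖ * ‖ϖ‖ ^ (k + 1) ≤ (‖ϖ‖ ^ (k + 1))⁻¹ * ‖ϖ‖ ^ (k + 1) := by gcongr
      _ = 1 := inv_mul_cancel₀ (zpow_ne_zero _ hpos.ne')
  have h3 : ‖ϖ‖ < ‖x * ϖ ^ (k + 1)‖ := by
    rw [norm_mul, norm_zpow]
    rw [inv_zpow] at hk1
    calc ‖ϖ‖ = (‖ϖ‖ ^ k)⁻¹ * ‖ϖ‖ ^ (k + 1) := by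
          rw [zpow_add_one₀ hpos.ne', ← mul_assoc, inv_mul_cancel₀ (zpow_ne_zero _ hpos.ne'),
            one_mul]
      _ < ‖x‖ * ‖ϖ‖ ^ (k + 1) := by gcongr
  have h4 : ‖x * ϖ ^ (k + 1)‖ = 1 := by
    refine le_antisymm h2 (not_lt.1 fun h => ?_)
    exact absurd (hm _ h) (not_le.2 h3)
  refine ⟨-(k + 1), ?_⟩
  rw [norm_mul, norm_zpow] at h4
  rw [zpow_neg]
  exact eq_inv_of_mul_eq_one_left h4

variable (K)

theorem exists_residues : ∃ T : Set K, T.Finite ∧ ∀ x : K, ‖x‖ ≤ 1 → ∃ τ ∈ T, ‖x - τ‖ < 1 := by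
  obtain ⟨T, -, hT, hcov⟩ := (isCompact_closedBall (0 : K) 1).finite_cover_balls zero_lt_one
  refine ⟨T, hT, fun x hx => ?_⟩
  have := hcov (show x ∈ Metric.closedBall (0 : K) 1 by simpa using hx)
  simpa [dist_eq_norm] using this

theorem exists_units : ∃ T : Set K, T.Finite ∧ (∀ τ ∈ T, τ ≠ 0) ∧ ∀ u : K, ‖u‖ = 1 →
    ∃ τ ∈ T, ∃ y : K, ‖y‖ < 1 ∧ u = τ * expK p K (p * y) := by
  have hp2 : 0 < ‖(p : K) ^ 2‖ := norm_pos_iff.2 (pow_ne_zero 2 (p_ne p))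
  obtain ⟨T, hT1, hT, hcov⟩ := (isCompact_sphere (0 : K) 1).finite_cover_balls hp2
  have hn : ∀ τ ∈ T, ‖τ‖ = 1 := fun τ hτ => by simpa using hT1 hτ
  have hne : ∀ τ ∈ T, τ ≠ 0 := fun τ hτ h => by simpa [h] using hn τ hτ
  refine ⟨T, hT, hne, fun u hu => ?_⟩
  have := hcov (show u ∈ Metric.sphere (0 : K) 1 by simpa using hu)
  obtain ⟨τ, hτ, hlt⟩ : ∃ τ ∈ T, ‖u - τ‖ < ‖(p : K) ^ 2‖ := by
    simpa [dist_eq_norm] using this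
  obtain ⟨y, hy, hye⟩ := exists_expK p (w := (u - τ) / (τ * p ^ 2)) (by
    rw [norm_div, norm_mul, hn τ hτ, one_mul]
    exact (div_lt_one hp2).2 hlt)
  refine ⟨τ, hτ, y, hy, ?_⟩
  have := hne τ hτ
  have := p_ne p (K := K)
  rw [hye]
  field_simp
  ring

theorem exists_decomp {ϖ : K} (h0 : ϖ ≠ 0) (h1 : ‖ϖ‖ < 1) (hm : ∀ x : K, ‖x‖ < 1 → ‖x‖ ≤ ‖ϖ‖)
    {T : Set K} (hT : ∀ u : K, ‖u‖ = 1 →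
      ∃ τ ∈ T, ∃ y : K, ‖y‖ < 1 ∧ u = τ * expK p K (p * y)) (x : K) (hx : x ≠ 0) :
    ∃ k : ℤ, ∃ τ ∈ T, ∃ y : K, ‖y‖ < 1 ∧ x = ϖ ^ k * τ * expK p K (p * y) := by
  obtain ⟨k, hk⟩ := exists_ord h0 h1 hm x hx
  have hz : ϖ ^ k ≠ 0 := zpow_ne_zero _ h0
  obtain ⟨τ, hτ, y, hy, hu⟩ := hT (x / ϖ ^ k) (by
    rw [norm_div, norm_zpow, hk]
    exact div_self (zpow_ne_zero _ (norm_ne_zero_iff.2 h0)))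
  refine ⟨k, τ, hτ, y, hy, ?_⟩
  rw [mul_assoc, ← hu, mul_div_cancel₀ _ hz]

theorem exists_pow_le_natCast (p : ℕ) [Fact p.Prime] (K : Type) [NormedField K]
    [NormedAlgebra ℚ_[p] K] {ϖ : K} (h1 : ‖ϖ‖ < 1) (N : ℕ) (hN : N ≠ 0) :
    ∃ n : ℕ, ‖ϖ ^ n‖ ≤ ‖(N : K)‖ := by
  have := charZeroK p K
  obtain ⟨n, hn⟩ := exists_pow_lt_of_lt_one
    (norm_pos_iff.2 (show (N : K) ≠ 0 by exact_mod_cast hN)) h1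
  exact ⟨n, by rw [norm_pow]; exact hn.le⟩

end Proper

/-! ### Ultrapowers -/

section Germs

variable {ι Y : Type} (U : Ultrafilter ι) (s : ι → Y)

/-- The class of a function in the ultrapower. -/
def gm {R : Type} [CommRing R] : (ι → R) →+* Germ (U : Filter ι) R := Germ.coeRingHom _

variable {U}

theorem gm_surj {R : Type} [CommRing R] (x : Germ (U : Filter ι) R) : ∃ f, gm U f = x :=
  Quotient.exists_rep x

theorem gm_eq {R : Type} [CommRing R] {f g : ι → R} :
    gm U f = gm U g ↔ ∀ᶠ i in (U : Filter ι), f i = g i := Germ.coe_eq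

theorem gm_eq_zero {R : Type} [CommRing R] {f : ι → R} :
    gm U f = 0 ↔ ∀ᶠ i in (U : Filter ι), f i = 0 := by
  rw [← map_zero (gm U), gm_eq]; rfl

variable (U)

/-- The ring homomorphism of ultrapowers induced by a ring homomorphism. -/
def gmap {R S : Type} [CommRing R] [CommRing S] (φ : R →+* S) :
    Germ (U : Filter ι) R →+* Germ (U : Filter ι) S where
  toFun := Germ.map φ
  map_one' := by
    change gm U (fun _ => φ 1) = gm U 1
    exact congrArg _ (funext fun _ => map_one φ)
  map_zero' := by
    change gm U (fun _ => φ 0) = gm U 0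
    exact congrArg _ (funext fun _ => map_zero φ)
  map_mul' x y := by
    obtain ⟨f, rfl⟩ := gm_surj x
    obtain ⟨g, rfl⟩ := gm_surj y
    change gm U (fun i => φ (f i * g i)) = gm U ((fun i => φ (f i)) * fun i => φ (g i))
    exact congrArg _ (funext fun _ => map_mul φ _ _)
  map_add' x y := by
    obtain ⟨f, rfl⟩ := gm_surj x
    obtain ⟨g, rfl⟩ := gm_surj y
    change gm U (fun i => φ (f i + g i)) = gm U ((fun i => φ (f i)) + fun i => φ (g i))
    exact congrArg _ (funext fun _ => map_add φ _ _)

theorem gmap_gm {R S : Type} [CommRing R] [CommRing S] (φ : R →+* S) (f : ι → R) :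
    gmap U φ (gm U f) = gm U fun i => φ (f i) := rfl

/-- The classes of the functions that factor through `s`. -/
def R0 (R : Type) [CommRing R] : Subring (Germ (U : Filter ι) R) where
  carrier := {x | ∃ e : Y → R, gm U (fun i => e (s i)) = x}
  mul_mem' := by
    rintro _ _ ⟨e, rfl⟩ ⟨e', rfl⟩
    exact ⟨e * e', map_mul (gm U) _ _⟩
  add_mem' := by
    rintro _ _ ⟨e, rfl⟩ ⟨e', rfl⟩
    exact ⟨e + e', map_add (gm U) _ _⟩
  one_mem' := ⟨1, map_one (gm U)⟩
  zero_mem' := ⟨0, map_zero (gm U)⟩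
  neg_mem' := by
    rintro _ ⟨e, rfl⟩
    exact ⟨-e, map_neg (gm U) _⟩

/-- The classes of the functions that factor through `s`, for a field. -/
def E0 (R : Type) [Field R] : Subfield (Germ (U : Filter ι) R) where
  toSubring := R0 U s R
  inv_mem' := by
    rintro _ ⟨e, rfl⟩
    exact ⟨e⁻¹, rfl⟩

variable {U s}

theorem mem_R0 {R : Type} [CommRing R] {x : Germ (U : Filter ι) R} :
    x ∈ R0 U s R ↔ ∃ e : Y → R, gm U (fun i => e (s i)) = x := Iff.rfl

theorem mem_E0 {R : Type} [Field R] {x : Germ (U : Filter ι) R} :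
    x ∈ E0 U s R ↔ ∃ e : Y → R, gm U (fun i => e (s i)) = x := Iff.rfl

variable {K : Type} [NormedField K] [IsUltrametricDist K]

variable (U K) in
/-- The valuation ring of the ultrapower. -/
noncomputable def OU : ValuationSubring (Germ (U : Filter ι) K) where
  carrier := {x | Germ.LiftPred (fun a : K => ‖a‖ ≤ 1) x}
  mul_mem' := by
    intro x y hx hy
    obtain ⟨f, rfl⟩ := gm_surj x
    obtain ⟨g, rfl⟩ := gm_surj y
    change ∀ᶠ i in (U : Filter ι), ‖f i * g i‖ ≤ 1
    filter_upwards [(hx : ∀ᶠ i in (U : Filter ι), ‖f i‖ ≤ 1),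
      (hy : ∀ᶠ i in (U : Filter ι), ‖g i‖ ≤ 1)] with i h1 h2
    rw [norm_mul]
    exact mul_le_one₀ h1 (norm_nonneg _) h2
  add_mem' := by
    intro x y hx hy
    obtain ⟨f, rfl⟩ := gm_surj x
    obtain ⟨g, rfl⟩ := gm_surj y
    change ∀ᶠ i in (U : Filter ι), ‖f i + g i‖ ≤ 1
    filter_upwards [(hx : ∀ᶠ i in (U : Filter ι), ‖f i‖ ≤ 1),
      (hy : ∀ᶠ i in (U : Filter ι), ‖g i‖ ≤ 1)] with i h1 h2
    exact (IsUltrametricDist.norm_add_le_max _ _).trans (max_le h1 h2)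
  one_mem' := by
    change ∀ᶠ i in (U : Filter ι), ‖(1 : K)‖ ≤ 1
    exact Eventually.of_forall fun _ => norm_one.le
  zero_mem' := by
    change ∀ᶠ i in (U : Filter ι), ‖(0 : K)‖ ≤ 1
    exact Eventually.of_forall fun _ => by simp
  neg_mem' := by
    intro x hx
    obtain ⟨f, rfl⟩ := gm_surj x
    change ∀ᶠ i in (U : Filter ι), ‖-f i‖ ≤ 1
    filter_upwards [(hx : ∀ᶠ i in (U : Filter ι), ‖f i‖ ≤ 1)] with i h1
    rwa [norm_neg]
  mem_or_inv_mem' := by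
    intro x
    obtain ⟨f, rfl⟩ := gm_surj x
    change (∀ᶠ i in (U : Filter ι), ‖f i‖ ≤ 1) ∨ ∀ᶠ i in (U : Filter ι), ‖(f i)⁻¹‖ ≤ 1
    rw [← Ultrafilter.eventually_or]
    refine Eventually.of_forall fun i => ?_
    rw [norm_inv]
    rcases le_total ‖f i‖ 1 with h | h
    · exact Or.inl h
    · exact Or.inr (inv_le_one_of_one_le₀ h)

variable (U K) in
/-- The valuation of the ultrapower. -/
noncomputable def VU : Valuation (Germ (U : Filter ι) K) (OU U K).ValueGroup := (OU U K).valuation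

theorem VU_le {f g : ι → K} :
    VU U K (gm U f) ≤ VU U K (gm U g) ↔ ∀ᶠ i in (U : Filter ι), ‖f i‖ ≤ ‖g i‖ := by
  by_cases hg : gm U g = 0
  · rw [hg, map_zero, le_zero_iff, Valuation.zero_iff, gm_eq_zero]
    rw [gm_eq_zero] at hg
    constructor
    · intro h
      filter_upwards [h] with i h1
      rw [h1, norm_zero]
      exact norm_nonneg _
    · intro h
      filter_upwards [h, hg] with i h1 h2
      rwa [h2, norm_zero, norm_le_zero_iff] at h1
  · have hV : VU U K (gm U g) ≠ 0 := (Valuation.ne_zero_iff _).2 hg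
    rw [← div_le_one₀ (zero_lt_iff.2 hV), ← map_div₀]
    refine ((OU U K).valuation_le_one_iff _).trans ?_
    change (∀ᶠ i in (U : Filter ι), ‖f i / g i‖ ≤ 1) ↔ _
    have hg' : ∀ᶠ i in (U : Filter ι), g i ≠ 0 := by
      rw [gm_eq_zero] at hg
      exact (Ultrafilter.eventually_not).2 hg
    refine eventually_congr ?_
    filter_upwards [hg'] with i hi
    rw [norm_div, div_le_one (norm_pos_iff.2 hi)]

theorem VU_lt {f g : ι → K} :
    VU U K (gm U f) < VU U K (gm U g) ↔ ∀ᶠ i in (U : Filter ι), ‖f i‖ < ‖g i‖ := by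
  rw [← not_le, VU_le, ← Ultrafilter.eventually_not]
  simp only [not_le]

theorem VU_eq {f g : ι → K} :
    VU U K (gm U f) = VU U K (gm U g) ↔ ∀ᶠ i in (U : Filter ι), ‖f i‖ = ‖g i‖ := by
  rw [le_antisymm_iff, VU_le, VU_le, ← eventually_and]
  simp only [le_antisymm_iff]

theorem VU_le_one {f : ι → K} :
    VU U K (gm U f) ≤ 1 ↔ ∀ᶠ i in (U : Filter ι), ‖f i‖ ≤ 1 := by
  have h := VU_le (U := U) (f := f) (g := 1)
  rw [map_one, map_one] at h
  simpa using h

theorem VU_lt_one {f : ι → K} :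
    VU U K (gm U f) < 1 ↔ ∀ᶠ i in (U : Filter ι), ‖f i‖ < 1 := by
  have h := VU_lt (U := U) (f := f) (g := 1)
  rw [map_one, map_one] at h
  simpa using h

/-- A representative of a class in the ultrapower. -/
noncomputable def rep {R : Type} [CommRing R] (x : Germ (U : Filter ι) R) : ι → R :=
  (gm_surj x).choose

theorem gm_rep {R : Type} [CommRing R] (x : Germ (U : Filter ι) R) : gm U (rep x) = x :=
  (gm_surj x).choose_spec

variable {A : Type} [CommRing A] {σ τ : Type} [Finite σ] [Finite τ]

/-- Evaluation of power series in the ultrapower. -/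
noncomputable def evU (φ : A →+* K) (x : σ → Germ (U : Filter ι) K) (f : MvPowerSeries σ A) :
    Germ (U : Filter ι) K :=
  gm U fun i => evK φ (fun j => rep (x j) i) f

theorem evU_gm (φ : A →+* K) (x : σ → ι → K) (f : MvPowerSeries σ A) :
    evU φ (fun j => gm U (x j)) f = gm U fun i => evK φ (fun j => x j i) f := by
  rw [evU, gm_eq]
  have h : ∀ j, ∀ᶠ i in (U : Filter ι), rep (gm U (x j)) i = x j i := fun j => gm_eq.1 (gm_rep _)
  filter_upwards [eventually_all.2 h] with i hi
  congr 1
  exact funext hi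

theorem exists_reps (x : σ → Germ (U : Filter ι) K) : ∃ f : σ → ι → K, x = fun j => gm U (f j) :=
  ⟨fun j => rep (x j), funext fun _ => (gm_rep _).symm⟩

theorem small_reps {x : σ → ι → K} (hx : ∀ j, VU U K (gm U (x j)) < 1) :
    ∀ᶠ i in (U : Filter ι), ∀ j, ‖x j i‖ < 1 :=
  eventually_all.2 fun j => VU_lt_one.1 (hx j)

/-- The ultrapower of a locally compact field as an analytic structure. -/
noncomputable def anU [CompleteSpace K] (φ : A →+* K) (hφ : ∀ a, ‖φ a‖ ≤ 1) {ϖ : K} (h0 : ϖ ≠ 0)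
    (h1 : ‖ϖ‖ < 1) (hm : ∀ x : K, ‖x‖ < 1 → ‖x‖ ≤ ‖ϖ‖) {T : Set K} (hT : T.Finite)
    (hTr : ∀ x : K, ‖x‖ ≤ 1 → ∃ τ ∈ T, ‖x - τ‖ < 1)
    (hN : ∀ N : ℕ, N ≠ 0 → ∃ n : ℕ, ‖ϖ ^ n‖ ≤ ‖(N : K)‖) :
    AnStr A (Germ (U : Filter ι) K) (OU U K).ValueGroup where
  V := VU U K
  ev := evU φ
  ev_add x hx f g := by
    obtain ⟨x, rfl⟩ := exists_reps x
    rw [evU_gm, evU_gm, evU_gm, ← map_add, gm_eq]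
    filter_upwards [small_reps hx] with i hi using evK_add hφ hi f g
  ev_mul x hx f g := by
    obtain ⟨x, rfl⟩ := exists_reps x
    rw [evU_gm, evU_gm, evU_gm, ← map_mul, gm_eq]
    filter_upwards [small_reps hx] with i hi using evK_mul hφ hi f g
  ev_one x _ := by
    rw [evU]
    simp only [evK_one]
    exact map_one (gm U)
  ev_X x _ j := by
    rw [evU]
    simp only [evK_X]
    exact gm_rep _
  ev_le x hx f := by
    obtain ⟨x, rfl⟩ := exists_reps x
    rw [evU_gm, VU_le_one]
    filter_upwards [small_reps hx] with i hi using norm_evK_le_one hφ hi f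
  ev_lt x hx f hf := by
    obtain ⟨x, rfl⟩ := exists_reps x
    rw [evU_gm, VU_lt_one]
    filter_upwards [small_reps hx] with i hi using norm_evK_lt_one hφ hi f hf
  ev_subst x hx g hg f := by
    obtain ⟨x, rfl⟩ := exists_reps x
    simp only [evU_gm]
    rw [gm_eq]
    filter_upwards [small_reps hx] with i hi using evK_subst hφ hi g hg f
  ϖ := gm U fun _ => ϖ
  ϖ_ne := by
    rw [Ne, gm_eq_zero]
    simpa using h0
  ϖ_lt := VU_lt_one.2 (Eventually.of_forall fun _ => h1)
  le_ϖ x hx := by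
    obtain ⟨f, rfl⟩ := gm_surj x
    rw [VU_lt_one] at hx
    rw [VU_le]
    filter_upwards [hx] with i hi using hm _ hi
  T := (fun t => gm U fun _ => t) '' T
  exists_T x hx := by
    obtain ⟨f, rfl⟩ := gm_surj x
    rw [VU_le_one] at hx
    have h : ∀ᶠ i in (U : Filter ι), ∃ τ ∈ T, ‖f i - τ‖ < 1 := hx.mono fun i hi => hTr _ hi
    obtain ⟨τ, hτ, h⟩ := (Ultrafilter.eventually_exists_mem_iff hT).1 h
    refine ⟨_, ⟨τ, hτ, rfl⟩, ?_⟩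
    rw [← map_sub]
    exact VU_lt_one.2 h
  natCast N hN0 := by
    obtain ⟨n, hn⟩ := hN N hN0
    refine ⟨n, ?_⟩
    rw [← map_pow, ← map_natCast (gm U) N]
    exact VU_le.2 (Eventually.of_forall fun _ => hn)

theorem closedU [CompleteSpace K] (φ : A →+* K) (hφ : ∀ a, ‖φ a‖ ≤ 1) {ϖ : K} (h0 : ϖ ≠ 0)
    (h1 : ‖ϖ‖ < 1) (hm : ∀ x : K, ‖x‖ < 1 → ‖x‖ ≤ ‖ϖ‖) {T : Set K} (hT : T.Finite)
    (hTr : ∀ x : K, ‖x‖ ≤ 1 → ∃ τ ∈ T, ‖x - τ‖ < 1)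
    (hN : ∀ N : ℕ, N ≠ 0 → ∃ n : ℕ, ‖ϖ ^ n‖ ≤ ‖(N : K)‖) :
    (anU (U := U) φ hφ h0 h1 hm hT hTr hN).Closed (E0 U s K) where
  T_mem := by
    rintro _ ⟨t, -, rfl⟩
    exact ⟨fun _ => t, rfl⟩
  ϖ_mem := ⟨fun _ => ϖ, rfl⟩
  ev_mem x hxE _ f := by
    choose e he using fun j => mem_E0.1 (hxE j)
    refine mem_E0.2 ⟨fun y => evK φ (fun j => e j y) f, ?_⟩
    rw [← evU_gm φ (fun j i => e j (s i))]
    simp only [he]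
    rfl

/-- The powers of the uniformizer with exponents in the ultrapower of `ℤ`. -/
noncomputable def sectionU [CompleteSpace K] [CharZero K] (φ : A →+* K) (hφ : ∀ a, ‖φ a‖ ≤ 1)
    {ϖ : K} (h0 : ϖ ≠ 0)
    (h1 : ‖ϖ‖ < 1) (hm : ∀ x : K, ‖x‖ < 1 → ‖x‖ ≤ ‖ϖ‖) {T : Set K} (hT : T.Finite)
    (hTr : ∀ x : K, ‖x‖ ≤ 1 → ∃ τ ∈ T, ‖x - τ‖ < 1)
    (hN : ∀ N : ℕ, N ≠ 0 → ∃ n : ℕ, ‖ϖ ^ n‖ ≤ ‖(N : K)‖)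
    (hord : ∀ x : K, x ≠ 0 → ∃ k : ℤ, ‖x‖ = ‖ϖ‖ ^ k) :
    (anU (U := U) φ hφ h0 h1 hm hT hTr hN).Section (E0 U s K) (Germ (U : Filter ι) ℤ) where
  P := Germ.map fun k : ℤ => ϖ ^ k
  P_zero := by
    change gm U (fun _ => ϖ ^ (0 : ℤ)) = gm U 1
    exact congrArg _ (funext fun _ => zpow_zero _)
  P_add a b := by
    obtain ⟨a, rfl⟩ := gm_surj a
    obtain ⟨b, rfl⟩ := gm_surj b
    change gm U (fun i => ϖ ^ (a i + b i)) = gm U ((fun i => ϖ ^ a i) * fun i => ϖ ^ b i)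
    exact congrArg _ (funext fun _ => zpow_add₀ h0 _ _)
  R := R0 U s ℤ
  c := gmap U (Int.castRingHom K)
  c_mem := by
    rintro _ ⟨e, rfl⟩
    exact ⟨fun y => (e y : K), rfl⟩
  c_le r := by
    obtain ⟨r, rfl⟩ := gm_surj r
    refine VU_le_one.2 (Eventually.of_forall fun i => ?_)
    exact IsUltrametricDist.norm_intCast_le_one K (r i)
  P_mem := by
    rintro _ ⟨e, rfl⟩
    exact ⟨fun y => ϖ ^ e y, rfl⟩
  full x hx := by
    obtain ⟨f, rfl⟩ := gm_surj x
    rw [Ne, gm_eq_zero, ← Ultrafilter.eventually_not] at hx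
    choose o ho using hord
    classical
    refine ⟨gm U fun i => if h : f i = 0 then 0 else o (f i) h, VU_eq.2 ?_⟩
    filter_upwards [hx] with i hi
    change ‖f i‖ = ‖ϖ ^ (if h : f i = 0 then 0 else o (f i) h : ℤ)‖
    rw [ho _ hi, dif_neg hi, norm_zpow]
  disc k e he hke := by
    obtain ⟨k, rfl⟩ := gm_surj k
    obtain ⟨e, rfl⟩ := mem_E0.1 he
    have h : ∀ᶠ i in (U : Filter ι), ‖ϖ ^ k i‖ = ‖e (s i)‖ := VU_eq.1 hke
    choose o ho using hord
    classical
    refine mem_R0.2 ⟨fun y => if h : e y = 0 then 0 else o (e y) h, gm_eq.2 ?_⟩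
    filter_upwards [h] with i hi
    have hne : e (s i) ≠ 0 := by
      intro h2
      rw [h2, norm_zero, norm_eq_zero] at hi
      exact zpow_ne_zero _ h0 hi
    rw [dif_neg hne]
    rw [ho _ hne, norm_zpow] at hi
    exact (zpow_right_injective₀ (norm_pos_iff.2 h0) h1.ne hi).symm
  sep k hk := by
    -- a linear functional over the small field of rationals that kills `1` but not `k`
    obtain ⟨k, rfl⟩ := gm_surj k
    let Q' := E0 U s ℚ
    let j : Germ (U : Filter ι) ℤ →+* Germ (U : Filter ι) ℚ := gmap U (Int.castRingHom ℚ)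
    have hk' : j (gm U k) ∉ Submodule.span Q' {(1 : Germ (U : Filter ι) ℚ)} := by
      intro h
      obtain ⟨q, hq⟩ := Submodule.mem_span_singleton.1 h
      obtain ⟨q, e, rfl⟩ := q
      refine hk (mem_R0.2 ⟨fun y => ⌊e y⌋, gm_eq.2 ?_⟩)
      have hq' : gm U (fun i => e (s i)) * 1 = gm U fun i => (k i : ℚ) := hq
      rw [mul_one, gm_eq] at hq'
      filter_upwards [hq'] with i hi
      rw [hi, Int.floor_intCast]
    obtain ⟨f, hf2, hf1⟩ := Submodule.exists_le_ker_of_notMem hk'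
    let ρ : Germ (U : Filter ι) ℚ →+* Germ (U : Filter ι) K := gmap U (Rat.castHom K)
    have hρj : ∀ r, ρ (j r) = gmap U (Int.castRingHom K) r := by
      intro r
      obtain ⟨r, rfl⟩ := gm_surj r
      change gm U (fun i => ((r i : ℚ) : K)) = gm U fun i => (r i : K)
      simp
    have hjR : ∀ r ∈ R0 U s ℤ, j r ∈ Q' := by
      rintro _ ⟨e, rfl⟩
      exact ⟨fun y => (e y : ℚ), rfl⟩
    have hfm : ∀ r (hr : r ∈ R0 U s ℤ) (z : Germ (U : Filter ι) ℤ),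
        f (j (r * z)) = ⟨j r, hjR r hr⟩ * f (j z) := by
      intro r hr z
      have h2 := f.map_smul (⟨j r, hjR r hr⟩ : Q') (j z)
      rw [smul_eq_mul] at h2
      rw [← h2, map_mul]
      rfl
    refine ⟨(ρ.toAddMonoidHom.comp Q'.subtype.toAddMonoidHom).comp
      (f.toAddMonoidHom.comp j.toAddMonoidHom), fun z => ?_, fun r hr z => ?_, fun r hr => ?_, ?_⟩
    · change ρ (f (j z) : Q') ∈ E0 U s K
      obtain ⟨e, he⟩ := mem_E0.1 (f (j z)).2
      exact mem_E0.2 ⟨fun y => (e y : K), by rw [← he]; rfl⟩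
    · change ρ (f (j (r * z)) : Q') = _ * ρ (f (j z) : Q')
      rw [hfm r hr z, ← hρj, ← map_mul]
      rfl
    · change ρ (f (j r) : Q') = 0
      have h3 := hfm r hr 1
      have h4 : f (j 1) = 0 := by
        rw [map_one]
        exact hf1 (Submodule.mem_span_singleton_self _)
      rw [mul_one, h4, mul_zero] at h3
      rw [h3]
      exact map_zero ρ
    · change ρ (f (j (gm U k)) : Q') ≠ 0
      rw [Ne, map_eq_zero]
      intro h
      exact hf2 (Subtype.ext h)

end Germs

/-! ### Uniform finiteness in the torus over a locally compact field -/

section Torus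

variable (p : ℕ) [Fact p.Prime] {K : Type} [NormedField K] [IsUltrametricDist K]
  [NormedAlgebra ℚ_[p] K]

theorem norm_p_mul_lt {y : K} (hy : ‖y‖ < 1) : ‖(p : K) * y‖ < 1 := by
  rw [norm_mul]
  exact mul_lt_one_of_nonneg_of_lt_one_left (norm_nonneg _) (norm_p_lt p) hy.le

theorem expK_zero : expK p K 0 = 1 := by
  classical
  rw [expK, evK_unit, tsum_eq_single 0]
  · have h : MvPowerSeries.coeff (Finsupp.single () 0) (expSeries p) = 1 := by
      rw [Finsupp.single_zero, MvPowerSeries.coeff_zero_eq_constantCoeff_apply, cc_expSeries]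
    rw [h, map_one, pow_zero, mul_one]
  · intro n hn
    rw [zero_pow hn, mul_zero]

theorem norm_natCast_mul_lt {y : K} (hy : ‖y‖ < 1) (a : ℕ) : ‖(a : K) * y‖ < 1 := by
  rw [norm_mul]
  exact lt_of_le_of_lt (mul_le_of_le_one_left (norm_nonneg _)
    (IsUltrametricDist.norm_natCast_le_one K a)) hy

theorem expK_nat_mul [CompleteSpace K] {y : K} (hy : ‖y‖ < 1) (a : ℕ) :
    expK p K (a * y) = expK p K y ^ a := by
  induction a with
  | zero => rw [Nat.cast_zero, zero_mul, expK_zero, pow_zero]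
  | succ a ih =>
    rw [Nat.cast_succ, add_mul, one_mul, expK_add p (norm_natCast_mul_lt hy a) hy, ih, pow_succ]

theorem expK_sum [CompleteSpace K] {L : Type} (t : Finset L) {y : L → K} (hy : ∀ l, ‖y l‖ < 1) :
    expK p K (∑ l ∈ t, y l) = ∏ l ∈ t, expK p K (y l) := by
  classical
  induction t using Finset.induction_on with
  | empty => rw [Finset.sum_empty, Finset.prod_empty, expK_zero]
  | insert b t hb ih =>
    rw [Finset.sum_insert hb, Finset.prod_insert hb, expK_add p (hy b), ih]
    rcases t.eq_empty_or_nonempty with h | h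
    · simp [h]
    · obtain ⟨l, hl, hle⟩ := IsUltrametricDist.exists_norm_finsetSum_le_of_nonempty h y
      exact hle.trans_lt (hy l)

theorem expK_inj [CompleteSpace K] {x y : K} (hx : ‖x‖ < 1) (hy : ‖y‖ < 1)
    (h : expK p K (p * x) = expK p K (p * y)) : x = y := by
  by_contra hne
  have hxy : ‖x - y‖ < 1 := by
    rw [sub_eq_add_neg]
    exact (IsUltrametricDist.norm_add_le_max _ _).trans_lt (max_lt hx (by rwa [norm_neg]))
  have h1 : expK p K (p * x) = expK p K (p * (x - y)) * expK p K (p * y) := by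
    rw [← expK_add p (norm_p_mul_lt p hxy) (norm_p_mul_lt p hy)]
    congr 1; ring
  have h2 : expK p K (p * y) ≠ 0 := by
    rw [← norm_pos_iff, norm_expK p (norm_p_mul_lt p hy)]; exact one_pos
  rw [h] at h1
  refine expK_ne p (norm_p_mul_lt p hxy) (mul_ne_zero (p_ne p) (sub_ne_zero.2 hne)) ?_
  exact mul_right_cancel₀ h2 (by rw [one_mul]; exact h1.symm)

theorem expK_close [CompleteSpace K] {x y : K} (hx : ‖x‖ < 1) (hy : ‖y‖ < 1) (u : K) :
    ‖u * expK p K (p * x) - u * expK p K (p * y)‖ ≤ ‖u * expK p K (p * y)‖ * ‖x - y‖ := by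
  have hxy : ‖x - y‖ < 1 := by
    rw [sub_eq_add_neg]
    exact (IsUltrametricDist.norm_add_le_max _ _).trans_lt (max_lt hx (by rwa [norm_neg]))
  have h1 : expK p K (p * x) = expK p K (p * (x - y)) * expK p K (p * y) := by
    rw [← expK_add p (norm_p_mul_lt p hxy) (norm_p_mul_lt p hy)]
    congr 1; ring
  have h2 : u * expK p K (p * x) - u * expK p K (p * y) =
      u * expK p K (p * y) * (expK p K (p * (x - y)) - 1) := by
    rw [h1]; ring
  rw [h2, norm_mul]
  refine mul_le_mul_of_nonneg_left ((expK_sub_one_le p (norm_p_mul_lt p hxy)).trans ?_)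
    (norm_nonneg _)
  rw [norm_mul]
  exact mul_le_of_le_one_left (norm_nonneg _) (norm_p_lt p).le

theorem monomial_eq [CompleteSpace K] {L : Type} [Fintype L] {ϖ : K} (h0 : ϖ ≠ 0) (τ y : L → K)
    (hy : ∀ l, ‖y l‖ < 1) (a : L → ℕ) (k : L → ℤ) (c : K) :
    c * (∏ l, τ l ^ a l) * ϖ ^ (∑ l, (a l : ℤ) * k l) *
      expK p K (∑ l, p * ((a l : ℤ) : K) * y l) =
      c * ∏ l, (ϖ ^ k l * τ l * expK p K (p * y l)) ^ a l := by
  have h1 : (∑ l, p * ((a l : ℤ) : K) * y l) = ∑ l, (a l : K) * (p * y l) :=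
    Finset.sum_congr rfl fun l _ => by push_cast; ring
  have h2 : ϖ ^ (∑ l, (a l : ℤ) * k l) = ∏ l, (ϖ ^ k l) ^ a l := by
    classical
    have : ∀ t : Finset L, ϖ ^ (∑ l ∈ t, (a l : ℤ) * k l) = ∏ l ∈ t, (ϖ ^ k l) ^ a l := by
      intro t
      induction t using Finset.induction_on with
      | empty => simp
      | insert b t hb ih =>
        rw [Finset.sum_insert hb, Finset.prod_insert hb, zpow_add₀ h0, ih, mul_comm (a b : ℤ),
          zpow_mul, zpow_natCast]
    exact this _
  rw [h1, h2, expK_sum p _ fun l => norm_natCast_mul_lt (norm_p_mul_lt p (hy l)) _]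
  simp only [expK_nat_mul p (norm_p_mul_lt p (hy _)), mul_pow, Finset.prod_mul_distrib]
  ring

/-- The roots with nonzero coordinates of the system `∑ j, C i j * x ^ a j = 0` that are isolated
among its roots. -/
def torusIso {I J L : Type} [Fintype J] [Fintype L] (y : (J → L → ℕ) × (I → J → K)) :
    Set (L → K) :=
  {η | (∀ l, η l ≠ 0) ∧ (∀ i, ∑ j, y.2 i j * ∏ l, η l ^ y.1 j l = 0) ∧
    ∃ ε : ℝ, 0 < ε ∧ ∀ η' : L → K, (∀ l, ‖η' l - η l‖ < ε) →
      (∀ i, ∑ j, y.2 i j * ∏ l, η' l ^ y.1 j l = 0) → η' = η}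

/-- The exponential of the ultrapower. -/
noncomputable def expU [CompleteSpace K] {ι : Type} {U : Ultrafilter ι} {ϖ : K} (h0 : ϖ ≠ 0)
    (h1 : ‖ϖ‖ < 1) (hm : ∀ x : K, ‖x‖ < 1 → ‖x‖ ≤ ‖ϖ‖) {T : Set K} (hT : T.Finite)
    (hTr : ∀ x : K, ‖x‖ ≤ 1 → ∃ τ ∈ T, ‖x - τ‖ < 1)
    (hN : ∀ N : ℕ, N ≠ 0 → ∃ n : ℕ, ‖ϖ ^ n‖ ≤ ‖(N : K)‖) :
    (anU (U := U) (emb p K) (emb_le p) h0 h1 hm hT hTr hN).ExpData p where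
  e := expSeries p
  cc := cc_expSeries p
  add x y hx hy := by
    obtain ⟨x, rfl⟩ := gm_surj x
    obtain ⟨y, rfl⟩ := gm_surj y
    rw [← map_add]
    change evU (emb p K) (fun _ => gm U (x + y)) _ = evU (emb p K) (fun _ => gm U x) _ *
      evU (emb p K) (fun _ => gm U y) _
    rw [evU_gm, evU_gm, evU_gm, ← map_mul, gm_eq]
    filter_upwards [VU_lt_one.1 hx, VU_lt_one.1 hy] with i h1 h2 using expK_add p h1 h2
  ne x hx hx0 := by
    obtain ⟨x, rfl⟩ := gm_surj x
    rw [Ne, gm_eq_zero, ← Ultrafilter.eventually_not] at hx0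
    change evU (emb p K) (fun _ => gm U x) _ ≠ _
    rw [evU_gm, ← map_one (gm U), Ne, gm_eq, ← Ultrafilter.eventually_not]
    filter_upwards [VU_lt_one.1 hx, hx0] with i h1 h2 using expK_ne p h1 h2
  p_ne := (Fact.out (p := p.Prime)).ne_zero
  p_lt := by
    rw [← map_natCast (gm U) p]
    exact VU_lt_one.2 (Eventually.of_forall fun _ => norm_p_lt p)

theorem expU_ex [CompleteSpace K] {ι : Type} {U : Ultrafilter ι} {ϖ : K} (h0 : ϖ ≠ 0)
    (h1 : ‖ϖ‖ < 1) (hm : ∀ x : K, ‖x‖ < 1 → ‖x‖ ≤ ‖ϖ‖) {T : Set K} (hT : T.Finite)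
    (hTr : ∀ x : K, ‖x‖ ≤ 1 → ∃ τ ∈ T, ‖x - τ‖ < 1)
    (hN : ∀ N : ℕ, N ≠ 0 → ∃ n : ℕ, ‖ϖ ^ n‖ ≤ ‖(N : K)‖) (x : ι → K) :
    (expU p (U := U) h0 h1 hm hT hTr hN).ex (gm U x) = gm U fun i => expK p K (x i) := by
  change evU (emb p K) (fun _ => gm U x) _ = _
  rw [evU_gm]
  rfl

/-- Along an ultrafilter, isolated torus roots chosen for a family of systems are almost everywhere
given by one function of the system. -/
theorem ultra_contradiction (p : ℕ) [Fact p.Prime] {K : Type} [NormedField K]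
    [IsUltrametricDist K] [NormedAlgebra ℚ_[p] K] [ProperSpace K] {I J L : Type} [Fintype I] [Fintype J] [Fintype L]
    {ι : Type} (U : Ultrafilter ι) (s : ι → (J → L → ℕ) × (I → J → K)) (η : ι → L → K)
    (hη : ∀ i, η i ∈ torusIso (s i)) :
    ∃ t : (J → L → ℕ) × (I → J → K) → L → K, ∀ᶠ i in (U : Filter ι), η i = t (s i) := by
  classical
  have := charZeroK p K
  obtain ⟨ϖ, h0, h1, hm⟩ := exists_unif p K
  obtain ⟨T, hT, hTr⟩ := exists_residues K
  obtain ⟨T', hT', hT'0, hT'r⟩ := exists_units p K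
  have hN := exists_pow_le_natCast p K h1
  have hord := exists_ord h0 h1 hm
  choose k τ hτ y hy hdec using fun i l => exists_decomp p K h0 h1 hm hT'r (η i l) ((hη i).1 l)
  have hτc : ∀ l, ∃ t ∈ T', ∀ᶠ i in (U : Filter ι), τ i l = t := fun l => by
    rw [← Ultrafilter.eventually_exists_mem_iff hT']
    exact Eventually.of_forall fun i => ⟨_, hτ i l, rfl⟩
  choose τ₀ hτ₀ hττ using hτc
  have hτ' : ∀ᶠ i in (U : Filter ι), ∀ l, τ i l = τ₀ l := eventually_all.2 hττ
  choose r hr0 hr using fun i => (hη i).2.2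
  have hε : ∀ i, ∃ ε : K, ε ≠ 0 ∧ ∀ l, ‖η i l‖ * ‖ε‖ ≤ r i := by
    intro i
    have hM : 0 < 1 + ∑ l, ‖η i l‖ := by positivity
    obtain ⟨N, hN⟩ := exists_pow_lt_of_lt_one (div_pos (hr0 i) hM) (norm_p_lt p (K := K))
    refine ⟨(p : K) ^ N, pow_ne_zero _ (p_ne p), fun l => ?_⟩
    rw [norm_pow]
    have h2 : ‖η i l‖ ≤ 1 + ∑ l, ‖η i l‖ := by
      have := Finset.single_le_sum (f := fun l => ‖η i l‖) (fun _ _ => norm_nonneg _)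
        (Finset.mem_univ l)
      linarith
    rw [lt_div_iff₀ hM] at hN
    calc ‖η i l‖ * ‖(p : K)‖ ^ N ≤ (1 + ∑ l, ‖η i l‖) * ‖(p : K)‖ ^ N := by gcongr
      _ ≤ r i := by rw [mul_comm]; exact hN.le
  choose ε hε0 hεr using hε
  let S := anU (U := U) (emb p K) (emb_le p) h0 h1 hm hT hTr hN
  let D : S.Section (E0 U s K) (Germ (U : Filter ι) ℤ) :=
    sectionU (U := U) (s := s) (emb p K) (emb_le p) h0 h1 hm hT hTr hN hord
  let X : S.ExpData p := expU p (U := U) h0 h1 hm hT hTr hN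
  have hcl : S.Closed (E0 U s K) := closedU (emb p K) (emb_le p) h0 h1 hm hT hTr hN
  let B : I → J → Germ (U : Filter ι) K := fun i₀ j =>
    gm U fun i => (s i).2 i₀ j * ∏ l, τ₀ l ^ (s i).1 j l
  let a : J → L → Germ (U : Filter ι) ℤ := fun j l => gm U fun i => ((s i).1 j l : ℤ)
  let kk : L → Germ (U : Filter ι) ℤ := fun l => gm U fun i => k i l
  let yy : L → Germ (U : Filter ι) K := fun l => gm U fun i => y i l
  -- the relations, expressed through representatives
  have hsum : ∀ (f : L → ι → K) (i₀ : I),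
      (∑ j, B i₀ j * D.P (∑ l, a j l * kk l) * X.ex (∑ l, p * D.c (a j l) * gm U (f l))) =
      gm U fun i => ∑ j, (s i).2 i₀ j * (∏ l, τ₀ l ^ (s i).1 j l) *
        ϖ ^ (∑ l, ((s i).1 j l : ℤ) * k i l) *
        expK p K (∑ l, p * (((s i).1 j l : ℤ) : K) * f l i) := by
    intro f i₀
    have e0 : (fun i => ∑ j, (s i).2 i₀ j * (∏ l, τ₀ l ^ (s i).1 j l) *
        ϖ ^ (∑ l, ((s i).1 j l : ℤ) * k i l) *
        expK p K (∑ l, p * (((s i).1 j l : ℤ) : K) * f l i)) =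
        ∑ j, (fun i => (s i).2 i₀ j * (∏ l, τ₀ l ^ (s i).1 j l)) *
        (fun i => ϖ ^ (∑ l, ((s i).1 j l : ℤ) * k i l)) *
        (fun i => expK p K (∑ l, p * (((s i).1 j l : ℤ) : K) * f l i)) := by
      funext i
      simp only [Finset.sum_apply, Pi.mul_apply]
    rw [e0, map_sum]
    refine Finset.sum_congr rfl fun j _ => ?_
    rw [map_mul, map_mul]
    congr 1
    · congr 1
      have e1 : (∑ l, a j l * kk l) = gm U fun i => ∑ l, ((s i).1 j l : ℤ) * k i l := by
        have : (fun i => ∑ l, ((s i).1 j l : ℤ) * k i l) =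
            ∑ l, (fun i => ((s i).1 j l : ℤ)) * fun i => k i l := by
          funext i
          simp only [Finset.sum_apply, Pi.mul_apply]
        rw [this, map_sum]
        exact Finset.sum_congr rfl fun l _ => (map_mul (gm U) _ _).symm
      rw [e1]
      rfl
    · have e1 : (∑ l, (p : Germ (U : Filter ι) K) * D.c (a j l) * gm U (f l)) =
          gm U fun i => ∑ l, p * (((s i).1 j l : ℤ) : K) * f l i := by
        have : (fun i => ∑ l, p * (((s i).1 j l : ℤ) : K) * f l i) =
            ∑ l, ((p : ι → K) * fun i => (((s i).1 j l : ℤ) : K)) * f l := by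
          funext i
          simp only [Finset.sum_apply, Pi.mul_apply, Pi.natCast_apply]
        rw [this, map_sum]
        refine Finset.sum_congr rfl fun l _ => ?_
        rw [map_mul, map_mul, map_natCast]
        rfl
      rw [e1]
      exact expU_ex p h0 h1 hm hT hTr hN _
  have hrelK : ∀ (f : L → ι → K), (∀ᶠ i in (U : Filter ι), ∀ l, ‖f l i‖ < 1) →
      ((∀ i₀, (∑ j, B i₀ j * D.P (∑ l, a j l * kk l) *
        X.ex (∑ l, p * D.c (a j l) * gm U (f l))) = 0) ↔
      ∀ᶠ i in (U : Filter ι), ∀ i₀, ∑ j, (s i).2 i₀ j *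
        ∏ l, (ϖ ^ k i l * τ₀ l * expK p K (p * f l i)) ^ (s i).1 j l = 0) := by
    intro f hf
    rw [eventually_all]
    refine forall_congr' fun i₀ => ?_
    rw [hsum, gm_eq_zero]
    refine eventually_congr ?_
    filter_upwards [hf] with i hi
    simp only [monomial_eq p h0 τ₀ (fun l => f l i) hi]
  have main := D.isolated_mem_section X hcl B
    (fun i₀ j => mem_E0.2 ⟨fun q => q.2 i₀ j * ∏ l, τ₀ l ^ q.1 j l, rfl⟩) a
    (fun j l => mem_R0.2 ⟨fun q => (q.1 j l : ℤ), rfl⟩) kk yy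
    (fun l => VU_lt_one.2 (Eventually.of_forall fun i => hy i l))
    ((hrelK (fun l i => y i l) (Eventually.of_forall fun i l => hy i l)).2 (by
      filter_upwards [hτ'] with i hi i₀
      have := (hη i).2.1 i₀
      simp only [hdec i, hi] at this
      exact this))
    (gm U ε) (by
      rw [Ne, gm_eq_zero, ← Ultrafilter.eventually_not]
      exact Eventually.of_forall hε0)
    (by
      intro y' hy' hrel' hclose
      obtain ⟨f, rfl⟩ := exists_reps y'
      have hf := small_reps hy'
      have h2 := (hrelK f hf).1 hrel'
      have h3 : ∀ᶠ i in (U : Filter ι), ∀ l, ‖f l i - y i l‖ < ‖ε i‖ := by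
        refine eventually_all.2 fun l => ?_
        have := hclose l
        rw [← map_sub] at this
        exact VU_lt.1 this
      have h4 : ∀ᶠ i in (U : Filter ι), ∀ l, f l i = y i l := by
        filter_upwards [hf, h2, h3, hτ'] with i hf h2 h3 hτ l
        have h5 := hr i (fun l => ϖ ^ k i l * τ₀ l * expK p K (p * f l i)) (fun l => ?_) h2
        · have h6 := congrFun h5 l
          rw [hdec i l, hτ l] at h6
          exact expK_inj p (hf l) (hy i l) (mul_left_cancel₀
            (mul_ne_zero (zpow_ne_zero _ h0) (hT'0 _ (hτ₀ l))) h6)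
        · have hd : η i l = ϖ ^ k i l * τ₀ l * expK p K (p * y i l) := by rw [hdec i l, hτ l]
          rw [hd]
          refine (expK_close p (hf l) (hy i l) _).trans_lt ?_
          rw [← hd]
          refine lt_of_lt_of_le ?_ (hεr i l)
          exact mul_lt_mul_of_pos_left (h3 l) (norm_pos_iff.2 ((hη i).1 l))
      exact funext fun l => gm_eq.2 (h4.mono fun i hi => hi l))
  choose κ hκ using fun l => mem_R0.1 (main l).1
  choose υ hυ using fun l => mem_E0.1 (main l).2
  refine ⟨fun q l => ϖ ^ κ l q * τ₀ l * expK p K (p * υ l q), ?_⟩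
  have hκ' : ∀ᶠ i in (U : Filter ι), ∀ l, κ l (s i) = k i l :=
    eventually_all.2 fun l => gm_eq.1 (hκ l)
  have hυ' : ∀ᶠ i in (U : Filter ι), ∀ l, υ l (s i) = y i l :=
    eventually_all.2 fun l => gm_eq.1 (hυ l)
  filter_upwards [hκ', hυ', hτ'] with i e1 e2 e3
  funext l
  rw [hdec i l, e1, e2, e3]

/-- The number of isolated roots in the torus is bounded in terms of the shape of the system. -/
theorem torus_bound (p : ℕ) [Fact p.Prime] (K : Type) [NormedField K] [IsUltrametricDist K]
    [NormedAlgebra ℚ_[p] K] [ProperSpace K] (I J L : Type) [Fintype I] [Fintype J] [Fintype L] :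
    ∃ N : ℕ, ∀ y : (J → L → ℕ) × (I → J → K),
      (torusIso y).Finite ∧ (torusIso y).ncard ≤ N := by
  classical
  by_contra hcon
  push Not at hcon
  let W := (J → L → ℕ) × (I → J → K) → L → K
  have h : ∀ t : Finset W, ∃ y, ∃ η ∈ torusIso (K := K) (I := I) (J := J) (L := L) y,
      ∀ w ∈ t, η ≠ w y := by
    intro t
    obtain ⟨y, hy⟩ := hcon t.card
    refine ⟨y, ?_⟩
    by_contra hno
    push Not at hno
    have hsub : torusIso y ⊆ ((t.image fun w => w y : Finset (L → K)) : Set (L → K)) := by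
      intro η hη
      obtain ⟨w, hw, e⟩ := hno η hη
      rw [Finset.mem_coe, Finset.mem_image]
      exact ⟨w, hw, e.symm⟩
    have hfin := (Finset.finite_toSet _).subset hsub
    refine absurd (hy hfin) (not_lt.2 ?_)
    refine (Set.ncard_le_ncard hsub (Finset.finite_toSet _)).trans ?_
    rw [Set.ncard_coe_finset]
    exact Finset.card_image_le
  choose s η hη hne using h
  obtain ⟨w, hw⟩ := ultra_contradiction p (Ultrafilter.of (atTop : Filter (Finset W))) s η hη
  have h2 : ∀ᶠ t in (Ultrafilter.of (atTop : Filter (Finset W)) : Filter (Finset W)), w ∈ t := by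
    refine Ultrafilter.of_le _ ?_
    filter_upwards [eventually_ge_atTop {w}] with t ht
    exact ht (Finset.mem_singleton_self w)
  obtain ⟨t, e1, e2⟩ := (hw.and h2).exists
  exact hne t w e2 e1

end Torus

/-! ### A finite extension containing all elements of bounded degree -/

theorem pow_card_le_prod_real {c : ℝ} (hc : 0 ≤ c) (s : Multiset ℝ) (h : ∀ x ∈ s, c ≤ x) :
    c ^ s.card ≤ s.prod := by
  induction s using Multiset.induction_on with
  | empty => simp
  | cons a s ih =>
    rw [Multiset.card_cons, Multiset.prod_cons, pow_succ, mul_comm]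
    have h1 := h a (Multiset.mem_cons_self a s)
    have h2 := ih fun x hx => h x (Multiset.mem_cons_of_mem hx)
    exact mul_le_mul h1 h2 (by positivity) (hc.trans h1)

/-- Continuity of roots: if the coefficients of two monic polynomials are close, then every
integral root of the first one is close to a root of the second one. -/
theorem close_root {F : Type} [NormedField F] [IsUltrametricDist F] [IsAlgClosed F] {E : ℕ}
    (a b : Fin E → F) {x : F} (hx : ‖x‖ ≤ 1) (hax : x ^ E + ∑ i, a i * x ^ (i : ℕ) = 0)
    {c : ℝ} (hc : 0 < c) (hab : ∀ i, ‖a i - b i‖ < c ^ E) :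
    ∃ β : F, β ^ E + ∑ i, b i * β ^ (i : ℕ) = 0 ∧ ‖x - β‖ < c := by
  classical
  let g : Polynomial F :=
    Polynomial.X ^ E + ∑ i : Fin E, Polynomial.C (b i) * Polynomial.X ^ (i : ℕ)
  have hdeg : (∑ i : Fin E, Polynomial.C (b i) * Polynomial.X ^ (i : ℕ)).degree < (E : WithBot ℕ) :=
    Polynomial.degree_sum_fin_lt b
  have hg : g.Monic := Polynomial.monic_X_pow_add hdeg
  have hgd : g.natDegree = E := by
    refine Polynomial.natDegree_eq_of_degree_eq_some ?_
    rw [Polynomial.degree_add_eq_left_of_degree_lt, Polynomial.degree_X_pow]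
    rwa [Polynomial.degree_X_pow]
  have hev : ∀ z, g.eval z = z ^ E + ∑ i, b i * z ^ (i : ℕ) := fun z => by
    simp [g, Polynomial.eval_finsetSum]
  have hsp := IsAlgClosed.splits g
  by_contra hno
  push Not at hno
  have h1 : c ^ E ≤ ‖g.eval x‖ := by
    rw [hsp.eval_eq_prod_roots_of_monic hg]
    have h2 : ‖(g.roots.map fun z => x - z).prod‖ = (g.roots.map fun z => ‖x - z‖).prod := by
      change (normHom : F →*₀ ℝ) _ = _
      rw [map_multiset_prod, Multiset.map_map]
      rfl
    rw [h2]
    have h3 := pow_card_le_prod_real hc.le (g.roots.map fun z => ‖x - z‖) (by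
      intro r hr
      obtain ⟨z, hz, rfl⟩ := Multiset.mem_map.1 hr
      refine hno z ?_
      rw [← hev]
      exact (Polynomial.mem_roots hg.ne_zero).1 hz)
    rwa [Multiset.card_map, ← hsp.natDegree_eq_card_roots, hgd] at h3
  refine absurd h1 (not_le.2 ?_)
  have h4 : g.eval x = -∑ i, (a i - b i) * x ^ (i : ℕ) := by
    rw [hev]
    simp only [sub_mul, Finset.sum_sub_distrib]
    linear_combination hax
  rw [h4, norm_neg]
  rcases isEmpty_or_nonempty (Fin E) with h | h
  · rw [Finset.univ_eq_empty, Finset.sum_empty, norm_zero]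
    positivity
  · obtain ⟨i, -, hi⟩ := IsUltrametricDist.exists_norm_finsetSum_le_of_nonempty
      (Finset.univ_nonempty (α := Fin E)) fun i => (a i - b i) * x ^ (i : ℕ)
    refine hi.trans_lt (lt_of_le_of_lt ?_ (hab i))
    rw [norm_mul, norm_pow]
    exact mul_le_of_le_one_right (norm_nonneg _) (pow_le_one₀ (norm_nonneg _) hx)

section Bounded

variable (p : ℕ) [Fact p.Prime]

theorem norm_aut (σ : PadicAlgCl p ≃ₐ[ℚ_[p]] PadicAlgCl p) (x : PadicAlgCl p) : ‖σ x‖ = ‖x‖ := by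
  rw [← PadicAlgCl.spectralNorm_eq, ← PadicAlgCl.spectralNorm_eq]
  exact (spectralNorm_eq_of_equiv σ x).symm

/-- An integral element of degree at most `E` is a root of a monic polynomial of degree `E` with
integral coefficients. -/
theorem exists_monic_integral {E : ℕ} {x : PadicAlgCl p} (hx : ‖x‖ ≤ 1)
    (hd : (minpoly ℚ_[p] x).natDegree ≤ E) :
    ∃ a : Fin E → ℚ_[p], (∀ i, ‖a i‖ ≤ 1) ∧
      x ^ E + ∑ i, algebraMap ℚ_[p] (PadicAlgCl p) (a i) * x ^ (i : ℕ) = 0 := by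
  have hInt : IsIntegral ℚ_[p] x := Algebra.IsIntegral.isIntegral x
  have hm := minpoly.monic hInt
  let F : Polynomial ℚ_[p] := Polynomial.X ^ (E - (minpoly ℚ_[p] x).natDegree) * minpoly ℚ_[p] x
  have hF : F.Monic := (Polynomial.monic_X_pow _).mul hm
  have hFd : F.natDegree = E := by
    rw [(Polynomial.monic_X_pow _).natDegree_mul hm, Polynomial.natDegree_X_pow]
    omega
  have hle : ∀ n, ‖(minpoly ℚ_[p] x).coeff n‖ ≤ 1 := (spectralValue_le_one_iff hm).1 hx
  refine ⟨fun i => F.coeff i, fun i => ?_, ?_⟩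
  · change ‖(Polynomial.X ^ _ * minpoly ℚ_[p] x).coeff _‖ ≤ 1
    rw [Polynomial.coeff_X_pow_mul']
    split_ifs
    · exact hle _
    · rw [norm_zero]; exact zero_le_one
  · have h1 : Polynomial.aeval x F = 0 := by rw [map_mul, minpoly.aeval, mul_zero]
    rw [Polynomial.aeval_eq_sum_range, hFd, Finset.sum_range_succ, Finset.sum_range] at h1
    have h2 : F.coeff E = 1 := by rw [← hFd]; exact hF
    rw [h2, one_smul] at h1
    simp only [Algebra.smul_def] at h1
    rw [add_comm]
    exact h1

/-- An automorphism moving an element of degree at most `D` moves some integral element of degree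
at most `D * D` by a definite amount. -/
theorem exists_moved {D : ℕ} (σ : PadicAlgCl p ≃ₐ[ℚ_[p]] PadicAlgCl p) {y : PadicAlgCl p}
    (hy : (minpoly ℚ_[p] y).natDegree ≤ D) (hσ : σ y ≠ y) :
    ∃ x : PadicAlgCl p, ‖x‖ ≤ 1 ∧ (minpoly ℚ_[p] x).natDegree ≤ D * D ∧
      ‖(p : PadicAlgCl p)‖ * ‖(D.factorial : PadicAlgCl p)‖ ≤ ‖σ x - x‖ := by
  classical
  have hInt : ∀ z : PadicAlgCl p, IsIntegral ℚ_[p] z := Algebra.IsIntegral.isIntegral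
  -- some power `σ ^ n` with `0 < n ≤ D` fixes `y`
  have hpow : ∃ n, 0 < n ∧ n ≤ D ∧ (σ ^ n) y = y := by
    have hroot : ∀ j : ℕ, (σ ^ j) y ∈ ((minpoly ℚ_[p] y).aroots (PadicAlgCl p)).toFinset := by
      intro j
      rw [Multiset.mem_toFinset, Polynomial.mem_aroots]
      refine ⟨minpoly.ne_zero (hInt y), ?_⟩
      rw [Polynomial.aeval_algHom_apply, minpoly.aeval, map_zero]
    have hcard : ((minpoly ℚ_[p] y).aroots (PadicAlgCl p)).toFinset.card <
        (Finset.range (D + 1)).card := by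
      rw [Finset.card_range]
      refine Nat.lt_succ_of_le ((Multiset.toFinset_card_le _).trans ?_)
      refine (Polynomial.card_roots' _).trans ?_
      rwa [Polynomial.natDegree_map]
    obtain ⟨i, hi, j, hj, hij, he⟩ := Finset.exists_ne_map_eq_of_card_lt_of_maps_to hcard
      (f := fun j => (σ ^ j) y) fun j _ => hroot j
    rw [Finset.mem_range] at hi hj
    have key : ∀ i j : ℕ, i < j → (σ ^ i) y = (σ ^ j) y → (σ ^ (j - i)) y = y := by
      intro i j hij he
      apply (σ ^ i).injective
      rw [← AlgEquiv.mul_apply, ← pow_add, Nat.add_sub_cancel' hij.le, he]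
    rcases lt_or_gt_of_ne hij with h | h
    · exact ⟨j - i, by omega, by omega, key i j h he⟩
    · exact ⟨i - j, by omega, by omega, key j i h he.symm⟩
  obtain ⟨n, hn0, hnD, hn⟩ := hpow
  set z := σ y - y with hz
  have hz0 : z ≠ 0 := sub_ne_zero.2 hσ
  have hzd : (minpoly ℚ_[p] z).natDegree ≤ D * D := by
    let E1 := IntermediateField.adjoin ℚ_[p] {y}
    let E2 := IntermediateField.adjoin ℚ_[p] {σ y}
    have f1 : FiniteDimensional ℚ_[p] E1 := IntermediateField.adjoin.finiteDimensional (hInt y)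
    have f2 : FiniteDimensional ℚ_[p] E2 := IntermediateField.adjoin.finiteDimensional (hInt _)
    have hmem : z ∈ E1 ⊔ E2 := sub_mem
      ((le_sup_right : E2 ≤ E1 ⊔ E2) (IntermediateField.mem_adjoin_simple_self _ _))
      ((le_sup_left : E1 ≤ E1 ⊔ E2) (IntermediateField.mem_adjoin_simple_self _ _))
    have f3 : FiniteDimensional ℚ_[p] ↥(E1 ⊔ E2) := IntermediateField.finiteDimensional_sup E1 E2
    have h1 := minpoly.natDegree_le (A := ℚ_[p]) (⟨z, hmem⟩ : ↥(E1 ⊔ E2))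
    rw [IntermediateField.minpoly_eq] at h1
    refine h1.trans ((IntermediateField.finrank_sup_le E1 E2).trans ?_)
    have e1 : Module.finrank ℚ_[p] E1 = _ := IntermediateField.adjoin.finrank (hInt y)
    have e2 : Module.finrank ℚ_[p] E2 = _ := IntermediateField.adjoin.finrank (hInt (σ y))
    rw [minpoly.algEquiv_eq] at e2
    rw [e1, e2]
    exact Nat.mul_le_mul hy hy
  -- the trace `∑ σ ^ j z` telescopes to `0`, which forces `σ z - z` to be large
  have htr : ∑ j ∈ Finset.range n, (σ ^ j) z = 0 := by
    have : ∀ j ∈ Finset.range n, (σ ^ j) z = (σ ^ (j + 1)) y - (σ ^ j) y := fun j _ => by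
      rw [hz, map_sub, pow_succ, AlgEquiv.mul_apply]
    rw [Finset.sum_congr rfl this, Finset.sum_range_sub fun j => (σ ^ j) y, hn, pow_zero,
      AlgEquiv.one_apply, sub_self]
  have hstep : ∀ j : ℕ, ‖(σ ^ j) z - z‖ ≤ ‖σ z - z‖ := by
    intro j
    induction j with
    | zero => simp
    | succ j ih =>
      have e : (σ ^ (j + 1)) z - z = σ ((σ ^ j) z - z) + (σ z - z) := by
        rw [pow_succ', AlgEquiv.mul_apply, map_sub σ]; ring
      rw [e]
      exact (IsUltrametricDist.norm_add_le_max _ _).trans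
        (max_le (by rw [norm_aut]; exact ih) le_rfl)
  have hbig : ‖(n : PadicAlgCl p)‖ * ‖z‖ ≤ ‖σ z - z‖ := by
    have e : (n : PadicAlgCl p) * z = -∑ j ∈ Finset.range n, ((σ ^ j) z - z) := by
      rw [Finset.sum_sub_distrib, htr, Finset.sum_const, Finset.card_range, nsmul_eq_mul]; ring
    rw [← norm_mul, e, norm_neg]
    obtain ⟨j, -, hj⟩ := IsUltrametricDist.exists_norm_finsetSum_le_of_nonempty
      (Finset.nonempty_range_iff.2 hn0.ne') fun j => (σ ^ j) z - z
    exact hj.trans (hstep j)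
  have hfac : ‖(D.factorial : PadicAlgCl p)‖ ≤ ‖(n : PadicAlgCl p)‖ := by
    obtain ⟨q, hq⟩ := Nat.dvd_factorial hn0 hnD
    rw [hq, Nat.cast_mul, norm_mul]
    exact mul_le_of_le_one_right (norm_nonneg _) (IsUltrametricDist.norm_natCast_le_one _ q)
  -- rescale `z` by a power of `p`
  have hp1 : ‖(p : PadicAlgCl p)‖ < 1 := norm_p_lt p
  have hp0 : (p : PadicAlgCl p) ≠ 0 := p_ne p
  have hpn : 0 < ‖(p : PadicAlgCl p)‖ := norm_pos_iff.2 hp0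
  obtain ⟨k, hk1, hk2⟩ := exists_mem_Ioc_zpow (norm_pos_iff.2 hz0)
    ((one_lt_inv₀ hpn).2 hp1)
  let r : ℚ_[p] := (p : ℚ_[p]) ^ (k + 1)
  have hr : algebraMap ℚ_[p] (PadicAlgCl p) r = (p : PadicAlgCl p) ^ (k + 1) := by
    rw [map_zpow₀, map_natCast]
  have hr0 : r ≠ 0 := zpow_ne_zero _ (Nat.cast_ne_zero.2 (Fact.out (p := p.Prime)).ne_zero)
  have hcancel : ‖(p : PadicAlgCl p)‖ ^ (k + 1) * ‖(p : PadicAlgCl p)‖⁻¹ ^ (k + 1) = 1 := by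
    rw [← mul_zpow, mul_inv_cancel₀ hpn.ne', one_zpow]
  have hpk : 0 < ‖(p : PadicAlgCl p)‖ ^ (k + 1) := zpow_pos hpn _
  refine ⟨algebraMap ℚ_[p] (PadicAlgCl p) r * z, ?_, ?_, ?_⟩
  · rw [hr, norm_mul, norm_zpow]
    calc _ ≤ ‖(p : PadicAlgCl p)‖ ^ (k + 1) * ‖(p : PadicAlgCl p)‖⁻¹ ^ (k + 1) := by gcongr
      _ = 1 := hcancel
  · have hle : IntermediateField.adjoin ℚ_[p] {algebraMap ℚ_[p] (PadicAlgCl p) r * z} ≤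
        IntermediateField.adjoin ℚ_[p] {z} := by
      rw [IntermediateField.adjoin_simple_le_iff]
      exact mul_mem (IntermediateField.algebraMap_mem _ _) (IntermediateField.mem_adjoin_simple_self _ _)
    have f1 : FiniteDimensional ℚ_[p] (IntermediateField.adjoin ℚ_[p] {z}) :=
      IntermediateField.adjoin.finiteDimensional (hInt z)
    rw [← IntermediateField.adjoin.finrank (hInt _)]
    rw [← IntermediateField.adjoin.finrank (hInt z)] at hzd
    exact (IntermediateField.finrank_le_of_le_right hle).trans hzd
  · rw [map_mul, AlgEquiv.commutes, ← mul_sub, hr, norm_mul, norm_zpow]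
    calc ‖(p : PadicAlgCl p)‖ * ‖(D.factorial : PadicAlgCl p)‖
        = ‖(p : PadicAlgCl p)‖ ^ (k + 1) * (‖(D.factorial : PadicAlgCl p)‖ *
          ‖(p : PadicAlgCl p)‖⁻¹ ^ k) := by
          rw [zpow_add_one₀ hpn.ne', inv_zpow]
          field_simp
      _ ≤ ‖(p : PadicAlgCl p)‖ ^ (k + 1) * (‖(n : PadicAlgCl p)‖ * ‖z‖) := by gcongr
      _ ≤ _ := by gcongr

/-- A single finite extension of `ℚ_p` contains all elements of degree at most `D`. -/
theorem exists_bounded_field (D : ℕ) : ∃ M : IntermediateField ℚ_[p] (PadicAlgCl p),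
    FiniteDimensional ℚ_[p] M ∧
      ∀ y : PadicAlgCl p, (minpoly ℚ_[p] y).natDegree ≤ D → y ∈ M := by
  classical
  let E := D * D
  let c : ℝ := ‖(p : PadicAlgCl p)‖ * ‖(D.factorial : PadicAlgCl p)‖
  have hc : 0 < c := mul_pos (norm_pos_iff.2 (p_ne p))
    (norm_pos_iff.2 (Nat.cast_ne_zero.2 D.factorial_ne_zero))
  -- a finite net for the coefficient vectors of integral monic polynomials of degree `E`
  obtain ⟨T, -, hT, hcov⟩ := (isCompact_closedBall (0 : Fin E → ℚ_[p]) 1).finite_cover_balls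
    (pow_pos hc E)
  let g : (Fin E → ℚ_[p]) → Polynomial (PadicAlgCl p) := fun b => Polynomial.X ^ E +
    ∑ i : Fin E, Polynomial.C (algebraMap ℚ_[p] (PadicAlgCl p) (b i)) * Polynomial.X ^ (i : ℕ)
  have hg : ∀ b, (g b).Monic := fun b => Polynomial.monic_X_pow_add
    (Polynomial.degree_sum_fin_lt fun i => algebraMap ℚ_[p] (PadicAlgCl p) (b i))
  let R : Set (PadicAlgCl p) := ⋃ b ∈ T, {β | (g b).IsRoot β}
  have hR : R.Finite := hT.biUnion fun b _ => Polynomial.finite_setOfPred_isRoot (hg b).ne_zero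
  have : Finite R := hR
  refine ⟨IntermediateField.adjoin ℚ_[p] R, IntermediateField.finiteDimensional_adjoin
    fun x _ => Algebra.IsIntegral.isIntegral x, fun y hy => ?_⟩
  by_contra hyM
  rw [← InfiniteGalois.fixedField_fixingSubgroup (IntermediateField.adjoin ℚ_[p] R),
    IntermediateField.mem_fixedField_iff] at hyM
  push Not at hyM
  obtain ⟨σ, hσM, hσy⟩ := hyM
  rw [IntermediateField.mem_fixingSubgroup_iff] at hσM
  obtain ⟨x, hx1, hxd, hxc⟩ := exists_moved p σ hy hσy
  obtain ⟨a, ha1, hax⟩ := exists_monic_integral p hx1 hxd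
  have hamem : a ∈ Metric.closedBall (0 : Fin E → ℚ_[p]) 1 := by
    rw [mem_closedBall_zero_iff]
    exact (pi_norm_le_iff_of_nonneg zero_le_one).2 ha1
  obtain ⟨b, hb, hab⟩ := Set.mem_iUnion₂.1 (hcov hamem)
  obtain ⟨β, hβ, hxβ⟩ := close_root (fun i => algebraMap ℚ_[p] (PadicAlgCl p) (a i))
    (fun i => algebraMap ℚ_[p] (PadicAlgCl p) (b i)) hx1 hax hc (fun i => by
      rw [← map_sub, PadicAlgCl.norm_extends, ← dist_eq_norm]
      exact (dist_le_pi_dist a b i).trans_lt hab)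
  have hβR : β ∈ R := by
    refine Set.mem_iUnion₂.2 ⟨b, hb, ?_⟩
    change (g b).eval β = 0
    simpa [g, Polynomial.eval_finsetSum] using hβ
  have hσβ : σ β = β := hσM β (IntermediateField.subset_adjoin _ _ hβR)
  refine absurd hxc (not_le.2 ?_)
  have e : σ x - x = σ (x - β) + -(x - β) := by rw [map_sub, hσβ]; ring
  rw [e]
  refine (IsUltrametricDist.norm_add_le_max _ _).trans_lt (max_lt ?_ ?_)
  · rw [norm_aut]; exact hxβ
  · rw [norm_neg]; exact hxβ

end Bounded

/-! ### Reduction to the torus and to boundedly many equations -/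

/-- Any number of linear equations in `m` unknowns is equivalent to `m` of them. -/
theorem exists_square_system {K : Type} [Field K] {m k : ℕ} (C : Fin k → Fin m → K) :
    ∃ B : Fin m → Fin m → K, ∀ v : Fin m → K,
      (∀ i, ∑ j, B i j * v j = 0) ↔ ∀ i, ∑ j, C i j * v j = 0 := by
  classical
  let W : Submodule K (Fin m → K) := Submodule.span K (Set.range C)
  -- the rows of `B` are the images of the standard basis under a projection onto the row space
  obtain ⟨g, hg⟩ := W.subtype.exists_leftInverse_of_injective (Submodule.ker_subtype W)
  refine ⟨fun i => (g (Pi.single i 1) : Fin m → K), fun v => ?_⟩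
  let φ : (Fin m → K) →ₗ[K] K := Fintype.linearCombination K v
  have hφ : ∀ u : Fin m → K, φ u = ∑ j, u j * v j := fun u => by
    simp [φ, Fintype.linearCombination_apply]
  simp only [← hφ]
  have hW : (∀ i, φ (C i) = 0) ↔ ∀ w ∈ W, φ w = 0 := by
    constructor
    · intro h
      have : W ≤ LinearMap.ker φ := Submodule.span_le.2 (by
        rintro _ ⟨i, rfl⟩
        exact h i)
      exact fun w hw => this hw
    · exact fun h i => h _ (Submodule.subset_span ⟨i, rfl⟩)
  change (∀ i, φ (g (Pi.single i 1) : Fin m → K) = 0) ↔ ∀ i, φ (C i) = 0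
  rw [hW]
  constructor
  · intro h w hw
    have h1 : φ ∘ₗ W.subtype ∘ₗ g = 0 := by
      refine LinearMap.pi_ext' fun i => LinearMap.ext_ring ?_
      simpa using h i
    have h2 : g w = ⟨w, hw⟩ := LinearMap.congr_fun hg ⟨w, hw⟩
    have h3 := LinearMap.congr_fun h1 w
    simpa [h2] using h3
  · exact fun h i => h _ (g _).2

/-- Extension by zero of a vector of coordinates. -/
def extZero {K : Type} [Zero K] {n : ℕ} (S : Finset (Fin n)) (η : {l // l ∈ S} → K) (l : Fin n) :
    K :=
  if h : l ∈ S then η ⟨l, h⟩ else 0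

theorem sum_extZero {K : Type} [Field K] {n m : ℕ} (S : Finset (Fin n)) (η : {l // l ∈ S} → K)
    (a : Fin m → Fin n → ℕ) (b : Fin m → K) [∀ j, Decidable (∀ l, l ∉ S → a j l = 0)] :
    ∑ j, b j * ∏ l, extZero S η l ^ a j l =
      ∑ j, (if ∀ l, l ∉ S → a j l = 0 then b j else 0) * ∏ l : {l // l ∈ S}, η l ^ a j l := by
  classical
  refine Finset.sum_congr rfl fun j _ => ?_
  split_ifs with h
  · congr 1
    have h1 : ∏ l, extZero S η l ^ a j l = ∏ l ∈ S, extZero S η l ^ a j l := by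
      refine (Finset.prod_subset (Finset.subset_univ S) fun l _ hl => ?_).symm
      rw [h l hl, pow_zero]
    rw [h1, ← Finset.prod_coe_sort]
    refine Finset.prod_congr rfl fun l _ => ?_
    rw [extZero, dif_pos l.2]
  · push Not at h
    obtain ⟨l, hl, hl'⟩ := h
    rw [zero_mul, Finset.prod_eq_zero (Finset.mem_univ l), mul_zero]
    rw [extZero, dif_neg hl, zero_pow hl']

/-- Over a locally compact field, the number of isolated roots in `K ^ n` of a system with `m`
monomials is bounded in terms of `n` and `m`. -/
theorem affine_bound (p : ℕ) [Fact p.Prime] (K : Type) [NormedField K] [IsUltrametricDist K]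
    [NormedAlgebra ℚ_[p] K] [ProperSpace K] (n m : ℕ) :
    ∃ N : ℕ, ∀ (k : ℕ) (a : Fin m → Fin n → ℕ) (C : Fin k → Fin m → K),
      ∃ t : Finset (Fin n → K), t.card ≤ N ∧ ∀ w : Fin n → K,
        (∀ i, ∑ j, C i j * ∏ l, w l ^ a j l = 0) →
        (∃ ε : ℝ, 0 < ε ∧ ∀ w' : Fin n → K, (∀ l, ‖w' l - w l‖ < ε) →
          (∀ i, ∑ j, C i j * ∏ l, w' l ^ a j l = 0) → w' = w) → w ∈ t := by
  classical
  choose N hN using fun S : Finset (Fin n) => torus_bound p K (Fin m) (Fin m) {l // l ∈ S}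
  refine ⟨∑ S, N S, fun k a C => ?_⟩
  obtain ⟨B, hB⟩ := exists_square_system C
  let y : ∀ S : Finset (Fin n), (Fin m → {l // l ∈ S} → ℕ) × (Fin m → Fin m → K) := fun S =>
    (fun j l => a j l, fun i j => if ∀ l, l ∉ S → a j l = 0 then B i j else 0)
  refine ⟨Finset.univ.biUnion fun S => (hN S (y S)).1.toFinset.image (extZero S), ?_, ?_⟩
  · refine Finset.card_biUnion_le.trans (Finset.sum_le_sum fun S _ => ?_)
    refine Finset.card_image_le.trans ?_
    rw [← Set.ncard_eq_toFinset_card _ (hN S (y S)).1]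
    exact (hN S (y S)).2
  · rintro w hw ⟨ε, hε, hiso⟩
    let S : Finset (Fin n) := Finset.univ.filter fun l => w l ≠ 0
    let η : {l // l ∈ S} → K := fun l => w l
    have hext : extZero S η = w := by
      funext l
      rw [extZero]
      split_ifs with h
      · rfl
      · by_contra h0
        exact h (Finset.mem_filter.2 ⟨Finset.mem_univ l, fun e => h0 e.symm⟩)
    have heq : ∀ η' : {l // l ∈ S} → K,
        (∀ i, ∑ j, (y S).2 i j * ∏ l, η' l ^ (y S).1 j l = 0) ↔
          ∀ i, ∑ j, C i j * ∏ l, extZero S η' l ^ a j l = 0 := by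
      intro η'
      rw [← hB fun j => ∏ l, extZero S η' l ^ a j l]
      refine forall_congr' fun i => ?_
      rw [sum_extZero S η' a (B i)]
    refine Finset.mem_biUnion.2 ⟨S, Finset.mem_univ S, Finset.mem_image.2 ⟨η, ?_, hext⟩⟩
    rw [Set.Finite.mem_toFinset]
    refine ⟨fun l => (Finset.mem_filter.1 l.2).2, (heq η).2 (by rwa [hext]), ε, hε, ?_⟩
    intro η' hclose hrel
    have h1 := hiso (extZero S η') (fun l => ?_) ((heq η').1 hrel)
    · funext l
      have h2 := congrFun h1 l
      rwa [extZero, dif_pos l.2] at h2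
    · rw [← hext]
      rw [extZero, extZero]
      split_ifs with h
      · exact hclose ⟨l, h⟩
      · rwa [sub_self, norm_zero]

/-! ### Transfer to `ℂ_p` -/

/-- The field `M` containing all elements of degree at most `D` captures the elements of degree at
most `D` of any extension, along any embedding of the algebraic closure. -/
theorem exists_preimage {p : ℕ} [Fact p.Prime] {F : Type} [Field F] [Algebra ℚ_[p] F] {D : ℕ}
    {M : IntermediateField ℚ_[p] (PadicAlgCl p)}
    (hM : ∀ y : PadicAlgCl p, (minpoly ℚ_[p] y).natDegree ≤ D → y ∈ M)
    (ρ : PadicAlgCl p →ₐ[ℚ_[p]] F) {z : F} (hz : IsIntegral ℚ_[p] z)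
    (hd : (minpoly ℚ_[p] z).natDegree ≤ D) : ∃ w : M, ρ w = z := by
  have hsp : ((minpoly ℚ_[p] z).map (algebraMap ℚ_[p] (PadicAlgCl p))).Splits :=
    IsAlgClosed.splits _
  have hroots := hsp.roots_map (ρ : PadicAlgCl p →+* F)
  rw [Polynomial.map_map, AlgHom.comp_algebraMap] at hroots
  have hzr : z ∈ ((minpoly ℚ_[p] z).map (algebraMap ℚ_[p] F)).roots := by
    rw [← Polynomial.aroots, Polynomial.mem_aroots]
    exact ⟨minpoly.ne_zero hz, minpoly.aeval _ _⟩
  rw [hroots, Multiset.mem_map] at hzr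
  obtain ⟨w, -, hw⟩ := hzr
  have hw' : ρ w = z := hw
  refine ⟨⟨w, hM w ?_⟩, hw'⟩
  rwa [← minpoly.algHom_eq ρ ρ.toRingHom.injective, hw']

theorem degree_le_of_mem {F : Type} [Field F] {E : Type} [Field E] [Algebra F E]
    {L : IntermediateField F E} [FiniteDimensional F L] {x : E} (hx : x ∈ L) :
    (minpoly F x).natDegree ≤ Module.finrank F L := by
  have h := minpoly.natDegree_le (A := F) (⟨x, hx⟩ : L)
  rwa [IntermediateField.minpoly_eq] at h

/-- An element of degree at most `δ` over an extension of degree `d` has degree at most `d * δ`. -/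
theorem degree_le_mul {F L E : Type} [Field F] [Field L] [Field E] [Algebra F L] [Algebra L E]
    [Algebra F E] [IsScalarTower F L E] [FiniteDimensional F L] {δ : ℕ} {x : E}
    (hx : HasDegreeAtMost (algebraMap L E) δ x) :
    IsIntegral F x ∧ (minpoly F x).natDegree ≤ Module.finrank F L * δ := by
  obtain ⟨q, hq0, hqd, hq⟩ := hx
  have hInt : IsIntegral L x := isAlgebraic_iff_isIntegral.1 ⟨q, hq0, hq⟩
  have f1 : FiniteDimensional L (IntermediateField.adjoin L {x}) :=
    IntermediateField.adjoin.finiteDimensional hInt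
  have f2 : FiniteDimensional F (IntermediateField.adjoin L {x}) := FiniteDimensional.trans F L _
  have hdeg : (minpoly L x).natDegree ≤ δ :=
    (Polynomial.natDegree_le_of_dvd (minpoly.dvd L x hq) hq0).trans hqd
  let x' : IntermediateField.adjoin L {x} := ⟨x, IntermediateField.mem_adjoin_simple_self L x⟩
  have h1 : (minpoly F x').natDegree ≤ Module.finrank F (IntermediateField.adjoin L {x}) :=
    minpoly.natDegree_le x'
  have h2 : minpoly F x = minpoly F x' :=
    minpoly.algHom_eq ((IntermediateField.adjoin L {x}).val.restrictScalars F)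
      (IntermediateField.adjoin L {x}).val.toRingHom.injective x'
  have h3 : IsIntegral F x' := IsIntegral.of_finite F x'
  refine ⟨h3.map ((IntermediateField.adjoin L {x}).val.restrictScalars F), ?_⟩
  rw [h2]
  refine h1.trans ?_
  rw [← Module.finrank_mul_finrank F L, IntermediateField.adjoin.finrank hInt]
  exact Nat.mul_le_mul_left _ hdeg

/-- A linear map from a finite extension of `ℚ_p` is bounded. -/
theorem exists_norm_bound {p : ℕ} [Fact p.Prime] {F : Type} [NormedField F] [Algebra ℚ_[p] F]
    (hiso : Isometry (algebraMap ℚ_[p] F)) (M : IntermediateField ℚ_[p] (PadicAlgCl p))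
    [FiniteDimensional ℚ_[p] M] (ρ : PadicAlgCl p →ₐ[ℚ_[p]] F) :
    ∃ c : ℝ, 0 < c ∧ ∀ u : M, ‖ρ u‖ ≤ c * ‖u‖ := by
  let i1 : NormedAlgebra ℚ_[p] F := { ‹Algebra ℚ_[p] F› with
    norm_smul_le := fun r x => by
      rw [Algebra.smul_def, norm_mul]
      have : ‖algebraMap ℚ_[p] F r‖ = ‖r‖ := hiso.norm_map_of_map_zero (map_zero _) r
      rw [this] }
  let f : M →ₗ[ℚ_[p]] F := (ρ.comp M.val).toLinearMap
  let fc : M →L[ℚ_[p]] F := LinearMap.toContinuousLinearMap f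
  refine ⟨‖fc‖ + 1, by positivity, fun u => ?_⟩
  have h := fc.le_opNorm u
  calc ‖ρ u‖ = ‖fc u‖ := rfl
    _ ≤ ‖fc‖ * ‖u‖ := h
    _ ≤ _ := by gcongr; linarith

theorem isolated_radius {F : Type} [NormedField F] {k n : ℕ} {G : Fin k → MvPolynomial (Fin n) F}
    {ζ : Fin n → F} (h : IsIsolatedRoot G ζ) :
    ∃ ε : ℝ, 0 < ε ∧ ∀ z ∈ zeroSet G, (∀ l, ‖z l - ζ l‖ < ε) → z = ζ := by
  have h1 := h.2
  rw [← Filter.empty_mem_iff_bot, Metric.mem_nhdsWithin_iff] at h1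
  obtain ⟨ε, hε, hsub⟩ := h1
  refine ⟨ε, hε, fun z hz hclose => ?_⟩
  by_contra hne
  refine hsub ⟨?_, hz, hne⟩
  rw [Metric.mem_ball, dist_pi_lt_iff hε]
  exact fun l => by rw [dist_eq_norm]; exact hclose l

/-- Evaluation of a polynomial through an enumeration of a finite set containing its support. -/
theorem eval_map_eq {L F : Type} [Field L] [Field F] (ι : L →+* F) {n m : ℕ}
    {A : Finset (Fin n →₀ ℕ)} (e : Fin m ≃ A) (g : MvPolynomial (Fin n) L) (hg : g.support ⊆ A)
    (x : Fin n → F) :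
    MvPolynomial.eval x (g.map ι) =
      ∑ j, ι (g.coeff (e j : Fin n →₀ ℕ)) * ∏ l, x l ^ (e j : Fin n →₀ ℕ) l := by
  rw [MvPolynomial.eval_map, MvPolynomial.eval₂_eq']
  rw [Finset.sum_subset hg fun b _ hb => by
    rw [MvPolynomial.notMem_support_iff.1 hb, map_zero, zero_mul]]
  rw [← Finset.sum_coe_sort A, ← e.sum_comp]

end PadicFew

/-- **Corollary 3, `p`-adic case.** For every prime `p` and positive integers `d, δ, n, m`
there is a constant `γ'_p(d,δ,n,m)` such that any `k × n` `m`-sparse polynomial system over a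
degree-`d` extension `𝓛` of `ℚ_p` has at most `γ'_p(d,δ,n,m)` isolated roots in `ℂ_pⁿ` of
degree at most `δ` over `𝓛`. -/
theorem bounded_degree_roots_padic (p : ℕ) [Fact p.Prime] (d δ n m : ℕ)
    (hd : 0 < d) (hδ : 0 < δ) (hn : 0 < n) (hm : 0 < m) :
    ∃ γ' : ℕ,
      ∀ (Cp : Type) (_ : NormedField Cp) (_ : IsUltrametricDist Cp)
        (_ : CompleteSpace Cp) (_ : IsAlgClosed Cp) (_ : Algebra ℚ_[p] Cp)
        (_ : Isometry (algebraMap ℚ_[p] Cp))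
        (_ : Dense {x : Cp | IsAlgebraic ℚ_[p] x})
        (𝓛 : Type) (_ : Field 𝓛) (_ : Algebra ℚ_[p] 𝓛) (_ : Algebra 𝓛 Cp)
        (_ : IsScalarTower ℚ_[p] 𝓛 Cp) (_ : FiniteDimensional ℚ_[p] 𝓛)
        (_ : Module.finrank ℚ_[p] 𝓛 = d)
        (k : ℕ) (G : Fin k → MvPolynomial (Fin n) 𝓛), IsSparseSystem G m →
          {x : Fin n → Cp | IsIsolatedRoot (fun i => (G i).map (algebraMap 𝓛 Cp)) x ∧
              ∀ i, HasDegreeAtMost (algebraMap 𝓛 Cp) δ (x i)}.Finite ∧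
          {x : Fin n → Cp | IsIsolatedRoot (fun i => (G i).map (algebraMap 𝓛 Cp)) x ∧
              ∀ i, HasDegreeAtMost (algebraMap 𝓛 Cp) δ (x i)}.ncard ≤ γ' := by
  classical
  obtain ⟨M, hfin, hM⟩ := PadicFew.exists_bounded_field p (d * δ)
  have hproper : ProperSpace M := FiniteDimensional.proper ℚ_[p] M
  obtain ⟨N, hN⟩ := PadicFew.affine_bound p M n m
  refine ⟨N, ?_⟩
  intro Cp _ _ _ _ _ hiso _ 𝓛 _ _ _ _ _ hfr k G hG
  let ρ : PadicAlgCl p →ₐ[ℚ_[p]] Cp := IsAlgClosed.lift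
  obtain ⟨c, hc, hρ⟩ := PadicFew.exists_norm_bound hiso M ρ
  let A : Finset (Fin n →₀ ℕ) := Finset.univ.biUnion fun i => (G i).support
  have hA : ∀ i, (G i).support ⊆ A := fun i =>
    Finset.subset_biUnion_of_mem (fun i => (G i).support) (Finset.mem_univ i)
  let e : Fin m ≃ A := (finCongr hG.2.symm).trans A.equivFin.symm
  -- the coefficients lie in the image of `M`
  have hcoef : ∀ i j, ∃ u : M, ρ u = algebraMap 𝓛 Cp ((G i).coeff (e j : Fin n →₀ ℕ)) := by
    intro i j
    have h := PadicFew.degree_le_mul (F := ℚ_[p]) (L := 𝓛) (δ := δ)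
      (x := algebraMap 𝓛 Cp ((G i).coeff (e j : Fin n →₀ ℕ)))
      ⟨Polynomial.X - Polynomial.C ((G i).coeff (e j : Fin n →₀ ℕ)),
        Polynomial.X_sub_C_ne_zero _,
        (Polynomial.natDegree_X_sub_C _).trans_le hδ, by simp⟩
    rw [hfr] at h
    exact PadicFew.exists_preimage hM ρ h.1 h.2
  choose C hC using hcoef
  have hev : ∀ (i : Fin k) (w : Fin n → M),
      MvPolynomial.eval (fun l => ρ (w l)) ((G i).map (algebraMap 𝓛 Cp)) = 0 ↔
        ∑ j, C i j * ∏ l, w l ^ (e j : Fin n →₀ ℕ) l = 0 := by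
    intro i w
    let ψ : M →+* Cp := (ρ : PadicAlgCl p →+* Cp).comp (algebraMap M (PadicAlgCl p))
    have h1 : MvPolynomial.eval (fun l => ρ (w l)) ((G i).map (algebraMap 𝓛 Cp)) =
        ψ (∑ j, C i j * ∏ l, w l ^ (e j : Fin n →₀ ℕ) l) := by
      rw [PadicFew.eval_map_eq (algebraMap 𝓛 Cp) e (G i) (hA i), map_sum]
      refine Finset.sum_congr rfl fun j _ => ?_
      rw [map_mul, map_prod, ← hC]
      simp only [map_pow]
      rfl
    rw [h1, map_eq_zero]
  obtain ⟨t, ht, htm⟩ := hN k (fun j l => (e j : Fin n →₀ ℕ) l) C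
  have hsub : {x : Fin n → Cp | IsIsolatedRoot (fun i => (G i).map (algebraMap 𝓛 Cp)) x ∧
      ∀ i, HasDegreeAtMost (algebraMap 𝓛 Cp) δ (x i)} ⊆
      ((t.image fun w l => ρ (w l) : Finset (Fin n → Cp)) : Set (Fin n → Cp)) := by
    rintro x ⟨hx, hdeg⟩
    have hw : ∀ l, ∃ u : M, ρ u = x l := fun l => by
      have h := PadicFew.degree_le_mul (F := ℚ_[p]) (hdeg l)
      rw [hfr] at h
      exact PadicFew.exists_preimage hM ρ h.1 h.2
    choose w hw using hw
    obtain rfl : (fun l => ρ (w l)) = x := funext hw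
    refine Finset.mem_coe.2 (Finset.mem_image.2 ⟨w, htm w (fun i => (hev i w).1 (hx.1 i)) ?_, rfl⟩)
    obtain ⟨ε, hε, hz⟩ := PadicFew.isolated_radius hx
    refine ⟨ε / c, div_pos hε hc, fun w' hclose hrel => ?_⟩
    have h1 := hz (fun l => ρ (w' l)) (fun i => (hev i w').2 (hrel i)) fun l => by
      have h2 := hρ (w' l - w l)
      have h3 : ρ ((w' l - w l : M) : PadicAlgCl p) = ρ (w' l) - ρ (w l) := map_sub ρ _ _
      rw [h3] at h2
      refine h2.trans_lt ?_
      rw [mul_comm, ← lt_div_iff₀ hc]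
      exact hclose l
    exact funext fun l => Subtype.ext (ρ.toRingHom.injective (congrFun h1 l))
  refine ⟨(Finset.finite_toSet _).subset hsub, ?_⟩
  refine (Set.ncard_le_ncard hsub (Finset.finite_toSet _)).trans ?_
  rw [Set.ncard_coe_finset]
  exact Finset.card_image_le.trans ht
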